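/- arXiv:1112.4561 — 3 statements merged into one kernel-verified Lean document; each statement's English description precedes it below -/
import Mathlib

section
/- Let k be an algebraically closed field of characteristic p > 0, let G be a group with a normal subgroup N, and let U and W be finite-dimensional irreducible kG-modules such that N acts irreducibly on U and trivially on W; set V = U ⊗_k W with the diagonal G-action. If every element of N acts on V by a semisimple operator and (G,W) is weakly adequate, then (G,V) is weakly adequate. -/
open scoped TensorProduct

/-- An endomorphism of a vector space is *semisimple* (i.e. diagonalizable over an algebraic
closure of the base field) precisely when its minimal polynomial is separable. -/
def IsSemisimpleEnd {k V : Type*} [Field k] [AddCommGroup V] [Module k V]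
    (f : Module.End k V) : Prop :=
  (minpoly k f).Separable

/-- `(G, V)` is weakly adequate if `End_k(V)` is spanned as a `k`-vector space by the
operators `ρ g`, `g ∈ G`, which are semisimple. -/
def WeaklyAdequate {k G V : Type*} [Field k] [Monoid G] [AddCommGroup V] [Module k V]
    (ρ : Representation k G V) : Prop :=
  Submodule.span k {f : Module.End k V | ∃ g : G, IsSemisimpleEnd (ρ g) ∧ ρ g = f} = ⊤

/-- A submodule is `ρ`-invariant if it is stable under every `ρ g`. -/
def IsInvariantSubmodule {k G V : Type*} [CommSemiring k] [Monoid G] [AddCommMonoid V]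
    [Module k V] (ρ : Representation k G V) (U : Submodule k V) : Prop :=
  ∀ g : G, ∀ v ∈ U, ρ g v ∈ U

/-- A representation is irreducible if `V ≠ 0` and the only invariant submodules are `⊥`
and `⊤`. -/
def IsIrreducibleRep {k G V : Type*} [CommSemiring k] [Monoid G] [AddCommMonoid V]
    [Module k V] (ρ : Representation k G V) : Prop :=
  Nontrivial V ∧ ∀ U : Submodule k V, IsInvariantSubmodule ρ U → U = ⊥ ∨ U = ⊤


section PartOne

open Polynomial

/-- Burnside theorem for subalgebras of matrices over an algebraically closed field. -/
theorem wa_burnside_alg {k V : Type*} [Field k] [IsAlgClosed k] [AddCommGroup V] [Module k V]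
    [FiniteDimensional k V] [Nontrivial V] (S : Subalgebra k (Module.End k V))
    (hirr : ∀ U : Submodule k V, (∀ s ∈ S, ∀ v ∈ U, s v ∈ U) → U = ⊥ ∨ U = ⊤) : S = ⊤ := by
  classical
  have hs : IsSimpleModule S V := by
    rw [isSimpleModule_iff_toSpanSingleton_surjective]
    refine ⟨inferInstance, fun m hm => ?_⟩
    let U : Submodule k V :=
      { carrier := {v | ∃ s : S, s • m = v}
        add_mem' := by
          rintro a b ⟨s, rfl⟩ ⟨t, rfl⟩
          exact ⟨s + t, add_smul _ _ _⟩
        zero_mem' := ⟨0, zero_smul _ _⟩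
        smul_mem' := by
          rintro c a ⟨s, rfl⟩
          exact ⟨c • s, smul_assoc _ _ _⟩ }
    have hU := hirr U (by
      rintro s hs v ⟨t, rfl⟩
      exact ⟨⟨s, hs⟩ * t, mul_smul _ _ _⟩)
    have hmU : m ∈ U := ⟨1, one_smul _ _⟩
    rcases hU with h | h
    · rw [h] at hmU; exact absurd ((Submodule.mem_bot k).1 hmU) hm
    · intro v
      have : v ∈ U := by rw [h]; trivial
      obtain ⟨s, hs⟩ := this
      exact ⟨s, hs⟩
  -- Schur
  have schur : ∀ φ : Module.End S V, ∃ c : k, ∀ v, φ v = c • v := by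
    intro φ
    let φ' : Module.End k V := φ.restrictScalars k
    obtain ⟨c, hc⟩ := Module.End.exists_eigenvalue φ'
    refine ⟨c, ?_⟩
    have h := hirr (φ'.eigenspace c) (by
      intro s hs v hv
      rw [Module.End.mem_eigenspace_iff] at hv ⊢
      have h1 : φ' (s v) = s (φ' v) := φ.map_smul ⟨s, hs⟩ v
      rw [h1, hv, map_smul])
    rcases h with h | h
    · exact absurd h hc
    · intro v
      have : v ∈ φ'.eigenspace c := by rw [h]; trivial
      exact Module.End.mem_eigenspace_iff.1 this
  rw [eq_top_iff]
  intro f _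
  let b := Module.finBasis k V
  let f' : Module.End (Module.End S V) V :=
    { toFun := f
      map_add' := f.map_add
      map_smul' := by
        intro φ v
        obtain ⟨c, hc⟩ := schur φ
        simp only [Module.End.smul_def, RingHom.id_apply]
        rw [hc, hc, map_smul] }
  obtain ⟨r, hr⟩ := jacobson_density f' (Finset.univ.image b)
  have : f = r := by
    apply b.ext
    intro i
    exact hr (b i) (by simp)
  rw [this]
  exact r.2

/-- Burnside theorem for monoid representations. -/
theorem wa_burnside {k V M : Type*} [Field k] [IsAlgClosed k] [AddCommGroup V] [Module k V]
    [FiniteDimensional k V] [Nontrivial V] [Monoid M] (ρ : M →* Module.End k V)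
    (hirr : ∀ U : Submodule k V, (∀ g, ∀ v ∈ U, ρ g v ∈ U) → U = ⊥ ∨ U = ⊤) :
    Submodule.span k (Set.range ρ) = ⊤ := by
  have h := wa_burnside_alg (Algebra.adjoin k (Set.range ρ)) (by
    intro U hU
    exact hirr U (fun g v hv => hU _ (Algebra.subset_adjoin ⟨g, rfl⟩) v hv))
  have h2 := Algebra.adjoin_eq_span k (Set.range ρ)
  rw [h, ← MonoidHom.coe_mrange, Submonoid.closure_eq] at h2
  rw [← MonoidHom.coe_mrange, ← h2]
  rfl

/-- Large `p`-powers of an endomorphism are killed by separable polynomials. -/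
theorem wa_L1 {k V : Type*} [Field k] [IsAlgClosed k] (p : ℕ) [Fact p.Prime] [CharP k p]
    [AddCommGroup V] [Module k V] [FiniteDimensional k V] (f : Module.End k V) (a : ℕ)
    (ha : Module.finrank k V ≤ p ^ a) : (minpoly k (f ^ p ^ a)).Separable := by
  classical
  set q := p ^ a with hq
  set m := minpoly k f with hm
  have hm0 : m ≠ 0 := minpoly.ne_zero (Algebra.IsIntegral.isIntegral f)
  set Λ := m.roots.toFinset with hΛ
  -- the separable polynomial
  set s : k[X] := ∏ c ∈ Λ, (X - C (c ^ q)) with hs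
  have hinj : ∀ x y : k, x ^ q = y ^ q → x = y := by
    intro x y h
    exact iterateFrobenius_inj k p a (by simpa [iterateFrobenius_def] using h)
  have hsep : s.Separable := by
    rw [hs]
    refine (separable_prod_X_sub_C_iff' (f := fun c : k => c ^ q)).2 ?_
    intro x _ y _ h
    exact hinj x y h
  have hdvd : m ∣ (∏ c ∈ Λ, (X - C c)) ^ q := by
    have hsplit : m.Splits := IsAlgClosed.splits m
    have hmon : m.Monic := minpoly.monic (Algebra.IsIntegral.isIntegral f)
    rw [hsplit.eq_prod_roots_of_monic hmon, ← Finset.prod_pow, Finset.prod_multiset_map_count]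
    refine Finset.prod_dvd_prod_of_dvd _ _ ?_
    intro c _
    refine pow_dvd_pow _ ?_
    calc m.roots.count c ≤ Multiset.card m.roots := Multiset.count_le_card _ _
      _ ≤ m.natDegree := card_roots' m
      _ ≤ Module.finrank k V := by
        have := minpoly.dvd k f (LinearMap.aeval_self_charpoly f)
        calc m.natDegree ≤ f.charpoly.natDegree :=
              natDegree_le_of_dvd this (LinearMap.charpoly_monic f).ne_zero
          _ = _ := LinearMap.charpoly_natDegree f
      _ ≤ q := ha
  have hexp : (∏ c ∈ Λ, (X - C c)) ^ q = s.comp (X ^ q) := by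
    rw [hs, prod_comp, ← Finset.prod_pow]
    refine Finset.prod_congr rfl fun c _ => ?_
    rw [sub_comp, X_comp, C_comp, C_pow, hq, sub_pow_char_pow]
  have hkill : aeval (f ^ q) s = 0 := by
    have h1 : aeval f (s.comp (X ^ q)) = aeval (f ^ q) s := by
      rw [aeval_comp]; simp
    rw [← h1, ← hexp]
    exact aeval_eq_zero_of_dvd_aeval_eq_zero hdvd (minpoly.aeval k f)
  exact hsep.of_dvd (minpoly.dvd k _ hkill)

/-- An endomorphism killed by a separable polynomial is in the span of its
`q i`-th powers, `i ≥ 1`. -/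
theorem wa_L2 {k A : Type*} [Field k] [IsAlgClosed k] (p : ℕ) [Fact p.Prime] [CharP k p]
    [Ring A] [Algebra k A] (f : A) (a : ℕ) (P : k[X]) (hP : P.Separable)
    (hf : aeval f P = 0) :
    f ∈ Submodule.span k {x : A | ∃ i : ℕ, 0 < i ∧ x = f ^ (p ^ a * i)} := by
  classical
  set q := p ^ a with hq
  have hq0 : q ≠ 0 := pow_ne_zero _ (Fact.out : p.Prime).ne_zero
  have hinj : ∀ x y : k, x ^ q = y ^ q → x = y := by
    intro x y h
    exact iterateFrobenius_inj k p a (by simpa [iterateFrobenius_def] using h)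
  set Λ := insert 0 P.roots.toFinset with hΛ
  have hinjOn : Set.InjOn (fun c : k => c ^ q) Λ := fun x _ y _ h => hinj x y h
  set L := Lagrange.interpolate Λ (fun c : k => c ^ q) (fun c => c) with hL
  have hev : ∀ c ∈ Λ, L.eval (c ^ q) = c := by
    intro c hc
    exact Lagrange.eval_interpolate_at_node (fun c => c) hinjOn hc
  have hL0 : L.coeff 0 = 0 := by
    have := hev 0 (by simp [hΛ])
    rw [zero_pow hq0] at this
    rwa [coeff_zero_eq_eval_zero]
  have hdvd : P ∣ L.comp (X ^ q) - X := by
    have hP0 : P ≠ 0 := hP.ne_zero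
    have hsplit : P.Splits := IsAlgClosed.splits P
    have h1 := hsplit.eq_prod_roots
    have hnd : P.roots.Nodup := nodup_roots hP
    rw [h1]
    rw [IsUnit.mul_left_dvd (isUnit_C.2 (by simpa using hP0))]
    have : (P.roots.map (fun c => X - C c)).prod = ∏ c ∈ P.roots.toFinset, (X - C c) := by
      rw [Finset.prod_multiset_map_count]
      refine Finset.prod_congr rfl fun c hc => ?_
      rw [Multiset.count_eq_one_of_mem hnd (Multiset.mem_toFinset.1 hc), pow_one]
    rw [this]
    refine Finset.prod_dvd_of_coprime ?_ ?_
    · intro x _ y _ hxy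
      exact isCoprime_X_sub_C_of_isUnit_sub (sub_ne_zero.2 hxy).isUnit
    · intro c hc
      rw [dvd_iff_isRoot]
      simp only [IsRoot, eval_sub, eval_comp, eval_pow, eval_X]
      rw [hev c (by simp [hΛ]; right; simpa using hc), sub_self]
  have hfe : f = aeval (f ^ q) L := by
    have h0 := aeval_eq_zero_of_dvd_aeval_eq_zero hdvd hf
    rw [map_sub, aeval_comp, aeval_X, map_pow, aeval_X, sub_eq_zero] at h0
    exact h0.symm
  have hmem : aeval (f ^ q) L ∈
      Submodule.span k {x : A | ∃ i : ℕ, 0 < i ∧ x = f ^ (q * i)} := by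
    rw [aeval_eq_sum_range]
    refine Submodule.sum_mem _ fun i _ => ?_
    rcases Nat.eq_zero_or_pos i with rfl | hi
    · rw [hL0, zero_smul]; exact Submodule.zero_mem _
    · exact Submodule.smul_mem _ _ (Submodule.subset_span ⟨i, hi, (pow_mul _ _ _).symm⟩)
  rw [← hfe] at hmem
  exact hmem

end PartOne

section PartTwo

open Pointwise TopologicalSpace

theorem wa_conn1 {H : Type*} [Group H] [TopologicalSpace H] [NoetherianSpace H]
    (hl : ∀ x : H, Continuous (fun y => x * y)) (hr : ∀ x : H, Continuous (fun y => y * x))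
    (hmin : ∀ T : Subgroup H, IsClosed (T : Set H) → T.FiniteIndex → T = ⊤) :
    PreirreducibleSpace H := by
  classical
  set Z := irreducibleComponent (1 : H) with hZ
  have hZc : IsClosed Z := isClosed_irreducibleComponent
  have hZi : IsIrreducible Z := isIrreducible_irreducibleComponent
  have hZm : Maximal IsIrreducible Z := irreducibleComponent_mem_irreducibleComponents 1
  have himg : ∀ (x : H) (s : Set H), IsIrreducible s → IsIrreducible (x • s) := by
    intro x s hs
    exact hs.image _ (hl x).continuousOn
  have hmx : ∀ (x : H), Maximal IsIrreducible (x • Z) := by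
    intro x
    refine ⟨himg x Z hZi, fun t ht hle => ?_⟩
    have h1 : Z ≤ x⁻¹ • t := by
      intro z hz
      rw [Set.mem_inv_smul_set_iff]
      exact hle (Set.smul_mem_smul_set hz)
    have h2 := hZm.2 (himg x⁻¹ t ht) h1
    intro z hz
    rw [Set.mem_smul_set_iff_inv_smul_mem]
    exact h2 (Set.smul_mem_smul_set hz)
  let T : Subgroup H := MulAction.stabilizer H Z
  have hT : (T : Set H) = ⋂ z ∈ Z, (fun y => y * z) ⁻¹' Z := by
    ext h
    simp only [Set.mem_iInter, Set.mem_preimage, SetLike.mem_coe]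
    constructor
    · intro hh z hz
      have hh' : h • Z = Z := hh
      rw [← hh']
      exact Set.smul_mem_smul_set hz
    · intro hh
      have hsub : h • Z ≤ Z := by
        rintro _ ⟨z, hz, rfl⟩
        exact hh z hz
      exact le_antisymm hsub ((hmx h).2 hZi hsub)
  have hTc : IsClosed (T : Set H) := by
    rw [hT]
    exact isClosed_biInter fun z _ => hZc.preimage (hr z)
  have hTf : T.FiniteIndex := by
    have hfin : (MulAction.orbit H Z).Finite := by
      refine (NoetherianSpace.finite_irreducibleComponents (α := H)).subset ?_
      rintro _ ⟨x, rfl⟩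
      exact hmx x
    have : Finite (H ⧸ T) := by
      have := hfin.to_subtype
      exact Finite.of_equiv _ (MulAction.orbitEquivQuotientStabilizer H Z)
    exact Subgroup.finiteIndex_of_finite_quotient
  have htop := hmin T hTc hTf
  have hZu : Z = Set.univ := by
    rw [Set.eq_univ_iff_forall]
    intro x
    have hx : x ∈ T := by rw [htop]; trivial
    have hx' : x • Z = Z := hx
    rw [← hx']
    exact ⟨1, mem_irreducibleComponent, mul_one x⟩
  constructor
  rw [← hZu]
  exact hZi.2

theorem wa_conn2 {G : Type*} [Group G] [TopologicalSpace G] [NoetherianSpace G]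
    (hl : ∀ x : G, Continuous (fun y => x * y)) (hr : ∀ x : G, Continuous (fun y => y * x)) :
    ∃ H : Subgroup G, H.Normal ∧ H.FiniteIndex ∧ IsClosed (H : Set G) ∧
      IsPreirreducible (H : Set G) := by
  classical
  have hwf : WellFoundedLT (Closeds G) := inferInstance
  let S : Set (Closeds G) := {C | ∃ H : Subgroup G, H.FiniteIndex ∧ (H : Set G) = C}
  have hS : S.Nonempty := ⟨⊤, ⊤, inferInstance, by simp⟩
  obtain ⟨C, ⟨H, hfi, hHC⟩, hmin⟩ := hwf.wf.has_min S hS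
  have hHcl : IsClosed (H : Set G) := by rw [hHC]; exact C.isClosed
  have hleast : ∀ K : Subgroup G, K.FiniteIndex → IsClosed (K : Set G) → H ≤ K := by
    intro K hK hKc
    by_contra hle
    have hfi2 : (H ⊓ K).FiniteIndex := inferInstance
    have hc2 : IsClosed ((H ⊓ K : Subgroup G) : Set G) := by
      rw [Subgroup.coe_inf]; exact hHcl.inter hKc
    refine hmin ⟨_, hc2⟩ ⟨H ⊓ K, hfi2, rfl⟩ ?_
    refine lt_of_le_of_ne ?_ ?_
    · intro x hx
      have : x ∈ (H : Set G) := hx.1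
      rw [hHC] at this
      exact this
    · intro heq
      apply hle
      intro x hx
      have h1 : x ∈ (C : Set G) := by rw [← hHC]; exact hx
      rw [← heq] at h1
      exact h1.2
  refine ⟨H, ?_, hfi, hHcl, ?_⟩
  · constructor
    intro n hn g
    have hconj : H ≤ H.comap (MulAut.conj g).toMonoidHom := by
      refine hleast _ ?_ ?_
      · constructor
        rw [Subgroup.index_comap_of_surjective _ (MulAut.conj g).surjective]
        exact hfi.index_ne_zero
      · have : ((H.comap (MulAut.conj g).toMonoidHom : Subgroup G) : Set G) =
            (fun y => g * y) ⁻¹' ((fun y => y * g⁻¹) ⁻¹' (H : Set G)) := by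
          ext y; simp [mul_assoc]
        rw [this]
        exact (hHcl.preimage (hr g⁻¹)).preimage (hl g)
    exact hconj hn
  · have : NoetherianSpace H := Topology.IsInducing.subtypeVal.noetherianSpace
    have hirr : PreirreducibleSpace H := by
      refine wa_conn1 (fun x => ?_) (fun x => ?_) ?_
      · exact Continuous.subtype_mk ((hl x).comp continuous_subtype_val) _
      · exact Continuous.subtype_mk ((hr x).comp continuous_subtype_val) _
      · intro T hTc hTf
        have hc : IsClosed ((T.map H.subtype : Subgroup G) : Set G) := by
          rw [Subgroup.coe_map]
          exact hHcl.isClosedEmbedding_subtypeVal.isClosedMap _ hTc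
        have hf : (T.map H.subtype).FiniteIndex := by
          constructor
          rw [Subgroup.index_map]
          simp only [Subgroup.ker_subtype, sup_bot_eq, Subgroup.range_subtype]
          exact mul_ne_zero hTf.index_ne_zero hfi.index_ne_zero
        have := hleast _ hf hc
        rw [eq_top_iff]
        intro x _
        obtain ⟨y, hy, hxy⟩ := this x.2
        have : y = x := Subtype.ext hxy
        rwa [← this]
    have := hirr.isPreirreducible_univ.image (Subtype.val : H → G)
      continuous_subtype_val.continuousOn
    rwa [Set.image_univ, Subtype.range_coe] at this

/-- Zariski identity component of a group with respect to a translation invariant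
finitely generated algebra of functions. -/
theorem wa_conn3 {k G : Type*} [Field k] [Group G] (S : Subalgebra k (G → k)) (hfg : S.FG)
    (hl : ∀ x : G, ∀ f ∈ S, (fun y => f (x * y)) ∈ S)
    (hr : ∀ x : G, ∀ f ∈ S, (fun y => f (y * x)) ∈ S) :
    ∃ H : Subgroup G, H.Normal ∧ H.FiniteIndex ∧
      (∀ x ∉ H, ∃ f ∈ S, (∀ h ∈ H, f h = 0) ∧ f x ≠ 0) ∧
      (∀ f ∈ S, ∀ g ∈ S, (∀ h ∈ H, f h * g h = 0) → (∀ h ∈ H, f h = 0) ∨ (∀ h ∈ H, g h = 0)) := by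
  classical
  have : Algebra.FiniteType k S := S.fg_iff_finiteType.1 hfg
  have : IsNoetherianRing S := Algebra.FiniteType.isNoetherianRing k S
  let ev : G → (S →+* k) := fun g => (Pi.evalRingHom (fun _ : G => k) g).comp S.val.toRingHom
  let e : G → PrimeSpectrum S := fun g => ⟨RingHom.ker (ev g), RingHom.ker_isPrime _⟩
  let : TopologicalSpace G := TopologicalSpace.induced e inferInstance
  have hind : Topology.IsInducing e := ⟨rfl⟩
  have : NoetherianSpace G := hind.noetherianSpace
  have hclosed : ∀ Z : Set G, IsClosed Z ↔ ∃ T : Set S, Z = {g | ∀ f ∈ T, f.1 g = 0} := by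
    intro Z
    rw [hind.isClosed_iff]
    constructor
    · rintro ⟨t, ht, rfl⟩
      obtain ⟨s, rfl⟩ := (PrimeSpectrum.isClosed_iff_zeroLocus t).1 ht
      refine ⟨s, ?_⟩
      ext g
      rfl
    · rintro ⟨T, rfl⟩
      exact ⟨PrimeSpectrum.zeroLocus T, PrimeSpectrum.isClosed_zeroLocus T, rfl⟩
  obtain ⟨H, hn, hfi, hcl, hirr⟩ := wa_conn2 (G := G) (by
      intro x
      rw [continuous_iff_isClosed]
      intro Z hZ
      obtain ⟨T, rfl⟩ := (hclosed Z).1 hZ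
      rw [hclosed]
      refine ⟨(fun f : S => (⟨fun y => f.1 (x * y), hl x f.1 f.2⟩ : S)) '' T, ?_⟩
      ext g
      constructor
      · rintro hg _ ⟨f, hf, rfl⟩
        exact hg f hf
      · intro hg f hf
        exact hg _ ⟨f, hf, rfl⟩) (by
      intro x
      rw [continuous_iff_isClosed]
      intro Z hZ
      obtain ⟨T, rfl⟩ := (hclosed Z).1 hZ
      rw [hclosed]
      refine ⟨(fun f : S => (⟨fun y => f.1 (y * x), hr x f.1 f.2⟩ : S)) '' T, ?_⟩
      ext g
      constructor
      · rintro hg _ ⟨f, hf, rfl⟩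
        exact hg f hf
      · intro hg f hf
        exact hg _ ⟨f, hf, rfl⟩)
  refine ⟨H, hn, hfi, ?_, ?_⟩
  · intro x hx
    obtain ⟨T, hT⟩ := (hclosed H).1 hcl
    have hx' : x ∉ (H : Set G) := hx
    rw [hT] at hx'
    simp only [Set.mem_ofPred_eq, not_forall] at hx'
    obtain ⟨f, hf, hfx⟩ := hx'
    refine ⟨f.1, f.2, fun h hh => ?_, hfx⟩
    have hh' : h ∈ (H : Set G) := hh
    rw [hT] at hh'
    exact hh' f hf
  · intro f hf g hg hfg0
    have h1 : IsClosed {x : G | f x = 0} := (hclosed _).2 ⟨{⟨f, hf⟩}, by ext; simp⟩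
    have h2 : IsClosed {x : G | g x = 0} := (hclosed _).2 ⟨{⟨g, hg⟩}, by ext; simp⟩
    have := (isPreirreducible_iff_isClosed_union_isClosed.1 hirr) _ _ h1 h2 (by
      intro h hh
      exact mul_eq_zero.1 (hfg0 h hh))
    exact this

end PartTwo

section PartThree

open Polynomial

theorem wa_mem_range_of_integral {k K : Type*} [Field k] [IsAlgClosed k] [Field K] [Algebra k K]
    (t : K) (ht : IsIntegral k t) : t ∈ Set.range (algebraMap k K) := by
  have h1 := IsAlgClosed.degree_eq_one_of_irreducible k (minpoly.irreducible ht)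
  exact minpoly.mem_range_of_degree_eq_one k t h1

/-- Degeneration lemma. -/
theorem wa_degen {k K ι J : Type*} [Field k] [IsAlgClosed k] [Field K] [Algebra k K]
    [Finite ι] [Finite J] (a : ι → J → K) (ha : ∀ i, ∃ j, a i j ≠ 0) (t : K)
    (ht : t = 0 ∨ t ∉ Set.range (algebraMap k K)) :
    ∃ (B : Subalgebra k K) (s : B →ₐ[k] k) (c : ι → K) (b : ι → J → B) (tB : B),
      (∀ i, c i ≠ 0) ∧ (∀ i j, (b i j : K) = c i * a i j) ∧ (tB : K) = t ∧ s tB = 0 ∧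
      ∀ i, ∃ j, s (b i j) ≠ 0 := by
  classical
  have := Fintype.ofFinite ι
  have := Fintype.ofFinite J
  let A : Subalgebra k K := Algebra.adjoin k {t}
  have htA : t ∈ A := Algebra.subset_adjoin rfl
  let I : Ideal A.toSubring := Ideal.span {⟨t, htA⟩}
  have hI : I ≠ ⊤ := by
    intro hI
    rw [Ideal.span_singleton_eq_top] at hI
    obtain ⟨⟨u, hu⟩, hu1⟩ := isUnit_iff_exists_inv.1 hI
    have hu1' : t * u = 1 := congrArg Subtype.val hu1
    rcases ht with rfl | ht
    · simp at hu1'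
    · apply ht
      have hu' : u ∈ Algebra.adjoin k {t} := hu
      rw [Algebra.adjoin_singleton_eq_range_aeval] at hu'
      obtain ⟨g, rfl⟩ := hu'
      have halg : IsAlgebraic k t := by
        refine ⟨X * g - 1, ?_, ?_⟩
        · intro h0
          have := congrArg (eval 0) h0
          simp at this
        · simp only [map_sub, map_mul, aeval_X, map_one]
          exact sub_eq_zero.2 hu1'
      exact wa_mem_range_of_integral t halg.isIntegral
  obtain ⟨O, hAO, hnonu⟩ := Ideal.image_subset_nonunits_valuationSubring I hI
  have htO : t ∈ O.nonunits := hnonu ⟨⟨t, htA⟩, Ideal.subset_span rfl, rfl⟩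
  have hmax : ∀ i, ∃ j0, a i j0 ≠ 0 ∧ ∀ j, a i j / a i j0 ∈ O := by
    intro i
    obtain ⟨j1, hj1⟩ := ha i
    have : Nonempty J := ⟨j1⟩
    obtain ⟨j0, hj0⟩ := Finite.exists_max (fun j => O.valuation (a i j))
    have hne : a i j0 ≠ 0 := by
      intro h0
      have := hj0 j1
      rw [h0, map_zero, le_zero_iff, map_eq_zero] at this
      exact hj1 this
    refine ⟨j0, hne, fun j => ?_⟩
    rw [← O.valuation_le_one_iff, map_div₀]
    exact div_le_one_of_le₀ (hj0 j) zero_le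
  choose j0 hj0 hdiv using hmax
  let gen : Set K := insert t (Set.range (fun x : ι × J => a x.1 x.2 / a x.1 (j0 x.1)))
  have hgenfin : gen.Finite := (Set.finite_range _).insert t
  let B : Subalgebra k K := Algebra.adjoin k gen
  have hBO : ∀ x ∈ B, x ∈ O := by
    intro x hx
    induction hx using Algebra.adjoin_induction with
    | mem x hx =>
      rcases hx with rfl | ⟨y, rfl⟩
      · exact hAO htA
      · exact hdiv _ _
    | algebraMap r => exact hAO (A.algebraMap_mem r)
    | add x y _ _ hx hy => exact O.add_mem _ _ hx hy
    | mul x y _ _ hx hy => exact O.mul_mem _ _ hx hy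
  have htB : t ∈ B := Algebra.subset_adjoin (Set.mem_insert _ _)
  have hnu : ¬ IsUnit (⟨t, htB⟩ : B) := by
    intro hu
    obtain ⟨⟨u, hu⟩, hu1⟩ := isUnit_iff_exists_inv.1 hu
    have hu1' : t * u = 1 := congrArg Subtype.val hu1
    have h1 : O.valuation t < 1 := O.mem_nonunits_iff.1 htO
    have h2 : O.valuation u ≤ 1 := (O.valuation_le_one_iff u).2 (hBO u hu)
    have h3 : O.valuation t * O.valuation u = 1 := by rw [← map_mul, hu1', map_one]
    have := mul_lt_one_of_lt_of_le h1 h2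
    exact absurd h3 this.ne
  obtain ⟨m, hm, htm⟩ := exists_max_ideal_of_mem_nonunits hnu
  have : Algebra.FiniteType k B := by
    rw [← Subalgebra.fg_iff_finiteType]
    exact ⟨hgenfin.toFinset, by simp [B]⟩
  let := Ideal.Quotient.field m
  have hfin := finite_of_finite_type_of_isJacobsonRing k (B ⧸ m)
  have hbij : Function.Bijective (algebraMap k (B ⧸ m)) :=
    IsAlgClosed.algebraMap_bijective_of_isIntegral
  let e : k ≃ₐ[k] (B ⧸ m) := AlgEquiv.ofBijective (Algebra.ofId k _) hbij
  let s : B →ₐ[k] k := e.symm.toAlgHom.comp (Ideal.Quotient.mkₐ k m)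
  refine ⟨B, s, fun i => (a i (j0 i))⁻¹, fun i j =>
    ⟨a i j / a i (j0 i), Algebra.subset_adjoin (Set.mem_insert_of_mem _ ⟨(i, j), rfl⟩)⟩,
    ⟨t, htB⟩, fun i => inv_ne_zero (hj0 i), fun i j => ?_, rfl, ?_, fun i => ⟨j0 i, ?_⟩⟩
  · simp [div_eq_inv_mul]
  · have : Ideal.Quotient.mkₐ k m ⟨t, htB⟩ = 0 := Ideal.Quotient.eq_zero_iff_mem.2 htm
    change e.symm (Ideal.Quotient.mkₐ k m ⟨t, htB⟩) = 0
    rw [this, map_zero]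
  · have : (⟨a i (j0 i) / a i (j0 i), Algebra.subset_adjoin (Set.mem_insert_of_mem _
        ⟨(i, j0 i), rfl⟩)⟩ : B) = 1 := Subtype.ext (div_self (hj0 i))
    beta_reduce
    rw [this, map_one]
    exact one_ne_zero

end PartThree

section PartFourA

/-- The (conical) closure of the image of a map with respect to homogeneous equations. -/
def WaCl (k : Type*) {H E : Type*} [Field k] [AddCommGroup E] [Module k E] (P : H → E) : Set E :=
  {η | ∀ (e : ℕ) (M : MultilinearMap k (fun _ : Fin e => E) k),
    (∀ n, M (fun _ => P n) = 0) → M (fun _ => η) = 0}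

theorem waCl_self {k H E : Type*} [Field k] [AddCommGroup E] [Module k E] (P : H → E) (n : H) :
    P n ∈ WaCl k P := fun _ _ h => h n

theorem waCl_map {k H E : Type*} [Field k] [AddCommGroup E] [Module k E] (P : H → E)
    (T : E →ₗ[k] E) (hT : ∀ n, T (P n) ∈ WaCl k P) (η : E) (hη : η ∈ WaCl k P) :
    T η ∈ WaCl k P := by
  intro e M hM
  have := hη e (M.compLinearMap (fun _ => T)) (fun n => by
    simpa using hT n e M hM)
  simpa using this

theorem waCl_mul {k H E : Type*} [Field k] [Group H] [Ring E] [Algebra k E] (P : H →* E)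
    (η η' : E) (hη : η ∈ WaCl k P) (hη' : η' ∈ WaCl k P) : η * η' ∈ WaCl k P := by
  have h1 : ∀ n, P n * η' ∈ WaCl k P := by
    intro n
    refine waCl_map P (LinearMap.mulLeft k (P n)) (fun n' => ?_) η' hη'
    rw [LinearMap.mulLeft_apply, ← map_mul]
    exact waCl_self P _
  refine waCl_map P (LinearMap.mulRight k η') (fun n => ?_) η hη
  exact h1 n

theorem waCl_list_prod {k H E : Type*} [Field k] [Group H] [Ring E] [Algebra k E] (P : H →* E)
    (l : List E) (hl : ∀ x ∈ l, x ∈ WaCl k P) : l.prod ∈ WaCl k P := by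
  induction l with
  | nil =>
    rw [List.prod_nil, ← map_one P]
    exact waCl_self P 1
  | cons x l ih =>
    rw [List.prod_cons]
    exact waCl_mul P _ _ (hl x (by simp)) (ih fun y hy => hl y (by simp [hy]))

structure WaData (k H I : Type*) [Field k] [Group H] (d : ℕ) where
  S : Subalgebra k (H → k)
  dom : IsDomain S
  π : I → H →* Matrix (Fin d) (Fin d) k
  mem : ∀ σ i j, (fun n => π σ n i j) ∈ S
  span_top : ∀ σ, Submodule.span k (Set.range (π σ)) = ⊤
  τ : I → I → I
  bij : ∀ σ, Function.Bijective (fun j => τ j σ)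
  A : I → I → Matrix (Fin d) (Fin d) k
  B : I → I → Matrix (Fin d) (Fin d) k
  hA : ∀ j σ, IsUnit (A j σ)
  hB : ∀ j σ, IsUnit (B j σ)
  conj : ∀ j n, ∃ n', ∀ σ, A j σ * π (τ j σ) n * B j σ = π σ n'

namespace WaData

variable {k H I : Type*} [Field k] [Group H] {d : ℕ} (D : WaData k H I d)

/-- The total representation. -/
def P : H →* (I → Matrix (Fin d) (Fin d) k) := MonoidHom.pi D.π

theorem P_apply (n : H) (σ : I) : D.P n σ = D.π σ n := rfl

/-- Products of conjugates. -/
def Y (R : Type*) [CommRing R] [Algebra k R] (L : List (I × H))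
    (a : I → Matrix (Fin d) (Fin d) R) (σ : I) : Matrix (Fin d) (Fin d) R :=
  (L.map fun x => (D.A x.1 σ).map (algebraMap k R) * a (D.τ x.1 σ) *
    (D.B x.1 σ).map (algebraMap k R) * (D.π σ x.2).map (algebraMap k R)).prod

theorem Y_map {R R' : Type*} [CommRing R] [Algebra k R] [CommRing R'] [Algebra k R']
    (φ : R →ₐ[k] R') (L : List (I × H)) (a : I → Matrix (Fin d) (Fin d) R) (σ : I) :
    (D.Y R L a σ).map φ = D.Y R' L (fun τ => (a τ).map φ) σ := by
  have hc : ∀ M : Matrix (Fin d) (Fin d) k,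
      (M.map (algebraMap k R)).map φ = M.map (algebraMap k R') := by
    intro M; ext i j; simp
  induction L with
  | nil => simp [Y]
  | cons x L ih =>
    simp only [Y, List.map_cons, List.prod_cons] at ih ⊢
    rw [Matrix.map_mul, Matrix.map_mul, Matrix.map_mul, Matrix.map_mul, ih, hc, hc, hc]

theorem Y_smul {R : Type*} [CommRing R] [Algebra k R] (c : I → R) (L : List (I × H))
    (a : I → Matrix (Fin d) (Fin d) R) (σ : I) :
    D.Y R L (fun τ => c τ • a τ) σ = (L.map fun x => c (D.τ x.1 σ)).prod • D.Y R L a σ := by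
  induction L with
  | nil => simp [Y]
  | cons x L ih =>
    simp only [Y, List.map_cons, List.prod_cons] at ih ⊢
    rw [ih]
    simp only [Matrix.mul_smul, Matrix.smul_mul, smul_smul]
    rw [mul_comm]

theorem prod_list_eq [Fintype I] (R : Type*) [CommRing R] (c : I → R) (L : List (I × H))
    (hL : L.map Prod.fst = Finset.univ.toList) (σ : I) :
    (L.map fun x => c (D.τ x.1 σ)).prod = ∏ i, c i := by
  have : (L.map fun x => c (D.τ x.1 σ)) = (L.map Prod.fst).map (fun j => c (D.τ j σ)) := by
    rw [List.map_map]; rfl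
  rw [this, hL, Finset.prod_map_toList]
  exact Function.Bijective.prod_comp (D.bij σ) c

theorem Y_mem_cl (L : List (I × H)) (η : I → Matrix (Fin d) (Fin d) k) (hη : η ∈ WaCl k D.P) :
    D.Y k L η ∈ WaCl k D.P := by
  have h0 : D.Y k L η = (L.map fun x => (fun σ => D.A x.1 σ * η (D.τ x.1 σ) * D.B x.1 σ)
      * D.P x.2).prod := by
    funext σ
    rw [Pi.list_prod_apply, List.map_map]
    unfold Y
    congr 1
  rw [h0]
  refine waCl_list_prod _ _ ?_
  intro y hy
  obtain ⟨x, _, rfl⟩ := List.mem_map.1 hy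
  refine waCl_mul _ _ _ ?_ (waCl_self _ _)
  let C : (I → Matrix (Fin d) (Fin d) k) →ₗ[k] (I → Matrix (Fin d) (Fin d) k) :=
    { toFun := fun η σ => D.A x.1 σ * η (D.τ x.1 σ) * D.B x.1 σ
      map_add' := by
        intro u v; funext σ
        simp [mul_add, add_mul]
      map_smul' := by
        intro c u; funext σ
        simp }
  refine waCl_map _ C (fun n => ?_) η hη
  obtain ⟨n', hn'⟩ := D.conj x.1 n
  have : C (D.P n) = D.P n' := by
    funext σ
    exact hn' σ
  rw [this]
  exact waCl_self _ _

/-- evaluation homomorphisms. -/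
def ev (n : H) : D.S →ₐ[k] k := (Pi.evalAlgHom k (fun _ : H => k) n).comp D.S.val

theorem ext_ev (f : D.S) (h : ∀ n, D.ev n f = 0) : f = 0 :=
  Subtype.ext (funext fun n => h n)

/-- the generic matrix. -/
def X (σ : I) : Matrix (Fin d) (Fin d) D.S := Matrix.of fun i j => ⟨_, D.mem σ i j⟩

theorem X_ev (σ : I) (n : H) : (D.X σ).map (D.ev n) = D.π σ n := by
  ext i j; rfl

theorem exists_ne (σ : I) (α β : Matrix (Fin d) (Fin d) k) (hα : α ≠ 0) (hβ : β ≠ 0) :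
    ∃ n, α * D.π σ n * β ≠ 0 := by
  by_contra! hcon
  have hall : ∀ M : Matrix (Fin d) (Fin d) k, α * M * β = 0 := by
    intro M
    have hM : M ∈ Submodule.span k (Set.range (D.π σ)) := by rw [D.span_top]; trivial
    induction hM using Submodule.span_induction with
    | mem x hx => obtain ⟨n, rfl⟩ := hx; exact hcon n
    | zero => simp
    | add x y _ _ hx hy => rw [mul_add, add_mul, hx, hy, add_zero]
    | smul c x _ hx => rw [Matrix.mul_smul, Matrix.smul_mul, hx, smul_zero]
  have : ∃ i a, α i a ≠ 0 := by
    by_contra! h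
    exact hα (Matrix.ext h)
  obtain ⟨i, a, hia⟩ := this
  have : ∃ b j, β b j ≠ 0 := by
    by_contra! h
    exact hβ (Matrix.ext h)
  obtain ⟨b, j, hbj⟩ := this
  have h := congrFun (congrFun (hall (Matrix.single a b 1)) i) j
  rw [Matrix.mul_apply, Finset.sum_eq_single b] at h
  · rw [Matrix.mul_single_apply_same, mul_one] at h
    exact mul_ne_zero hia hbj h
  · intro c _ hc
    rw [Matrix.mul_single_apply_of_ne _ _ _ _ _ hc, zero_mul]
  · simp

theorem connect [Fintype I] (α β : I → Matrix (Fin d) (Fin d) k) (hα : ∀ σ, α σ ≠ 0)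
    (hβ : ∀ σ, β σ ≠ 0) : ∃ u, ∀ σ, α σ * D.π σ u * β σ ≠ 0 := by
  have := D.dom
  let Z : I → Matrix (Fin d) (Fin d) D.S := fun σ =>
    (α σ).map (algebraMap k D.S) * D.X σ * (β σ).map (algebraMap k D.S)
  have hZ : ∀ σ n, (Z σ).map (D.ev n) = α σ * D.π σ n * β σ := by
    intro σ n
    simp only [Z]
    rw [Matrix.map_mul, Matrix.map_mul, X_ev]
    congr 2
  have hne : ∀ σ, ∃ ij : Fin d × Fin d, Z σ ij.1 ij.2 ≠ 0 := by
    intro σ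
    by_contra! h
    obtain ⟨n, hn⟩ := D.exists_ne σ _ _ (hα σ) (hβ σ)
    apply hn
    rw [← hZ]
    ext i j
    simp [h (i, j)]
  choose ij hij using hne
  have hp : ∏ σ, Z σ (ij σ).1 (ij σ).2 ≠ 0 := Finset.prod_ne_zero_iff.2 fun σ _ => hij σ
  have : ∃ n, D.ev n (∏ σ, Z σ (ij σ).1 (ij σ).2) ≠ 0 := by
    by_contra! h
    exact hp (D.ext_ev _ h)
  obtain ⟨n, hn⟩ := this
  refine ⟨n, fun σ h0 => ?_⟩
  rw [map_prod, Finset.prod_ne_zero_iff] at hn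
  apply hn σ (Finset.mem_univ σ)
  have := congrFun (congrFun ((hZ σ n).trans h0) (ij σ).1) (ij σ).2
  simpa using this

theorem connect_list [Fintype I] (hd : 0 < d) (m : I → Matrix (Fin d) (Fin d) k)
    (hm : ∀ σ, m σ ≠ 0) (l : List I) :
    ∃ L : List (I × H), L.map Prod.fst = l ∧ ∀ σ, D.Y k L m σ ≠ 0 := by
  induction l with
  | nil =>
    refine ⟨[], rfl, fun σ => ?_⟩
    have : Nonempty (Fin d) := ⟨⟨0, hd⟩⟩
    simp [Y]
  | cons j l ih =>
    obtain ⟨L, hL, hY⟩ := ih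
    obtain ⟨u, hu⟩ := D.connect (fun σ => D.A j σ * m (D.τ j σ) * D.B j σ) (D.Y k L m) (by
      intro σ h0
      apply hm (D.τ j σ)
      have h1 := (D.hB j σ).mul_left_eq_zero.1 h0
      exact (D.hA j σ).mul_right_eq_zero.1 h1) hY
    refine ⟨(j, u) :: L, by simp [hL], fun σ => ?_⟩
    have := hu σ
    simpa [Y] using this

theorem rank_list_prod_le (l : List (Matrix (Fin d) (Fin d) k)) (x : Matrix (Fin d) (Fin d) k)
    (hx : x ∈ l) : l.prod.rank ≤ x.rank := by
  induction l with
  | nil => simp at hx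
  | cons y l ih =>
    rw [List.prod_cons]
    rcases List.mem_cons.1 hx with rfl | h
    · exact Matrix.rank_mul_le_left _ _
    · exact (Matrix.rank_mul_le_right _ _).trans (ih h)

theorem rank_Y_le [Fintype I] (m : I → Matrix (Fin d) (Fin d) k) (L : List (I × H))
    (hL : L.map Prod.fst = Finset.univ.toList) (σ σ0 : I) : (D.Y k L m σ).rank ≤ (m σ0).rank := by
  obtain ⟨j, hj⟩ := (D.bij σ).2 σ0
  have : j ∈ L.map Prod.fst := by rw [hL]; simp
  obtain ⟨x, hx, rfl⟩ := List.mem_map.1 this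
  refine (rank_list_prod_le _ _ (List.mem_map.2 ⟨x, hx, rfl⟩)).trans ?_
  refine (Matrix.rank_mul_le_left _ _).trans ((Matrix.rank_mul_le_left _ _).trans ?_)
  refine (Matrix.rank_mul_le_right _ _).trans ?_
  have hj' : D.τ x.1 σ = σ0 := hj
  rw [hj']

end WaData

theorem wa_rank_factor {k : Type*} [Field k] {d : ℕ} (η : Matrix (Fin d) (Fin d) k) (r : ℕ) (hr : η.rank = r) :
    ∃ (P : Matrix (Fin d) (Fin r) k) (Q : Matrix (Fin r) (Fin d) k)
      (P' : Matrix (Fin r) (Fin d) k) (Q' : Matrix (Fin d) (Fin r) k),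
      η = P * Q ∧ P' * P = 1 ∧ Q * Q' = 1 := by
  classical
  let f := Matrix.toLin' η
  have hfr : Module.finrank k (LinearMap.range f) = r := hr
  let e : LinearMap.range f ≃ₗ[k] (Fin r → k) :=
    (Module.finBasisOfFinrankEq k _ hfr).equivFun
  let P : (Fin r → k) →ₗ[k] (Fin d → k) := (LinearMap.range f).subtype ∘ₗ e.symm.toLinearMap
  let Q : (Fin d → k) →ₗ[k] (Fin r → k) := e.toLinearMap ∘ₗ f.rangeRestrict
  have hP : LinearMap.ker P = ⊥ := by
    rw [LinearMap.ker_eq_bot]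
    exact Subtype.val_injective.comp e.symm.injective
  have hQ : LinearMap.range Q = ⊤ := by
    rw [LinearMap.range_eq_top]
    exact e.surjective.comp f.surjective_rangeRestrict
  obtain ⟨P', hP'⟩ := P.exists_leftInverse_of_injective hP
  obtain ⟨Q', hQ'⟩ := Q.exists_rightInverse_of_surjective hQ
  refine ⟨P.toMatrix', Q.toMatrix', P'.toMatrix', Q'.toMatrix', ?_, ?_, ?_⟩
  · rw [← LinearMap.toMatrix'_comp]
    have : P ∘ₗ Q = f := by
      refine LinearMap.ext fun x => ?_
      simp [P, Q]
    rw [this, LinearMap.toMatrix'_toLin']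
  · rw [← LinearMap.toMatrix'_comp, hP', LinearMap.toMatrix'_id]
  · rw [← LinearMap.toMatrix'_comp, hQ', LinearMap.toMatrix'_id]

theorem wa_rank_lt_of_det {k : Type*} [Field k] {r : ℕ} (T : Matrix (Fin r) (Fin r) k)
    (h : T.det = 0) : T.rank < r := by
  obtain ⟨v, hv, hTv⟩ := Matrix.exists_mulVec_eq_zero_iff.2 h
  have h1 := LinearMap.finrank_range_add_finrank_ker T.mulVecLin
  rw [Module.finrank_fin_fun] at h1
  have h2 : 0 < Module.finrank k (LinearMap.ker T.mulVecLin) := by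
    have : Nontrivial (LinearMap.ker T.mulVecLin) :=
      ⟨⟨⟨v, hTv⟩, 0, fun h => hv (congrArg Subtype.val h)⟩⟩
    exact Module.finrank_pos
  have h3 : T.rank = Module.finrank k (LinearMap.range T.mulVecLin) := rfl
  omega

/-- Expansion of the diagonal of a multilinear map, over any algebra. -/
noncomputable def waEval {k I : Type*} [Field k] [Fintype I] {d e : ℕ} [DecidableEq I]
    (M : MultilinearMap k (fun _ : Fin e => (I → Matrix (Fin d) (Fin d) k)) k)
    (R : Type*) [CommRing R] [Algebra k R] (Z : I → Matrix (Fin d) (Fin d) R) : R :=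
  ∑ f : Fin e → I × Fin d × Fin d,
    algebraMap k R (M (fun i => Pi.single (f i).1 (Matrix.single (f i).2.1 (f i).2.2 1))) *
      ∏ i, Z (f i).1 (f i).2.1 (f i).2.2

theorem waEval_map {k I : Type*} [Field k] [Fintype I] {d e : ℕ} [DecidableEq I]
    (M : MultilinearMap k (fun _ : Fin e => (I → Matrix (Fin d) (Fin d) k)) k)
    {R R' : Type*} [CommRing R] [Algebra k R] [CommRing R'] [Algebra k R']
    (φ : R →ₐ[k] R') (Z : I → Matrix (Fin d) (Fin d) R) :
    φ (waEval M R Z) = waEval M R' (fun σ => (Z σ).map φ) := by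
  simp [waEval, map_sum, map_prod]

theorem waEval_smul {k I : Type*} [Field k] [Fintype I] {d e : ℕ} [DecidableEq I]
    (M : MultilinearMap k (fun _ : Fin e => (I → Matrix (Fin d) (Fin d) k)) k)
    {R : Type*} [CommRing R] [Algebra k R] (c : R) (Z : I → Matrix (Fin d) (Fin d) R) :
    waEval M R (fun σ => c • Z σ) = c ^ e * waEval M R Z := by
  simp only [waEval, Finset.mul_sum, Matrix.smul_apply, smul_eq_mul, Finset.prod_mul_distrib,
    Finset.prod_const, Finset.card_univ, Fintype.card_fin]
  refine Finset.sum_congr rfl fun f _ => ?_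
  ring

theorem waEval_self {k I : Type*} [Field k] [Fintype I] {d e : ℕ} [DecidableEq I]
    (M : MultilinearMap k (fun _ : Fin e => (I → Matrix (Fin d) (Fin d) k)) k)
    (Z : I → Matrix (Fin d) (Fin d) k) : waEval M k Z = M (fun _ => Z) := by
  have hZ : Z = ∑ x : I × Fin d × Fin d,
      Z x.1 x.2.1 x.2.2 • (Pi.single x.1 (Matrix.single x.2.1 x.2.2 1) :
        I → Matrix (Fin d) (Fin d) k) := by
    funext σ
    ext i j
    rw [Finset.sum_apply, Matrix.sum_apply, Finset.sum_eq_single (σ, i, j)]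
    · simp
    · rintro ⟨σ', i', j'⟩ _ hne
      by_cases h1 : σ' = σ
      · subst h1
        simp only [Pi.smul_apply, Pi.single_eq_same, Matrix.smul_apply, smul_eq_mul]
        rw [Matrix.single_apply_of_ne, mul_zero]
        rintro ⟨rfl, rfl⟩
        exact hne rfl
      · simp [Pi.single_eq_of_ne (Ne.symm h1)]
    · simp
  conv_rhs => rw [hZ]
  rw [M.map_sum (fun _ (x : I × Fin d × Fin d) => Z x.1 x.2.1 x.2.2 •
    (Pi.single x.1 (Matrix.single x.2.1 x.2.2 1) : I → Matrix (Fin d) (Fin d) k))]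
  unfold waEval
  refine Finset.sum_congr rfl fun f _ => ?_
  rw [M.map_smul_univ]
  simp [mul_comm]

end PartFourA

section PartFourB

namespace WaData

variable {k H I : Type*} [Field k] [IsAlgClosed k] [Group H] {d : ℕ} (D : WaData k H I d)

/-- Some ratio `det T / y ^ r` is zero or non-constant. -/
theorem exists_ratio {K : Type*} [Field K] [Algebra k K] [Algebra D.S K] [IsScalarTower k D.S K]
    (hinj : Function.Injective (algebraMap D.S K)) {r : ℕ} (hr : 2 ≤ r)
    (σ : I) (Q : Matrix (Fin r) (Fin d) k) (P : Matrix (Fin d) (Fin r) k)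
    (P' : Matrix (Fin r) (Fin d) k) (Q' : Matrix (Fin d) (Fin r) k)
    (hP : P' * P = 1) (hQ : Q * Q' = 1) (T : Matrix (Fin r) (Fin r) D.S)
    (hT : ∀ n, T.map (D.ev n) = Q * D.π σ n * P) :
    ∃ i j, T i j ≠ 0 ∧ (algebraMap D.S K T.det / (algebraMap D.S K (T i j)) ^ r = 0 ∨
      algebraMap D.S K T.det / (algebraMap D.S K (T i j)) ^ r ∉ Set.range (algebraMap k K)) := by
  have hspan : ∀ φ : Matrix (Fin r) (Fin r) k →ₗ[k] k, (∀ n, φ (T.map (D.ev n)) = 0) →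
      ∀ M, φ M = 0 := by
    intro φ hφ M
    have hX : ∀ X : Matrix (Fin d) (Fin d) k, φ (Q * X * P) = 0 := by
      intro X
      have hM : X ∈ Submodule.span k (Set.range (D.π σ)) := by rw [D.span_top]; trivial
      induction hM using Submodule.span_induction with
      | mem x hx => obtain ⟨n, rfl⟩ := hx; rw [← hT]; exact hφ n
      | zero => simp
      | add x y _ _ hx hy => rw [Matrix.mul_add, Matrix.add_mul, map_add, hx, hy, add_zero]
      | smul c x _ hx => rw [Matrix.mul_smul, Matrix.smul_mul, map_smul, hx, smul_zero]
    have : M = Q * (Q' * M * P') * P := by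
      calc M = (Q * Q') * M * (P' * P) := by rw [hP, hQ, Matrix.one_mul, Matrix.mul_one]
        _ = _ := by simp only [Matrix.mul_assoc]
    rw [this]
    exact hX _
  have hne : ∃ i j, T i j ≠ 0 := by
    by_contra! h0
    have h1 := hspan (Matrix.entryLinearMap k k (⟨0, by omega⟩ : Fin r) (⟨0, by omega⟩ : Fin r))
      (fun n => by simp [h0]) 1
    simp at h1
  obtain ⟨i0, j0, h0⟩ := hne
  have hz : ∀ f : D.S, f ≠ 0 → algebraMap D.S K f ≠ 0 := fun f hf =>
    (map_ne_zero_iff _ hinj).2 hf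
  have hr0 : r ≠ 0 := by omega
  by_contra! hcon
  -- all entries are proportional
  have hprop : ∀ i j, ∃ c : k, T i j = c • T i0 j0 := by
    intro i j
    by_cases hij : T i j = 0
    · exact ⟨0, by simp [hij]⟩
    obtain ⟨h1, c1, hc1⟩ := hcon i j hij
    obtain ⟨h2, c2, hc2⟩ := hcon i0 j0 h0
    have hy1 := hz _ hij
    have hy2 := hz _ h0
    set y1 := algebraMap D.S K (T i j)
    set y2 := algebraMap D.S K (T i0 j0)
    set Δ := algebraMap D.S K T.det
    have hΔ : Δ ≠ 0 := by
      intro h; rw [h, zero_div] at h1; exact h1 rfl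
    have hc10 : c1 ≠ 0 := by
      rintro rfl; rw [map_zero] at hc1; exact h1 hc1.symm
    have hpow : (y1 / y2) ^ r = algebraMap k K (c2 / c1) := by
      rw [map_div₀, hc1, hc2, div_pow]
      field_simp
    have hintegral : IsIntegral k (y1 / y2) := by
      refine IsIntegral.of_pow (n := r) (by omega) ?_
      rw [hpow]
      exact isIntegral_algebraMap
    obtain ⟨c, hc⟩ := wa_mem_range_of_integral _ hintegral
    refine ⟨c, hinj ?_⟩
    rw [Algebra.smul_def, map_mul, ← IsScalarTower.algebraMap_apply, hc]
    exact (div_mul_cancel₀ _ hy2).symm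
  choose c hc using hprop
  have hc1 : c i0 j0 ≠ 0 := by
    intro h
    have := hc i0 j0
    rw [h, zero_smul] at this
    exact h0 this
  have hline : ∀ M : Matrix (Fin r) (Fin r) k, ∀ i j i' j', M i j * c i' j' = M i' j' * c i j := by
    intro M i j i' j'
    have h1 := hspan (c i' j' • Matrix.entryLinearMap k k i j -
      c i j • Matrix.entryLinearMap k k i' j') (fun n => by
        simp only [LinearMap.sub_apply, LinearMap.smul_apply, Matrix.entryLinearMap_apply,
          Matrix.map_apply, smul_eq_mul]
        rw [hc i j, hc i' j', map_smul, map_smul, smul_eq_mul, smul_eq_mul]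
        ring) M
    simp only [LinearMap.sub_apply, LinearMap.smul_apply, Matrix.entryLinearMap_apply,
      smul_eq_mul] at h1
    rw [sub_eq_zero] at h1
    rw [mul_comm, h1, mul_comm]
  have hex : ∃ i1 : Fin r, i1 ≠ i0 := by
    have : Nontrivial (Fin r) := Fin.nontrivial_iff_two_le.2 hr
    exact _root_.exists_ne i0
  obtain ⟨i1, hi1⟩ := hex
  have h1 := hline (Matrix.single i1 j0 1) i1 j0 i0 j0
  rw [Matrix.single_apply_same, Matrix.single_apply_of_ne _ _ _ _ _ (fun h => hi1 h.1),
    one_mul, zero_mul] at h1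
  exact hc1 h1

end WaData

end PartFourB

section PartFourC

theorem wa_map_map {k R R' : Type*} [Field k] [CommRing R] [Algebra k R] [CommRing R'] [Algebra k R']
    (φ : R →ₐ[k] R') {m n : Type*} (M : Matrix m n k) :
    (M.map (algebraMap k R)).map φ = M.map (algebraMap k R') := by
  ext i j; simp

namespace WaData

variable {k H I : Type*} [Field k] [IsAlgClosed k] [Group H] {d : ℕ} (D : WaData k H I d)

theorem reduce_aux [Fintype I] [DecidableEq I] (K : Type*) [Field K] [Algebra k K] [Algebra D.S K]
    [IsScalarTower k D.S K] (hinj : Function.Injective (algebraMap D.S K)) (σ0 : I) (η : I → Matrix (Fin d) (Fin d) k)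
    (hη : η ∈ WaCl k D.P) (hbal : ∀ σ, η σ ≠ 0) (hr : 2 ≤ (η σ0).rank) :
    ∃ η' ∈ WaCl k D.P, (∀ σ, η' σ ≠ 0) ∧ ∀ σ, (η' σ).rank < (η σ0).rank := by
  have := D.dom
  let ι : D.S →ₐ[k] K := IsScalarTower.toAlgHom k D.S K
  have hd : 0 < d := by
    rcases Nat.eq_zero_or_pos d with rfl | h
    · exact absurd (Matrix.ext fun i => i.elim0) (hbal σ0)
    · exact h
  -- generic matrices
  let aS : I → Matrix (Fin d) (Fin d) D.S := fun σ =>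
    (η σ).map (algebraMap k D.S) * D.X σ * (η σ).map (algebraMap k D.S)
  have haS : ∀ σ n, (aS σ).map (D.ev n) = η σ * D.π σ n * η σ := by
    intro σ n
    simp only [aS]
    rw [Matrix.map_mul, Matrix.map_mul, X_ev]
    congr 2
  let a : I → Matrix (Fin d) (Fin d) K := fun σ => (aS σ).map ι
  have hane : ∀ σ, ∃ ij : Fin d × Fin d, a σ ij.1 ij.2 ≠ 0 := by
    intro σ
    by_contra! h
    obtain ⟨n, hn⟩ := D.exists_ne σ _ _ (hbal σ) (hbal σ)
    apply hn
    rw [← haS]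
    ext i j
    have h1 := h (i, j)
    have h2 : aS σ i j = 0 := hinj (by rw [map_zero]; exact h1)
    simp [h2]
  obtain ⟨r, hrdef⟩ : ∃ r, (η σ0).rank = r := ⟨_, rfl⟩
  rw [hrdef] at hr ⊢
  obtain ⟨P, Q, P', Q', hPQ, hP, hQ⟩ := wa_rank_factor (η σ0) r hrdef
  let T : Matrix (Fin r) (Fin r) D.S :=
    P'.map (algebraMap k D.S) * aS σ0 * Q'.map (algebraMap k D.S)
  have hT : ∀ n, T.map (D.ev n) = Q * D.π σ0 n * P := by
    intro n
    simp only [T]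
    rw [Matrix.map_mul, Matrix.map_mul, haS, wa_map_map, wa_map_map]
    have h1 : ∀ {m n : ℕ} (M : Matrix (Fin m) (Fin n) k), M.map (algebraMap k k) = M := by
      intro m n M; ext; simp
    rw [h1, h1, hPQ]
    calc P' * (P * Q * D.π σ0 n * (P * Q)) * Q' = (P' * P) * (Q * D.π σ0 n * P) * (Q * Q') := by
          simp only [Matrix.mul_assoc]
      _ = _ := by rw [hP, hQ, Matrix.one_mul, Matrix.mul_one]
  obtain ⟨i0, j0, hT0, ht⟩ := D.exists_ratio (K := K) hinj hr σ0 Q P P' Q' hP hQ T hT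
  have hTK0 : ι (T i0 j0) ≠ 0 := (map_ne_zero_iff _ hinj).2 hT0
  obtain ⟨B, s, c, b, tB, hc, hb, htB, hst, hsb⟩ :=
    wa_degen (fun σ (ij : Fin d × Fin d) => a σ ij.1 ij.2) hane _ ht
  have hBinj : Function.Injective B.val := Subtype.val_injective
  let bM : I → Matrix (Fin d) (Fin d) B := fun σ => Matrix.of fun i j => b σ (i, j)
  have hbM : ∀ σ, (bM σ).map B.val = c σ • a σ := by
    intro σ; ext i j
    exact hb σ (i, j)
  let m : I → Matrix (Fin d) (Fin d) k := fun σ => (bM σ).map s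
  have hm : ∀ σ, m σ ≠ 0 := by
    intro σ h0
    obtain ⟨ij, hij⟩ := hsb σ
    exact hij (congrFun (congrFun h0 ij.1) ij.2)
  have hkk : ∀ {m n : ℕ} (M : Matrix (Fin m) (Fin n) k), M.map (algebraMap k k) = M := by
    intro m n M; ext; simp
  have hmapinj : ∀ {m n : ℕ} (M M' : Matrix (Fin m) (Fin n) B), M.map B.val = M'.map B.val →
      M = M' := by
    intro m n M M' h
    ext i j
    exact congrFun (congrFun h i) j
  -- rank of `m σ0`
  let TB : Matrix (Fin r) (Fin r) B :=
    P'.map (algebraMap k B) * bM σ0 * Q'.map (algebraMap k B)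
  have hTB : TB.map B.val = c σ0 • T.map ι := by
    simp only [TB, T]
    rw [Matrix.map_mul, Matrix.map_mul, hbM, wa_map_map, wa_map_map,
      Matrix.map_mul, Matrix.map_mul, wa_map_map, wa_map_map]
    simp only [Matrix.mul_smul, Matrix.smul_mul]
    rfl
  have hdet : TB.det = tB * (TB i0 j0) ^ r := by
    apply hBinj
    have h1 : B.val TB.det = (TB.map B.val).det := by
      rw [← AlgHom.mapMatrix_apply, ← AlgHom.map_det]
    have h2 : B.val (TB i0 j0) = c σ0 * ι (T i0 j0) :=
      congrFun (congrFun hTB i0) j0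
    have h3 : (T.map ι).det = ι T.det := by
      rw [← AlgHom.mapMatrix_apply, ← AlgHom.map_det]
    rw [map_mul, map_pow, h2, h1, hTB, Matrix.det_smul, Fintype.card_fin, h3]
    have h4 : B.val tB = ι T.det / ι (T i0 j0) ^ r := htB
    rw [h4, mul_pow]
    field_simp
  have hTBs : TB.map s = P' * m σ0 * Q' := by
    simp only [TB]
    rw [Matrix.map_mul, Matrix.map_mul, wa_map_map, wa_map_map, hkk, hkk]
  have hdet0 : (P' * m σ0 * Q').det = 0 := by
    have : (TB.map s).det = s TB.det := by
      rw [← AlgHom.mapMatrix_apply, ← AlgHom.map_det]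
    rw [← hTBs, this, hdet, map_mul, hst, zero_mul]
  have hbfac : bM σ0 = P.map (algebraMap k B) * TB * Q.map (algebraMap k B) := by
    apply hmapinj
    rw [Matrix.map_mul, Matrix.map_mul, hTB, hbM, wa_map_map, wa_map_map]
    have h1 : aS σ0 = P.map (algebraMap k D.S) * T * Q.map (algebraMap k D.S) := by
      have e1 : (η σ0).map (algebraMap k D.S) =
          P.map (algebraMap k D.S) * Q.map (algebraMap k D.S) := by
        rw [← Matrix.map_mul, ← hPQ]
      have e2 : P'.map (algebraMap k D.S) * P.map (algebraMap k D.S) = 1 := by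
        rw [← Matrix.map_mul, hP, Matrix.map_one _ (map_zero _) (map_one _)]
      have e3 : Q.map (algebraMap k D.S) * Q'.map (algebraMap k D.S) = 1 := by
        rw [← Matrix.map_mul, hQ, Matrix.map_one _ (map_zero _) (map_one _)]
      simp only [T, aS]
      rw [e1]
      generalize P.map (algebraMap k D.S) = p at *
      generalize Q.map (algebraMap k D.S) = q at *
      generalize P'.map (algebraMap k D.S) = p' at *
      generalize Q'.map (algebraMap k D.S) = q' at *
      generalize D.X σ0 = x
      calc p * q * x * (p * q) = p * (1 : Matrix (Fin r) (Fin r) D.S) * q * x * (p * (1 : Matrix (Fin r) (Fin r) D.S) * q) := by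
            rw [Matrix.mul_one]
        _ = p * (p' * p) * q * x * (p * (q * q') * q) := by rw [e2, e3]
        _ = _ := by simp only [Matrix.mul_assoc]
    have h2 : a σ0 = P.map (algebraMap k K) * T.map ι * Q.map (algebraMap k K) := by
      simp only [a]
      rw [h1, Matrix.map_mul, Matrix.map_mul, wa_map_map, wa_map_map]
    rw [h2]
    simp only [Matrix.mul_smul, Matrix.smul_mul]
  have hmfac : m σ0 = P * (P' * m σ0 * Q') * Q := by
    have h1 : m σ0 = (bM σ0).map s := rfl
    rw [← hTBs, h1, hbfac]
    rw [Matrix.map_mul, Matrix.map_mul, wa_map_map, wa_map_map, hkk, hkk]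
  have hrank : (m σ0).rank < r := by
    refine lt_of_le_of_lt ?_ (wa_rank_lt_of_det _ hdet0)
    rw [hmfac]
    refine (Matrix.rank_mul_le_left _ _).trans ((Matrix.rank_mul_le_right _ _).trans ?_)
    rw [← hmfac]
  -- the product
  obtain ⟨L, hL, hY⟩ := D.connect_list hd m hm Finset.univ.toList
  refine ⟨D.Y k L m, ?_, hY, fun σ => (D.rank_Y_le m L hL σ σ0).trans_lt hrank⟩
  intro e M hM
  have hS0 : waEval M D.S (D.Y D.S L aS) = 0 := by
    apply D.ext_ev
    intro n
    rw [waEval_map]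
    have h1 : (fun σ => (D.Y D.S L aS σ).map (D.ev n)) =
        D.Y k L (fun σ => η σ * D.π σ n * η σ) := by
      funext σ
      rw [Y_map]
      congr 1
      funext τ
      exact haS τ n
    rw [h1, waEval_self]
    refine D.Y_mem_cl L _ ?_ e M hM
    exact waCl_mul D.P (η * D.P n) η (waCl_mul D.P η (D.P n) hη (waCl_self _ _)) hη
  have hK0 : waEval M K (D.Y K L a) = 0 := by
    have h1 := congrArg ι hS0
    rw [waEval_map, map_zero] at h1
    rw [← h1]
    congr 1
    funext σ
    rw [Y_map]
  have hKc : waEval M K (D.Y K L (fun σ => c σ • a σ)) = 0 := by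
    have h1 : D.Y K L (fun σ => c σ • a σ) = fun σ => (∏ i, c i) • D.Y K L a σ := by
      funext σ
      rw [Y_smul, D.prod_list_eq K c L hL]
    rw [h1, waEval_smul, hK0, mul_zero]
  have hB0 : waEval M B (D.Y B L bM) = 0 := by
    apply hBinj
    rw [waEval_map, map_zero, ← hKc]
    congr 1
    funext σ
    rw [Y_map]
    congr 1
    funext τ
    exact hbM τ
  have hk0 := congrArg s hB0
  rw [waEval_map, map_zero] at hk0
  rw [← waEval_self, ← hk0]
  congr 1
  funext σ
  rw [Y_map]

theorem reduce [Fintype I] [DecidableEq I] (σ0 : I) (η : I → Matrix (Fin d) (Fin d) k)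
    (hη : η ∈ WaCl k D.P) (hbal : ∀ σ, η σ ≠ 0) (hr : 2 ≤ (η σ0).rank) :
    ∃ η' ∈ WaCl k D.P, (∀ σ, η' σ ≠ 0) ∧ ∀ σ, (η' σ).rank < (η σ0).rank := by
  have := D.dom
  exact D.reduce_aux (FractionRing D.S) (IsFractionRing.injective _ _) σ0 η hη hbal hr

theorem exists_rank_one [Fintype I] [DecidableEq I] [Nonempty I] (hd : 0 < d) :
    ∃ η ∈ WaCl k D.P, ∀ σ, η σ ≠ 0 ∧ (η σ).rank ≤ 1 := by
  obtain ⟨σ0⟩ := ‹Nonempty I›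
  have key : ∀ r : ℕ, ∀ η ∈ WaCl k D.P, (∀ σ, η σ ≠ 0) → (η σ0).rank ≤ r →
      ∃ η ∈ WaCl k D.P, (∀ σ, η σ ≠ 0) ∧ (η σ0).rank ≤ 1 := by
    intro r
    induction r with
    | zero => intro η h1 h2 h3; exact ⟨η, h1, h2, by omega⟩
    | succ r ih =>
      intro η h1 h2 h3
      by_cases h4 : (η σ0).rank ≤ 1
      · exact ⟨η, h1, h2, h4⟩
      · obtain ⟨η', h5, h6, h7⟩ := D.reduce σ0 η h1 h2 (by omega)
        exact ih η' h5 h6 (by have := h7 σ0; omega)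
  have : Nonempty (Fin d) := ⟨⟨0, hd⟩⟩
  obtain ⟨η, h1, h2, h3⟩ := key _ (D.P 1) (waCl_self _ _) (fun σ => by
    rw [map_one]; exact one_ne_zero) le_rfl
  obtain ⟨L, hL, hY⟩ := D.connect_list hd η h2 Finset.univ.toList
  exact ⟨D.Y k L η, D.Y_mem_cl L η h1, fun σ => ⟨hY σ, (D.rank_Y_le η L hL σ σ0).trans h3⟩⟩

end WaData

end PartFourC

section PartFiveA

open Polynomial

/-- The coordinate ring of (the Zariski closure of) a linear group. -/
def waO {k G V : Type*} [Field k] [Group G] [AddCommGroup V] [Module k V]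
    (ρ : G →* Module.End k V) : Subalgebra k (G → k) :=
  Algebra.adjoin k (Set.range fun (φ : Module.Dual k (Module.End k V)) (g : G) => φ (ρ g))

variable {k G V : Type*} [Field k] [Group G] [AddCommGroup V] [Module k V]

theorem waO_mem (ρ : G →* Module.End k V) (φ : Module.Dual k (Module.End k V)) :
    (fun g => φ (ρ g)) ∈ waO ρ := Algebra.subset_adjoin ⟨φ, rfl⟩

theorem waO_fg [FiniteDimensional k V] (ρ : G →* Module.End k V) : (waO ρ).FG := by
  let T : Module.Dual k (Module.End k V) →ₗ[k] (G → k) :=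
    { toFun := fun φ g => φ (ρ g)
      map_add' := fun _ _ => rfl
      map_smul' := fun _ _ => rfl }
  have hT : (LinearMap.range T).FG := Module.Finite.iff_fg.1 inferInstance
  obtain ⟨s, hs⟩ := hT
  refine ⟨s, ?_⟩
  have h1 : waO ρ = Algebra.adjoin k (LinearMap.range T : Set (G → k)) := rfl
  rw [h1, ← hs, Algebra.adjoin_span]

theorem waO_left (ρ : G →* Module.End k V) (x : G) (f : G → k) (hf : f ∈ waO ρ) :
    (fun y => f (x * y)) ∈ waO ρ := by
  induction hf using Algebra.adjoin_induction with
  | mem f hf =>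
    obtain ⟨φ, rfl⟩ := hf
    have := waO_mem ρ (φ ∘ₗ LinearMap.mulLeft k (ρ x))
    simpa using this
  | algebraMap r => exact (waO ρ).algebraMap_mem r
  | add f g _ _ hf hg => exact (waO ρ).add_mem hf hg
  | mul f g _ _ hf hg => exact (waO ρ).mul_mem hf hg

theorem waO_right (ρ : G →* Module.End k V) (x : G) (f : G → k) (hf : f ∈ waO ρ) :
    (fun y => f (y * x)) ∈ waO ρ := by
  induction hf using Algebra.adjoin_induction with
  | mem f hf =>
    obtain ⟨φ, rfl⟩ := hf
    have := waO_mem ρ (φ ∘ₗ LinearMap.mulRight k (ρ x))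
    simpa using this
  | algebraMap r => exact (waO ρ).algebraMap_mem r
  | add f g _ _ hf hg => exact (waO ρ).add_mem hf hg
  | mul f g _ _ hf hg => exact (waO ρ).mul_mem hf hg

/-- restriction of functions to a subgroup. -/
def waRestr (k : Type*) {G : Type*} [Field k] [Group G] (H : Subgroup G) :
    (G → k) →ₐ[k] (H → k) where
  toFun f h := f h
  map_one' := rfl
  map_mul' _ _ := rfl
  map_zero' := rfl
  map_add' _ _ := rfl
  commutes' _ := rfl

/-- coordinate ring of the subgroup. -/
def waOH (ρ : G →* Module.End k V) (H : Subgroup G) : Subalgebra k (H → k) :=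
  (waO ρ).map (waRestr k H)

theorem waOH_mem (ρ : G →* Module.End k V) (H : Subgroup G)
    (φ : Module.Dual k (Module.End k V)) :
    (fun g : H => φ (ρ g)) ∈ waOH ρ H := ⟨_, waO_mem ρ φ, rfl⟩

theorem waOH_domain (ρ : G →* Module.End k V) (H : Subgroup G)
    (h : ∀ f ∈ waO ρ, ∀ g ∈ waO ρ, (∀ h ∈ H, f h * g h = 0) →
      (∀ h ∈ H, f h = 0) ∨ (∀ h ∈ H, g h = 0)) : IsDomain (waOH ρ H) := by
  have : NoZeroDivisors (waOH ρ H) := by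
    constructor
    rintro ⟨_, f, hf, rfl⟩ ⟨_, g, hg, rfl⟩ hfg
    have h0 := congrArg Subtype.val hfg
    rcases h f hf g hg (fun x hx => congrFun h0 ⟨x, hx⟩) with h1 | h1
    · left; apply Subtype.ext; funext x; exact h1 x x.2
    · right; apply Subtype.ext; funext x; exact h1 x x.2
  have : Nontrivial (waOH ρ H) := ⟨0, 1, fun h01 => by
    have := congrFun (congrArg Subtype.val h01) 1
    exact zero_ne_one this⟩
  exact NoZeroDivisors.to_isDomain _

theorem wa_exists_min [FiniteDimensional k V] [Nontrivial V] (ρ : G →* Module.End k V)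
    (H : Subgroup G) :
    ∃ R : Submodule k V, R ≠ ⊥ ∧ (∀ h ∈ H, ∀ v ∈ R, ρ h v ∈ R) ∧
      ∀ U ≤ R, (∀ h ∈ H, ∀ v ∈ U, ρ h v ∈ U) → U = ⊥ ∨ U = R := by
  obtain ⟨R, ⟨hR1, hR2⟩, hmin⟩ := (wellFounded_lt (α := Submodule k V)).has_min
    {R | R ≠ ⊥ ∧ (∀ h ∈ H, ∀ v ∈ R, ρ h v ∈ R)} ⟨⊤, top_ne_bot, fun _ _ _ _ => trivial⟩
  refine ⟨R, hR1, hR2, fun U hU hinv => ?_⟩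
  by_cases h0 : U = ⊥
  · exact Or.inl h0
  · right
    by_contra hne
    exact hmin U ⟨h0, hinv⟩ (lt_of_le_of_ne hU hne)

/-- restriction of the representation of a subgroup to a subspace. -/
def waSub (ρ : G →* Module.End k V) (H : Subgroup G) (R : Submodule k V)
    (hR : ∀ h ∈ H, ∀ v ∈ R, ρ h v ∈ R) : H →* Module.End k R where
  toFun h := (ρ h).restrict (hR h h.2)
  map_one' := by ext v; simp
  map_mul' a b := by ext v; simp

theorem waSub_apply (ρ : G →* Module.End k V) (H : Subgroup G) (R : Submodule k V)
    (hR : ∀ h ∈ H, ∀ v ∈ R, ρ h v ∈ R) (h : H) (v : R) :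
    ((waSub ρ H R hR h v : R) : V) = ρ h v := rfl

theorem waSub_span [FiniteDimensional k V] [IsAlgClosed k] (ρ : G →* Module.End k V)
    (H : Subgroup G) (R : Submodule k V)
    (hR : ∀ h ∈ H, ∀ v ∈ R, ρ h v ∈ R) (h0 : R ≠ ⊥)
    (hirr : ∀ U ≤ R, (∀ h ∈ H, ∀ v ∈ U, ρ h v ∈ U) → U = ⊥ ∨ U = R) :
    Submodule.span k (Set.range (waSub ρ H R hR)) = ⊤ := by
  have : Nontrivial R := Submodule.nontrivial_iff_ne_bot.2 h0
  apply wa_burnside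
  intro U hU
  rcases hirr (U.map R.subtype) (Submodule.map_subtype_le _ _) (by
    rintro h hh _ ⟨u, hu, rfl⟩
    exact ⟨_, hU ⟨h, hh⟩ u hu, rfl⟩) with h1 | h1
  · left
    apply Submodule.map_injective_of_injective R.injective_subtype
    rw [h1, Submodule.map_bot]
  · right
    apply Submodule.map_injective_of_injective R.injective_subtype
    rw [h1, Submodule.map_top, Submodule.range_subtype]

variable (ρ : G →* Module.End k V) (H : Subgroup G) [hH : H.Normal] (R : Submodule k V)

/-- The data needed for the reduction to rank one. -/
noncomputable def waMkData [FiniteDimensional k V] [IsAlgClosed k]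
    (hdom : IsDomain (waOH ρ H))
    (hR : ∀ h ∈ H, ∀ v ∈ R, ρ h v ∈ R) (h0 : R ≠ ⊥)
    (hirr : ∀ U ≤ R, (∀ h ∈ H, ∀ v ∈ U, ρ h v ∈ U) → U = ⊥ ∨ U = R)
    (d : ℕ) (b : Module.Basis (Fin d) k R) : WaData k H (G ⧸ H) d where
  S := waOH ρ H
  dom := hdom
  π σ := ((LinearMap.toMatrixAlgEquiv b : Module.End k R →* Matrix (Fin d) (Fin d) k).comp
    (waSub ρ H R hR)).comp (MulAut.conjNormal (σ.out)⁻¹ : H ≃* H).toMonoidHom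
  mem σ i j := by
    obtain ⟨q, hq⟩ := LinearMap.exists_leftInverse_of_injective R.subtype
      (LinearMap.ker_eq_bot.2 R.injective_subtype)
    have hq' : ∀ w : R, q w = w := fun w => LinearMap.congr_fun hq w
    let φ : Module.Dual k (Module.End k V) :=
      { toFun := fun X => b.repr (q (ρ (σ.out)⁻¹ (X (ρ σ.out (b j))))) i
        map_add' := by intro X Y; simp
        map_smul' := by intro c X; simp }
    have : (fun n : H => φ (ρ n)) = fun n => _ := rfl
    convert waOH_mem ρ H φ using 2 with n
    simp only [MonoidHom.comp_apply, φ, LinearMap.coe_mk, AddHom.coe_mk]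
    change LinearMap.toMatrixAlgEquiv b _ i j = _
    rw [LinearMap.toMatrixAlgEquiv_apply]
    congr 2
    rw [← hq' (waSub ρ H R hR _ (b j)), waSub_apply]
    simp
  span_top σ := by
    have h1 := waSub_span ρ H R hR h0 hirr
    have h2 : Set.range (((LinearMap.toMatrixAlgEquiv b :
        Module.End k R →* Matrix (Fin d) (Fin d) k).comp
        (waSub ρ H R hR)).comp (MulAut.conjNormal (σ.out)⁻¹ : H ≃* H).toMonoidHom) =
        (LinearMap.toMatrixAlgEquiv b).toLinearMap '' Set.range (waSub ρ H R hR) := by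
      ext M
      constructor
      · rintro ⟨n, rfl⟩
        exact ⟨_, ⟨_, rfl⟩, rfl⟩
      · rintro ⟨_, ⟨n, rfl⟩, rfl⟩
        refine ⟨(MulAut.conjNormal (σ.out)⁻¹ : H ≃* H).symm n, ?_⟩
        simp only [MonoidHom.comp_apply, MulEquiv.toMonoidHom_eq_coe, MonoidHom.coe_coe,
          MulEquiv.apply_symm_apply]
        rfl
    rw [h2, Submodule.span_image, h1, Submodule.map_top, LinearMap.range_eq_top]
    exact (LinearMap.toMatrixAlgEquiv b).surjective
  τ j σ := j⁻¹ * σ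
  bij σ := ((Equiv.inv (G ⧸ H)).trans (Equiv.mulRight σ)).bijective
  A j σ := LinearMap.toMatrixAlgEquiv b (waSub ρ H R hR
    ⟨(σ.out)⁻¹ * j.out * (j⁻¹ * σ).out, by
      rw [← QuotientGroup.eq_one_iff]; simp⟩)
  B j σ := LinearMap.toMatrixAlgEquiv b (waSub ρ H R hR
    ⟨((j⁻¹ * σ).out)⁻¹ * (j.out)⁻¹ * σ.out, by
      rw [← QuotientGroup.eq_one_iff]; simp⟩)
  hA j σ := ((Group.isUnit _).map (waSub ρ H R hR)).map (LinearMap.toMatrixAlgEquiv b)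
  hB j σ := ((Group.isUnit _).map (waSub ρ H R hR)).map (LinearMap.toMatrixAlgEquiv b)
  conj j n := by
    refine ⟨(MulAut.conjNormal j.out : H ≃* H) n, fun σ => ?_⟩
    change LinearMap.toMatrixAlgEquiv b (waSub ρ H R hR _) *
      LinearMap.toMatrixAlgEquiv b (waSub ρ H R hR _) *
      LinearMap.toMatrixAlgEquiv b (waSub ρ H R hR _) =
      LinearMap.toMatrixAlgEquiv b (waSub ρ H R hR _)
    rw [← map_mul, ← map_mul, ← map_mul, ← map_mul]
    congr 2
    apply Subtype.ext
    simp [MulAut.conjNormal_apply]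
    group

end PartFiveA

section PartFiveB

theorem wa_rank_one {k : Type*} [Field k] {d : ℕ} (M : Matrix (Fin d) (Fin d) k) (h0 : M ≠ 0)
    (h1 : M.rank ≤ 1) : ∃ u v : Fin d → k, ∀ i j, M i j = u i * v j := by
  obtain ⟨P, Q, P', Q', hM, _, _⟩ := wa_rank_factor M M.rank rfl
  generalize M.rank = r at *
  interval_cases r
  · exfalso
    apply h0
    rw [hM]
    ext i j
    simp [Matrix.mul_apply]
  · refine ⟨fun i => P i 0, fun j => Q 0 j, fun i j => ?_⟩
    rw [hM]
    simp [Matrix.mul_apply]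

theorem wa_rank_one_end {k R : Type*} [Field k] [AddCommGroup R] [Module k R] {d : ℕ}
    (b : Module.Basis (Fin d) k R) (F : Module.End k R)
    (h0 : LinearMap.toMatrixAlgEquiv b F ≠ 0)
    (h1 : (LinearMap.toMatrixAlgEquiv b F).rank ≤ 1) :
    ∃ (ξ : Module.Dual k R) (v : R), v ≠ 0 ∧ (∃ w, ξ w ≠ 0) ∧ ∀ w, F w = ξ w • v := by
  obtain ⟨u, c, huc⟩ := wa_rank_one _ h0 h1
  let ξ : Module.Dual k R := b.constr k c
  let v : R := ∑ i, u i • b i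
  have hF : ∀ w, F w = ξ w • v := by
    have : F = ξ.smulRight v := by
      apply b.ext
      intro j
      rw [LinearMap.smulRight_apply]
      simp only [ξ, v, Module.Basis.constr_basis]
      apply b.ext_elem
      intro i
      have := huc i j
      rw [LinearMap.toMatrixAlgEquiv_apply] at this
      rw [this]
      simp [Module.Basis.repr_self, Finsupp.single_apply, mul_comm]
    intro w
    rw [this]; rfl
  have hne : F ≠ 0 := fun h => h0 (by rw [h, map_zero])
  refine ⟨ξ, v, ?_, ?_, hF⟩
  · intro h
    apply hne
    ext w
    rw [hF, h]; simp
  · by_contra! h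
    apply hne
    ext w
    rw [hF, h]; simp

theorem waCl_span {k H E : Type*} [Field k] [AddCommGroup E] [Module k E] (P : H → E) (η : E)
    (hη : η ∈ WaCl k P) : η ∈ Submodule.span k (Set.range P) := by
  by_contra hcon
  obtain ⟨f, hf, hf'⟩ := Submodule.exists_dual_map_eq_bot_of_notMem hcon inferInstance
  apply hf
  have := hη 1 (MultilinearMap.ofSubsingleton k E k (0 : Fin 1) f) (by
    intro n
    have h1 : f (P n) ∈ (Submodule.span k (Set.range P)).map f :=
      ⟨_, Submodule.subset_span ⟨n, rfl⟩, rfl⟩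
    rw [hf'] at h1
    simpa using h1)
  simpa using this

variable {k G V : Type*} [Field k] [Group G] [AddCommGroup V] [Module k V]

theorem wa_exists_Z [FiniteDimensional k V] [Nontrivial V] [IsAlgClosed k]
    (ρ : G →* Module.End k V)
    (hspan : Submodule.span k (Set.range ρ) = ⊤) (H : Subgroup G) [hH : H.Normal]
    [hfi : H.FiniteIndex] (hdom : IsDomain (waOH ρ H)) :
    ∃ (R : G ⧸ H → Submodule k V) (Z : Module.End k V) (ξ : G ⧸ H → Module.Dual k V)
      (v : G ⧸ H → V),
      (∀ (g : G) σ, ∀ w ∈ R σ, ρ g w ∈ R ((g : G ⧸ H) * σ)) ∧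
      (∀ σ, ∀ U ≤ R σ, (∀ h ∈ H, ∀ v ∈ U, ρ h v ∈ U) → U = ⊥ ∨ U = R σ) ∧
      (∀ X : Module.End k V, (∀ σ, ∀ w ∈ R σ, X w = 0) → X = 0) ∧
      (∀ σ, v σ ∈ R σ ∧ v σ ≠ 0 ∧ (∃ w ∈ R σ, ξ σ w ≠ 0) ∧ ∀ w ∈ R σ, Z w = ξ σ w • v σ) ∧
      Z ∈ Submodule.span k (ρ '' H) ∧
      ∀ (e : ℕ) (T : Module.End k V →ₗ[k] Module.End k V) (Φ : Module.Dual k (Module.End k V)),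
        (∀ h ∈ H, Φ ((T (ρ h)) ^ e) = 0) → Φ ((T Z) ^ e) = 0 := by
  classical
  obtain ⟨R, h0, hR, hirr⟩ := wa_exists_min ρ H
  have hinv1 : ∀ (g : G) w, ρ g⁻¹ (ρ g w) = w := fun g w => by
    rw [← Module.End.mul_apply, ← map_mul]; simp
  have hinv2 : ∀ (g : G) w, ρ g (ρ g⁻¹ w) = w := fun g w => by
    rw [← Module.End.mul_apply, ← map_mul]; simp
  let d := Module.finrank k R
  have hnt : Nontrivial R := Submodule.nontrivial_iff_ne_bot.2 h0
  have hd : 0 < d := Module.finrank_pos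
  let b : Module.Basis (Fin d) k R := Module.finBasis k R
  let D := waMkData ρ H R hdom hR h0 hirr d b
  let _ : Fintype (G ⧸ H) := Fintype.ofFinite _
  obtain ⟨η, hη, hη1⟩ := D.exists_rank_one hd
  obtain ⟨q, hq⟩ := LinearMap.exists_leftInverse_of_injective R.subtype
      (LinearMap.ker_eq_bot.2 R.injective_subtype)
  have hq' : ∀ w : R, q w = w := fun w => LinearMap.congr_fun hq w
  have hq2 : ∀ w ∈ R, (q w : V) = w := fun w hw => congrArg Subtype.val (hq' ⟨w, hw⟩)
  let res0 : G ⧸ H → Module.End k V →ₗ[k] Module.End k R := fun σ =>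
    { toFun := fun X => q ∘ₗ ρ (σ.out)⁻¹ ∘ₗ X ∘ₗ ρ σ.out ∘ₗ R.subtype
      map_add' := by intro X Y; ext w; simp
      map_smul' := by intro c X; ext w; simp }
  let res : Module.End k V →ₗ[k] (G ⧸ H → Matrix (Fin d) (Fin d) k) :=
    LinearMap.pi fun σ => (LinearMap.toMatrixAlgEquiv b).toLinearMap ∘ₗ res0 σ
  have hres0 : ∀ σ X (w : R), res0 σ X w = q (ρ (σ.out)⁻¹ (X (ρ σ.out w))) := fun _ _ _ => rfl
  have hresσ : ∀ X σ, res X σ = LinearMap.toMatrixAlgEquiv b (res0 σ X) := fun _ _ => rfl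
  have hresP : ∀ n : H, res (ρ n) = D.P n := by
    intro n
    funext σ
    rw [hresσ, WaData.P_apply]
    change _ = LinearMap.toMatrixAlgEquiv b (waSub ρ H R hR _)
    congr 1
    ext w
    rw [hres0, waSub_apply]
    rw [hq2]
    · simp
    · have := hR ((σ.out)⁻¹ * n * σ.out) (by
        have := hH.conj_mem n n.2 (σ.out)⁻¹
        simpa using this) w w.2
      simpa using this
  have hcos : ∀ g : G, ∃ h ∈ H, g = (g : G ⧸ H).out * h := fun g =>
    ⟨((g : G ⧸ H).out)⁻¹ * g, by rw [← QuotientGroup.eq_one_iff]; simp, by simp⟩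
  have hsup : ∀ X : Module.End k V, (∀ σ : G ⧸ H, ∀ w ∈ R, X (ρ σ.out w) = 0) → X = 0 := by
    intro X hX
    have h1 : ∀ g : G, ∀ w ∈ R, X (ρ g w) = 0 := by
      intro g w hw
      obtain ⟨h, hh, hg⟩ := hcos g
      rw [hg, map_mul]
      exact hX _ _ (hR h hh w hw)
    have h2 : ∀ Y : Module.End k V, ∀ w ∈ R, X (Y w) = 0 := by
      intro Y w hw
      have hY : Y ∈ Submodule.span k (Set.range ρ) := by rw [hspan]; trivial
      induction hY using Submodule.span_induction with
      | mem Y hY => obtain ⟨g, rfl⟩ := hY; exact h1 g w hw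
      | zero => simp
      | add Y Y' _ _ h h' => simp [h, h']
      | smul c Y _ h => simp [h]
    obtain ⟨w0, hw0, hne⟩ := (Submodule.ne_bot_iff R).1 h0
    ext u
    obtain ⟨f, hf⟩ := Module.Projective.exists_dual_eq_one k hne
    have := h2 (f.smulRight u) w0 hw0
    simpa [hf] using this
  have hpres : ∀ X ∈ Submodule.span k (ρ '' H), ∀ σ : G ⧸ H, ∀ w ∈ R,
      ρ (σ.out)⁻¹ (X (ρ σ.out w)) ∈ R := by
    intro X hX σ w hw
    induction hX using Submodule.span_induction with
    | mem X hX =>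
      obtain ⟨n, hn, rfl⟩ := hX
      have := hR ((σ.out)⁻¹ * n * σ.out) (by
        have := hH.conj_mem n hn (σ.out)⁻¹
        simpa using this) w hw
      simpa using this
    | zero => simp
    | add X Y _ _ h h' => simpa using R.add_mem h h'
    | smul c X _ h => simpa using R.smul_mem c h
  have hinj : LinearMap.ker (res.domRestrict (Submodule.span k (ρ '' H))) = ⊥ := by
    rw [LinearMap.ker_eq_bot']
    rintro ⟨X, hX⟩ hX0
    apply Subtype.ext
    apply hsup
    intro σ w hw
    have h1 : res X σ = 0 := congrFun hX0 σ
    rw [hresσ, map_eq_zero_iff _ (LinearMap.toMatrixAlgEquiv b).injective] at h1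
    have h2 := LinearMap.congr_fun h1 ⟨w, hw⟩
    rw [hres0] at h2
    have h3 := hq2 _ (hpres X hX σ w hw)
    change (q _ : V) = _ at h3
    rw [h2] at h3
    have h4 := congrArg (ρ σ.out) h3
    rw [hinv2] at h4
    simpa using h4.symm
  obtain ⟨L', hL'⟩ := LinearMap.exists_leftInverse_of_injective _ hinj
  let L : (G ⧸ H → Matrix (Fin d) (Fin d) k) →ₗ[k] Module.End k V :=
    (Submodule.span k (ρ '' H)).subtype ∘ₗ L'
  have hLmem : ∀ y, L y ∈ Submodule.span k (ρ '' H) := fun y => (L' y).2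
  have hL : ∀ X ∈ Submodule.span k (ρ '' H), L (res X) = X := by
    intro X hX
    exact congrArg Subtype.val (LinearMap.congr_fun hL' ⟨X, hX⟩)
  have hLP : ∀ n : H, L (D.P n) = ρ n := fun n => by
    rw [← hresP]; exact hL _ (Submodule.subset_span ⟨n, n.2, rfl⟩)
  have hresZ : res (L η) = η := by
    have h1 := waCl_span _ _ hη
    clear hη hη1
    induction h1 using Submodule.span_induction with
    | mem y hy => obtain ⟨n, rfl⟩ := hy; rw [hLP, hresP]
    | zero => simp
    | add X Y _ _ h h' => rw [map_add, map_add, h, h']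
    | smul c X _ h => rw [map_smul, map_smul, h]
  have hrk : ∀ σ, ∃ (ξ : Module.Dual k R) (v : R), v ≠ 0 ∧ (∃ w, ξ w ≠ 0) ∧
      ∀ w, res0 σ (L η) w = ξ w • v := by
    intro σ
    apply wa_rank_one_end b
    · rw [← hresσ, hresZ]; exact (hη1 σ).1
    · rw [← hresσ, hresZ]; exact (hη1 σ).2
  choose ξ v hv0 hξ0 hZ using hrk
  refine ⟨fun σ => R.map (ρ σ.out), L η, fun σ => ξ σ ∘ₗ q ∘ₗ ρ (σ.out)⁻¹,
    fun σ => ρ σ.out (v σ), ?_, ?_, ?_, ?_, hLmem η, ?_⟩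
  · rintro g σ _ ⟨w, hw, rfl⟩
    obtain ⟨h, hh, hg⟩ := hcos (g * σ.out)
    refine ⟨ρ h w, hR h hh w hw, ?_⟩
    rw [← Module.End.mul_apply, ← Module.End.mul_apply, ← map_mul, ← map_mul, hg]
    simp
  · intro σ U hU hinv
    rcases hirr (U.map (ρ (σ.out)⁻¹)) (by
      rintro _ ⟨u, hu, rfl⟩
      obtain ⟨w, hw, rfl⟩ := hU hu
      rw [hinv1]; exact hw) (by
      rintro h hh _ ⟨u, hu, rfl⟩
      refine ⟨ρ (σ.out * h * (σ.out)⁻¹) u, hinv _ (hH.conj_mem h hh _) u hu, ?_⟩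
      simp [hinv1]) with h1 | h1
    · left
      rw [eq_bot_iff]
      intro u hu
      have h2 : ρ (σ.out)⁻¹ u ∈ U.map (ρ (σ.out)⁻¹) := ⟨u, hu, rfl⟩
      rw [h1, Submodule.mem_bot] at h2
      rw [Submodule.mem_bot, ← hinv2 σ.out u, h2, map_zero]
    · right
      apply le_antisymm hU
      rintro _ ⟨w, hw, rfl⟩
      rw [SetLike.mem_coe, ← h1] at hw
      obtain ⟨u, hu, rfl⟩ := hw
      rw [hinv2]; exact hu
  · intro X hX
    exact hsup X fun σ w hw => hX σ _ ⟨w, hw, rfl⟩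
  · intro σ
    refine ⟨⟨_, (v σ).2, rfl⟩, ?_, ?_, ?_⟩
    · intro h
      apply hv0 σ
      apply Subtype.ext
      have := congrArg (ρ (σ.out)⁻¹) h
      rw [hinv1] at this
      simpa using this
    · obtain ⟨w, hw⟩ := hξ0 σ
      refine ⟨_, ⟨w, w.2, rfl⟩, ?_⟩
      change ξ σ (q (ρ (σ.out)⁻¹ (ρ σ.out w))) ≠ 0
      rw [hinv1, hq']; exact hw
    · rintro _ ⟨w, hw, rfl⟩
      change _ = ξ σ (q (ρ (σ.out)⁻¹ (ρ σ.out w))) • _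
      rw [hinv1]
      have h1 := hZ σ ⟨w, hw⟩
      rw [hres0] at h1
      have h2 := hq2 _ (hpres (L η) (hLmem η) σ w hw)
      change (q (ρ (σ.out)⁻¹ (L η (ρ σ.out w))) : V) = _ at h2
      change q (ρ (σ.out)⁻¹ (L η (ρ σ.out w))) = _ at h1
      rw [h1] at h2
      have h3 := congrArg (ρ σ.out) h2
      rw [hinv2] at h3
      rw [← h3, hq' ⟨w, hw⟩]
      simp
  · intro e T Φ hΦ
    have := hη e ((Φ.compMultilinearMap (MultilinearMap.mkPiAlgebraFin k e
      (Module.End k V))).compLinearMap (fun _ => T ∘ₗ L)) (by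
      intro n
      have := hΦ n n.2
      simpa [hLP] using this)
    simpa using this

end PartFiveB

section PartFiveC

open Polynomial

theorem wa_sep {k : Type*} [Field k] (m : ℕ) (hm0 : 0 < m) (hm : (m : k) ≠ 0) (s : Finset k)
    (hs : (0 : k) ∉ s) : ((X : k[X]) * ∏ t ∈ s, (X ^ m - C t)).Separable := by
  have h0 : ∀ t ∈ s, t ≠ 0 := fun t ht h => hs (h ▸ ht)
  refine Separable.mul separable_X ?_ ?_
  · refine separable_prod' ?_ ?_
    · intro x _ y _ hxy
      have hne : y - x ≠ 0 := sub_ne_zero.2 hxy.symm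
      refine ⟨C (y - x)⁻¹, - C (y - x)⁻¹, ?_⟩
      have : C (y - x)⁻¹ * C (y - x) = (1 : k[X]) := by
        rw [← C_mul, inv_mul_cancel₀ hne, C_1]
      rw [C_sub] at this
      linear_combination this
    · intro x hx
      exact separable_X_pow_sub_C x hm (h0 x hx)
  · refine IsCoprime.prod_right fun t ht => ?_
    obtain ⟨m', rfl⟩ := Nat.exists_eq_add_of_lt hm0
    refine ⟨X ^ m' * C t⁻¹, - C t⁻¹, ?_⟩
    have : C t⁻¹ * C t = (1 : k[X]) := by
      rw [← C_mul, inv_mul_cancel₀ (h0 t ht), C_1]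
    simp only [zero_add, pow_succ]
    linear_combination this

theorem wa_kill {k V I : Type*} [Field k] [AddCommGroup V] [Module k V] [Fintype I]
    [DecidableEq k]
    (R : I → Submodule k V)
    (hsup : ∀ X : Module.End k V, (∀ σ, ∀ w ∈ R σ, X w = 0) → X = 0) (T : Module.End k V)
    (y : I → V) (c : I → V → k) (hT : ∀ σ, ∀ w ∈ R σ, T w = c σ w • y σ) (m : ℕ) (t : I → k)
    (ht : ∀ σ, (T ^ m) (y σ) = t σ • y σ) :
    aeval T ((X : k[X]) * ∏ a ∈ Finset.univ.image t, (X ^ m - C a)) = 0 := by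
  apply hsup
  intro σ w hw
  have h1 : (X : k[X]) * ∏ a ∈ Finset.univ.image t, (X ^ m - C a) =
      (∏ a ∈ (Finset.univ.image t).erase (t σ), (X ^ m - C a)) * (X ^ m - C (t σ)) * X := by
    rw [Finset.prod_erase_mul _ _ (Finset.mem_image_of_mem _ (Finset.mem_univ σ)), mul_comm]
  rw [h1, map_mul, map_mul, Module.End.mul_apply, Module.End.mul_apply]
  have h2 : aeval T (X ^ m - C (t σ)) (aeval T (X : k[X]) w) = 0 := by
    simp [hT σ w hw, ht σ, Module.algebraMap_end_apply]
  rw [h2, map_zero]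

variable {k G V : Type*} [Field k] [Group G] [AddCommGroup V] [Module k V]

theorem wa_one_mem [FiniteDimensional k V] (ρ : G →* Module.End k V) (H : Subgroup G)
    {I : Type*} [Fintype I] (R : I → Submodule k V)
    (hinv : ∀ h ∈ H, ∀ σ, ∀ w ∈ R σ, ρ h w ∈ R σ)
    (hirr : ∀ σ, ∀ U ≤ R σ, (∀ h ∈ H, ∀ v ∈ U, ρ h v ∈ U) → U = ⊥ ∨ U = R σ)
    (hsup : ∀ X : Module.End k V, (∀ σ, ∀ w ∈ R σ, X w = 0) → X = 0)
    (Z : Module.End k V) (ξ : I → Module.Dual k V) (v : I → V)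
    (hZ : ∀ σ, v σ ∈ R σ ∧ v σ ≠ 0 ∧ (∃ w ∈ R σ, ξ σ w ≠ 0) ∧ ∀ w ∈ R σ, Z w = ξ σ w • v σ)
    (hZA : Z ∈ Submodule.span k (ρ '' H)) :
    (1 : Module.End k V) ∈
      Submodule.span k {x | ∃ n ∈ H, ∃ n' ∈ H, x = ρ n * Z * ρ n'} := by
  classical
  set J := Submodule.span k {x | ∃ n ∈ H, ∃ n' ∈ H, x = ρ n * Z * ρ n'} with hJ
  -- cyclicity
  have hcyc : ∀ σ, ∀ u ∈ R σ, u ≠ 0 → Submodule.span k {x | ∃ h ∈ H, x = ρ h u} = R σ := by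
    intro σ u hu hu0
    rcases hirr σ (Submodule.span k {x | ∃ h ∈ H, x = ρ h u}) (by
      rw [Submodule.span_le]
      rintro _ ⟨h, hh, rfl⟩
      exact hinv h hh σ u hu) (by
      intro h hh w hw
      induction hw using Submodule.span_induction with
      | mem w hw =>
        obtain ⟨h', hh', rfl⟩ := hw
        exact Submodule.subset_span ⟨h * h', H.mul_mem hh hh', by simp⟩
      | zero => simp
      | add a b _ _ ha hb => rw [map_add]; exact Submodule.add_mem _ ha hb
      | smul c a _ ha => rw [map_smul]; exact Submodule.smul_mem _ _ ha) with h1 | h1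
    · exfalso
      apply hu0
      have : u ∈ Submodule.span k {x | ∃ h ∈ H, x = ρ h u} :=
        Submodule.subset_span ⟨1, H.one_mem, by simp⟩
      rw [h1] at this
      simpa using this
    · exact h1
  -- stability
  have hJA : J ≤ Submodule.span k (ρ '' H) := by
    rw [hJ, Submodule.span_le]
    rintro _ ⟨n, hn, n', hn', rfl⟩
    have h1 : ∀ Y ∈ Submodule.span k (ρ '' H),
        ρ n * Y * ρ n' ∈ Submodule.span k (ρ '' H) := by
      intro Y hY
      induction hY using Submodule.span_induction with
      | mem Y hY =>
        obtain ⟨h, hh, rfl⟩ := hY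
        exact Submodule.subset_span ⟨n * h * n', H.mul_mem (H.mul_mem hn hh) hn', by simp⟩
      | zero => simp
      | add a b _ _ ha hb => rw [mul_add, add_mul]; exact Submodule.add_mem _ ha hb
      | smul c a _ ha =>
        rw [mul_smul_comm, smul_mul_assoc]; exact Submodule.smul_mem _ _ ha
    exact h1 Z hZA
  have hAinv : ∀ Y ∈ Submodule.span k (ρ '' H), ∀ σ, ∀ w ∈ R σ, Y w ∈ R σ := by
    intro Y hY σ w hw
    induction hY using Submodule.span_induction with
    | mem Y hY => obtain ⟨h, hh, rfl⟩ := hY; exact hinv h hh σ w hw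
    | zero => simp
    | add a b _ _ ha hb => rw [LinearMap.add_apply]; exact Submodule.add_mem _ ha hb
    | smul c a _ ha => rw [LinearMap.smul_apply]; exact Submodule.smul_mem _ _ ha
  have hideal : ∀ Y ∈ Submodule.span k (ρ '' H), ∀ j ∈ J, Y * j ∈ J := by
    intro Y hY j hj
    induction hY using Submodule.span_induction with
    | mem Y hY =>
      obtain ⟨h, hh, rfl⟩ := hY
      induction hj using Submodule.span_induction with
      | mem j hj =>
        obtain ⟨n, hn, n', hn', rfl⟩ := hj
        exact Submodule.subset_span ⟨h * n, H.mul_mem hh hn, n', hn', by simp [mul_assoc]⟩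
      | zero => simp
      | add a b _ _ ha hb => rw [mul_add]; exact Submodule.add_mem _ ha hb
      | smul c a _ ha => rw [mul_smul_comm]; exact Submodule.smul_mem _ _ ha
    | zero => simp
    | add a b _ _ ha hb => rw [add_mul]; exact Submodule.add_mem _ ha hb
    | smul c a _ ha => rw [smul_mul_assoc]; exact Submodule.smul_mem _ _ ha
  -- identity on one component
  have hid : ∀ σ, ∃ j ∈ J, ∀ w ∈ R σ, j w = w := by
    intro σ
    obtain ⟨hv, hv0, ⟨w0, hw0, hξ0⟩, hZw⟩ := hZ σ
    have hstep1 : ∀ n' ∈ H, ∀ u ∈ R σ, ∃ j ∈ J, ∀ w ∈ R σ, j w = ξ σ (ρ n' w) • u := by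
      intro n' hn' u hu
      rw [← hcyc σ _ hv hv0] at hu
      induction hu using Submodule.span_induction with
      | mem u hu =>
        obtain ⟨n, hn, rfl⟩ := hu
        refine ⟨ρ n * Z * ρ n', Submodule.subset_span ⟨n, hn, n', hn', rfl⟩, fun w hw => ?_⟩
        simp only [Module.End.mul_apply]
        rw [hZw _ (hinv n' hn' σ w hw), map_smul]
      | zero => exact ⟨0, J.zero_mem, by simp⟩
      | add a b _ _ ha hb =>
        obtain ⟨j, hj, hj'⟩ := ha
        obtain ⟨i, hi, hi'⟩ := hb
        exact ⟨j + i, J.add_mem hj hi, fun w hw => by simp [hj' w hw, hi' w hw]⟩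
      | smul c a _ ha =>
        obtain ⟨j, hj, hj'⟩ := ha
        exact ⟨c • j, J.smul_mem c hj, fun w hw => by simp [hj' w hw, smul_comm c]⟩
    let Ξ : Submodule k (Module.Dual k (R σ)) :=
      Submodule.span k {f | ∃ h ∈ H, f = ξ σ ∘ₗ ρ h ∘ₗ (R σ).subtype}
    have hΞ : Ξ = ⊤ := by
      have h1 : Ξ.dualCoannihilator = ⊥ := by
        rw [eq_bot_iff]
        intro w hw
        rw [Submodule.mem_bot]
        by_contra hw'
        have hw'' : (w : V) ≠ 0 := fun h => hw' (Subtype.ext h)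
        rw [← hcyc σ w w.2 hw''] at hw0
        apply hξ0
        induction hw0 using Submodule.span_induction with
        | mem u hu =>
          obtain ⟨h, hh, rfl⟩ := hu
          rw [Submodule.mem_dualCoannihilator] at hw
          exact hw _ (Submodule.subset_span ⟨h, hh, rfl⟩)
        | zero => simp
        | add a b _ _ ha hb =>
          by_cases h1 : ξ σ a = 0
          · by_cases h2 : ξ σ b = 0
            · simp [h1, h2]
            · exact absurd (hb h2) h2
          · exact absurd (ha h1) h1
        | smul c a _ ha =>
          by_cases h1 : ξ σ a = 0
          · simp [h1]
          · exact absurd (ha h1) h1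
      have h2 := Subspace.dualCoannihilator_dualAnnihilator_eq (W := Ξ)
      rw [← h2, h1, Submodule.dualAnnihilator_bot]
    have hstep2 : ∀ f : Module.Dual k (R σ), ∀ u ∈ R σ, ∃ j ∈ J, ∀ w : R σ, j w = f w • u := by
      intro f u hu
      have hf : f ∈ Ξ := by rw [hΞ]; trivial
      induction hf using Submodule.span_induction with
      | mem f hf =>
        obtain ⟨h, hh, rfl⟩ := hf
        obtain ⟨j, hj, hj'⟩ := hstep1 h hh u hu
        exact ⟨j, hj, fun w => hj' w w.2⟩
      | zero => exact ⟨0, J.zero_mem, by simp⟩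
      | add a b _ _ ha hb =>
        obtain ⟨j, hj, hj'⟩ := ha
        obtain ⟨i, hi, hi'⟩ := hb
        exact ⟨j + i, J.add_mem hj hi, fun w => by simp [hj', hi', add_smul]⟩
      | smul c a _ ha =>
        obtain ⟨j, hj, hj'⟩ := ha
        exact ⟨c • j, J.smul_mem c hj, fun w => by simp [hj', mul_smul]⟩
    let b := Module.finBasis k (R σ)
    choose j hj hj' using fun i => hstep2 (b.coord i) (b i) (b i).2
    refine ⟨∑ i, j i, J.sum_mem fun i _ => hj i, fun w hw => ?_⟩
    rw [LinearMap.sum_apply]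
    have h1 := congrArg Subtype.val (b.sum_repr ⟨w, hw⟩)
    simp only [AddSubmonoidClass.coe_finsetSum, Submodule.coe_smul] at h1
    conv_rhs => rw [← h1]
    exact Finset.sum_congr rfl fun i _ => hj' i ⟨w, hw⟩
  have hall : ∀ s : Finset I, ∃ j ∈ J, ∀ σ ∈ s, ∀ w ∈ R σ, j w = w := by
    intro s
    induction s using Finset.induction_on with
    | empty => exact ⟨0, J.zero_mem, by simp⟩
    | insert σ s hσ ih =>
      obtain ⟨x, hx, hx'⟩ := ih
      obtain ⟨j, hj, hj'⟩ := hid σ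
      refine ⟨x + j - x * j, J.sub_mem (J.add_mem hx hj) (hideal x (hJA hx) j hj), ?_⟩
      intro τ hτ w hw
      rcases Finset.mem_insert.1 hτ with rfl | hτ
      · simp [hj' w hw]
      · simp [hx' τ hτ w hw, hx' τ hτ (j w) (hAinv j (hJA hj) τ w hw)]
  obtain ⟨j, hj, hj'⟩ := hall Finset.univ
  have : j - 1 = 0 := by
    apply hsup
    intro σ w hw
    simp [hj' σ (Finset.mem_univ σ) w hw]
  rw [← sub_eq_zero.1 this]
  exact hj

end PartFiveC

section PartFiveD

open Polynomial

variable {k G V : Type*} [Field k] [Group G] [AddCommGroup V] [Module k V]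

theorem wa_thmA_aux [FiniteDimensional k V] [Nontrivial V] [IsAlgClosed k] (p : ℕ)
    [hp : Fact p.Prime] [CharP k p]
    (ρ : G →* Module.End k V)
    (hspan : Submodule.span k (Set.range ρ) = ⊤) (H : Subgroup G) [hH : H.Normal]
    [hfi : H.FiniteIndex] (hdom : IsDomain (waOH ρ H))
    (Φ : Module.Dual k (Module.End k V))
    (hΦ : ∀ g, (minpoly k (ρ g)).Separable → Φ (ρ g) = 0)
    (x : G) (m : ℕ) (hm0 : 0 < m) (hm : ¬ p ∣ m) (hx : x ^ m ∈ H) : Φ (ρ x) = 0 := by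
  classical
  obtain ⟨R, Z, ξ, v, hmove, hirr, hsup, hZ, hZA, hcl⟩ := wa_exists_Z ρ hspan H hdom
  let _ : Fintype (G ⧸ H) := Fintype.ofFinite _
  have hHone : ∀ h ∈ H, ((h : G) : G ⧸ H) = 1 := fun h hh => (QuotientGroup.eq_one_iff h).2 hh
  have hinv : ∀ h ∈ H, ∀ σ, ∀ w ∈ R σ, ρ h w ∈ R σ := by
    intro h hh σ w hw
    have := hmove h σ w hw
    rwa [hHone h hh, one_mul] at this
  have hone := wa_one_mem ρ H R hinv hirr hsup Z ξ v hZ hZA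
  have hxm : ((x : G ⧸ H)) ^ m = 1 := by
    rw [← QuotientGroup.mk_pow]; exact hHone _ hx
  have hmk : (m : k) ≠ 0 := by
    rw [Ne, CharP.cast_eq_zero_iff k p]; exact hm
  obtain ⟨a, ha⟩ : ∃ a, Module.finrank k V ≤ p ^ a :=
    ⟨Module.finrank k V, (Nat.lt_pow_self hp.out.one_lt).le⟩
  -- vanishing for a fixed pair
  have hpair : ∀ n ∈ H, ∀ n' ∈ H,
      (∀ σ, ξ ((x : G ⧸ H) * σ) (ρ n' (ρ x (ρ n (v σ)))) ≠ 0) →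
      Φ (ρ x * (ρ n * Z * ρ n')) = 0 := by
    intro n hn n' hn' hl
    set T := ρ x * (ρ n * Z * ρ n') with hT
    let y : G ⧸ H → V := fun σ => ρ x (ρ n (v σ))
    let l : G ⧸ H → k := fun σ => ξ ((x : G ⧸ H) * σ) (ρ n' (y σ))
    have hy : ∀ σ, y σ ∈ R ((x : G ⧸ H) * σ) := fun σ =>
      hmove x σ _ (hinv n hn σ _ (hZ σ).1)
    have hTw : ∀ σ, ∀ w ∈ R σ, T w = ξ σ (ρ n' w) • y σ := by
      intro σ w hw
      simp only [hT, Module.End.mul_apply]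
      rw [(hZ σ).2.2.2 _ (hinv n' hn' σ w hw)]
      simp [y]
    have hTy : ∀ σ, T (y σ) = l σ • y ((x : G ⧸ H) * σ) := fun σ => hTw _ _ (hy σ)
    have hTp : ∀ (j : ℕ) σ, (T ^ j) (y σ) =
        (∏ i ∈ Finset.range j, l ((x : G ⧸ H) ^ i * σ)) • y ((x : G ⧸ H) ^ j * σ) := by
      intro j
      induction j with
      | zero => intro σ; simp
      | succ j ih =>
        intro σ
        rw [pow_succ', Module.End.mul_apply, ih, map_smul, hTy, smul_smul,
          Finset.prod_range_succ, ← mul_assoc, ← pow_succ']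
    have hsepP := wa_sep m hm0 hmk
      (Finset.univ.image fun σ => ∏ i ∈ Finset.range m, l ((x : G ⧸ H) ^ i * σ)) (by
        intro h
        obtain ⟨σ, _, h0⟩ := Finset.mem_image.1 h
        obtain ⟨i, _, hi⟩ := Finset.prod_eq_zero_iff.1 h0
        exact hl _ hi)
    have hkill := wa_kill R hsup T y (fun σ w => ξ σ (ρ n' w)) hTw m
      (fun σ => ∏ i ∈ Finset.range m, l ((x : G ⧸ H) ^ i * σ)) (by
        intro σ
        rw [hTp, hxm, one_mul])
    have hmem := wa_L2 p T a _ hsepP hkill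
    suffices hle : Submodule.span k {z | ∃ i : ℕ, 0 < i ∧ z = T ^ (p ^ a * i)} ≤
        LinearMap.ker Φ from hle hmem
    rw [Submodule.span_le]
    rintro _ ⟨i, hi, rfl⟩
    let M : Module.End k V →ₗ[k] Module.End k V :=
      LinearMap.mulLeft k (ρ x * ρ n) ∘ₗ LinearMap.mulRight k (ρ n')
    have hM : ∀ Y, M Y = ρ x * (ρ n * Y * ρ n') := by
      intro Y
      simp [M, mul_assoc]
    have := hcl (p ^ a * i) M Φ (by
      intro h hh
      rw [hM]
      have h1 : (ρ x * (ρ n * ρ h * ρ n')) ^ (p ^ a * i) =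
          ρ ((x * (n * h * n')) ^ (p ^ a * i)) := by simp
      rw [h1]
      apply hΦ
      rw [mul_comm, pow_mul, map_pow]
      exact wa_L1 p _ a ha)
    rwa [hM] at this
  -- vanishing for all pairs
  have hall : ∀ n ∈ H, ∀ n' ∈ H, Φ (ρ x * (ρ n * Z * ρ n')) = 0 := by
    intro n hn n' hn'
    let F : waOH ρ H := ⟨_, waOH_mem ρ H
      (Φ ∘ₗ LinearMap.mulLeft k (ρ x) ∘ₗ LinearMap.mulRight k (Z * ρ n'))⟩
    have hF : ∀ n : H, (F : H → k) n = Φ (ρ x * (ρ n * Z * ρ n')) := by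
      intro n
      simp [F, mul_assoc]
    let f : G ⧸ H → waOH ρ H := fun σ => ⟨_, waOH_mem ρ H
      (ξ ((x : G ⧸ H) * σ) ∘ₗ ρ n' ∘ₗ ρ x ∘ₗ LinearMap.applyₗ (v σ))⟩
    have hf : ∀ σ (n : H), (f σ : H → k) n =
        ξ ((x : G ⧸ H) * σ) (ρ n' (ρ x (ρ n (v σ)))) := fun σ n => rfl
    have hprod : ∀ (s : Finset (G ⧸ H)) (n : H),
        ((∏ σ ∈ s, f σ : waOH ρ H) : H → k) n = ∏ σ ∈ s, (f σ : H → k) n := by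
      intro s n
      rw [SubmonoidClass.coe_finsetProd, Finset.prod_apply]
    have h0 : F * ∏ σ, f σ = 0 := by
      apply Subtype.ext
      funext n
      change (F : H → k) n * ((∏ σ, f σ : waOH ρ H) : H → k) n = 0
      rw [hprod]
      by_cases hz : ∏ σ, (f σ : H → k) n = 0
      · rw [hz, mul_zero]
      · rw [← Ne, Finset.prod_ne_zero_iff] at hz
        rw [hF, hpair n n.2 n' hn' (fun σ => hz σ (Finset.mem_univ σ)), zero_mul]
    have hfne : ∀ σ, f σ ≠ 0 := by
      intro σ hσ
      obtain ⟨hv, hv0, _, _⟩ := hZ σ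
      obtain ⟨_, _, ⟨w, hw, hξw⟩, _⟩ := hZ ((x : G ⧸ H) * σ)
      have hker : ∀ n ∈ H, ξ ((x : G ⧸ H) * σ) (ρ n' (ρ x (ρ n (v σ)))) = 0 := by
        intro n hn
        rw [← hf σ ⟨n, hn⟩, hσ]; rfl
      let U : Submodule k V := Submodule.span k {y | ∃ h ∈ H, y = ρ h (v σ)}
      have hU : U = R σ := by
        rcases hirr σ U (by
          rw [Submodule.span_le]
          rintro _ ⟨h, hh, rfl⟩
          exact hinv h hh σ _ hv) (by
          intro h hh w hw
          induction hw using Submodule.span_induction with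
          | mem w hw =>
            obtain ⟨h', hh', rfl⟩ := hw
            exact Submodule.subset_span ⟨h * h', H.mul_mem hh hh', by simp⟩
          | zero => simp
          | add a b _ _ ha hb => rw [map_add]; exact Submodule.add_mem _ ha hb
          | smul c a _ ha => rw [map_smul]; exact Submodule.smul_mem _ _ ha) with h1 | h1
        · exfalso
          apply hv0
          have : v σ ∈ U := Submodule.subset_span ⟨1, H.one_mem, by simp⟩
          rw [h1] at this
          simpa using this
        · exact h1
      have hUker : U ≤ LinearMap.ker (ξ ((x : G ⧸ H) * σ) ∘ₗ ρ n' ∘ₗ ρ x) := by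
        rw [Submodule.span_le]
        rintro _ ⟨h, hh, rfl⟩
        exact hker h hh
      have hw' : ρ (n' * x)⁻¹ w ∈ U := by
        rw [hU]
        have := hmove (n' * x)⁻¹ _ w hw
        simpa [hHone n' hn'] using this
      have h2 := hUker hw'
      apply hξw
      have h3 : ρ n' (ρ x (ρ (n' * x)⁻¹ w)) = w := by
        rw [← Module.End.mul_apply, ← Module.End.mul_apply, ← map_mul, ← map_mul]
        simp
      rw [LinearMap.mem_ker] at h2
      change ξ _ (ρ n' (ρ x (ρ (n' * x)⁻¹ w))) = 0 at h2
      rwa [h3] at h2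
    have := hdom
    have hF0 : F = 0 := by
      rcases mul_eq_zero.1 h0 with h | h
      · exact h
      · exact absurd h (Finset.prod_ne_zero_iff.2 fun σ _ => hfne σ)
    rw [← hF ⟨n, hn⟩, hF0]; rfl
  have hle : Submodule.span k {x | ∃ n ∈ H, ∃ n' ∈ H, x = ρ n * Z * ρ n'} ≤
      LinearMap.ker (Φ ∘ₗ LinearMap.mulLeft k (ρ x)) := by
    rw [Submodule.span_le]
    rintro _ ⟨n, hn, n', hn', rfl⟩
    exact hall n hn n' hn'
  have := hle hone
  simpa using this

theorem wa_thmA [FiniteDimensional k V] [Nontrivial V] [IsAlgClosed k] (p : ℕ)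
    [hp : Fact p.Prime] [CharP k p]
    (ρ : G →* Module.End k V)
    (hspan : Submodule.span k (Set.range ρ) = ⊤) :
    ∃ H : Subgroup G, H.Normal ∧ H.FiniteIndex ∧
      (∀ x ∉ H, ∃ f ∈ waO ρ, (∀ h ∈ H, f h = 0) ∧ f x ≠ 0) ∧
      ∀ Φ : Module.Dual k (Module.End k V),
        (∀ g, (minpoly k (ρ g)).Separable → Φ (ρ g) = 0) →
        ∀ (x : G) (m : ℕ), 0 < m → ¬ p ∣ m → x ^ m ∈ H → Φ (ρ x) = 0 := by
  obtain ⟨H, h1, h2, h3, h4⟩ := wa_conn3 (waO ρ) (waO_fg ρ) (waO_left ρ) (waO_right ρ)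
  exact ⟨H, h1, h2, h3, fun Φ hΦ x m hm0 hm hx =>
    wa_thmA_aux p ρ hspan H (waOH_domain ρ H h4) Φ hΦ x m hm0 hm hx⟩

end PartFiveD

section PartSixA

open Polynomial

/-- exponential sequences -/
def waExp (k : Type*) [Field k] : Submodule k (Multiplicative ℕ → k) :=
  Submodule.span k (Set.range fun χ : Multiplicative ℕ →* k => (χ : Multiplicative ℕ → k))

theorem waExp_mul {k : Type*} [Field k] (f g : Multiplicative ℕ → k) (hf : f ∈ waExp k)
    (hg : g ∈ waExp k) : f * g ∈ waExp k := by
  induction hf using Submodule.span_induction with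
  | mem f hf =>
    obtain ⟨χ, rfl⟩ := hf
    induction hg using Submodule.span_induction with
    | mem g hg =>
      obtain ⟨ψ, rfl⟩ := hg
      exact Submodule.subset_span ⟨χ * ψ, rfl⟩
    | zero => rw [mul_zero]; exact Submodule.zero_mem _
    | add a b _ _ ha hb => rw [mul_add]; exact Submodule.add_mem _ ha hb
    | smul c a _ ha => rw [mul_smul_comm]; exact Submodule.smul_mem _ _ ha
  | zero => rw [zero_mul]; exact Submodule.zero_mem _
  | add a b _ _ ha hb => rw [add_mul]; exact Submodule.add_mem _ ha hb
  | smul c a _ ha => rw [smul_mul_assoc]; exact Submodule.smul_mem _ _ ha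

theorem wa_interp {k A : Type*} [Field k] [IsAlgClosed k] [Ring A] [Algebra k A] (f : A)
    (P : k[X]) (hP : P.Separable) (hf : aeval f P = 0) :
    ∃ (s : Finset k) (B : k → A), ∀ e : ℕ, f ^ e = ∑ c ∈ s, c ^ e • B c := by
  classical
  refine ⟨P.roots.toFinset, fun c => aeval f (Lagrange.basis P.roots.toFinset id c), fun e => ?_⟩
  set L := Lagrange.interpolate P.roots.toFinset (id : k → k) (fun c => c ^ e) with hL
  have hev : ∀ c ∈ P.roots.toFinset, L.eval c = c ^ e := by
    intro c hc
    exact Lagrange.eval_interpolate_at_node (fun c => c ^ e) Function.injective_id.injOn hc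
  have hdvd : P ∣ X ^ e - L := by
    have hP0 : P ≠ 0 := hP.ne_zero
    have hsplit : P.Splits := IsAlgClosed.splits P
    have h1 := hsplit.eq_prod_roots
    have hnd : P.roots.Nodup := nodup_roots hP
    rw [h1]
    rw [IsUnit.mul_left_dvd (isUnit_C.2 (by simpa using hP0))]
    have : (P.roots.map (fun c => X - C c)).prod = ∏ c ∈ P.roots.toFinset, (X - C c) := by
      rw [Finset.prod_multiset_map_count]
      refine Finset.prod_congr rfl fun c hc => ?_
      rw [Multiset.count_eq_one_of_mem hnd (Multiset.mem_toFinset.1 hc), pow_one]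
    rw [this]
    refine Finset.prod_dvd_of_coprime ?_ ?_
    · intro x _ y _ hxy
      exact isCoprime_X_sub_C_of_isUnit_sub (sub_ne_zero.2 hxy).isUnit
    · intro c hc
      rw [dvd_iff_isRoot]
      simp only [IsRoot, eval_sub, eval_pow, eval_X]
      rw [hev c hc, sub_self]
  have h0 := aeval_eq_zero_of_dvd_aeval_eq_zero hdvd hf
  rw [map_sub, map_pow, aeval_X, sub_eq_zero] at h0
  rw [h0, hL, Lagrange.interpolate_apply, map_sum]
  refine Finset.sum_congr rfl fun c _ => ?_
  rw [map_mul, aeval_C, Algebra.smul_def]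

variable {k G V : Type*} [Field k] [Group G] [AddCommGroup V] [Module k V]

theorem wa_exp_mem [IsAlgClosed k] [FiniteDimensional k V] (ρ : G →* Module.End k V) (n : G)
    (hn : (minpoly k (ρ n)).Separable) (f : G → k) (hf : f ∈ waO ρ) :
    (fun e : Multiplicative ℕ => f (n ^ e.toAdd)) ∈ waExp k := by
  induction hf using Algebra.adjoin_induction with
  | mem f hf =>
    obtain ⟨φ, rfl⟩ := hf
    obtain ⟨s, B, hB⟩ := wa_interp (ρ n) _ hn (minpoly.aeval k (ρ n))
    have : (fun e : Multiplicative ℕ => φ (ρ (n ^ e.toAdd))) =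
        ∑ c ∈ s, φ (B c) • ((powersHom k c : Multiplicative ℕ →* k) : Multiplicative ℕ → k) := by
      funext e
      rw [map_pow, hB, map_sum, Finset.sum_apply]
      refine Finset.sum_congr rfl fun c _ => ?_
      simp [powersHom_apply, mul_comm]
    rw [this]
    exact Submodule.sum_mem _ fun c _ => Submodule.smul_mem _ _ (Submodule.subset_span ⟨_, rfl⟩)
  | algebraMap r =>
    have : (fun e : Multiplicative ℕ => (algebraMap k (G → k) r) (n ^ e.toAdd)) =
        r • ((1 : Multiplicative ℕ →* k) : Multiplicative ℕ → k) := by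
      funext e; simp
    rw [this]
    exact Submodule.smul_mem _ _ (Submodule.subset_span ⟨1, rfl⟩)
  | add f g _ _ hf hg => exact Submodule.add_mem _ hf hg
  | mul f g _ _ hf hg => exact waExp_mul _ _ hf hg

theorem wa_exp_zero [IsAlgClosed k] (p : ℕ) [Fact p.Prime] [CharP k p] (a : ℕ)
    (u : Multiplicative ℕ → k) (hu : u ∈ waExp k) (h0 : ∀ e, u (e ^ p ^ a) = 0) : u = 0 := by
  classical
  obtain ⟨c, rfl⟩ := (Finsupp.mem_span_range_iff_exists_finsupp).1 hu
  let F : (Multiplicative ℕ →* k) → (Multiplicative ℕ →* k) := fun χ => χ ^ p ^ a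
  have hF : Function.Injective F := by
    intro χ ψ h
    ext1
    have h1 := DFunLike.congr_fun h (Multiplicative.ofAdd 1)
    exact iterateFrobenius_inj k p a (by simpa [iterateFrobenius_def, F] using h1)
  have hli := (linearIndependent_monoidHom (Multiplicative ℕ) k).comp F hF
  have hc : c = 0 := by
    rw [linearIndependent_iff] at hli
    apply hli
    funext e
    have := h0 e
    rw [Finsupp.linearCombination_apply]
    simpa [Finsupp.sum, Finset.sum_apply, F] using this
  rw [hc]; simp

theorem wa_pprime [IsAlgClosed k] [FiniteDimensional k V] (p : ℕ) [hp : Fact p.Prime] [CharP k p]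
    (ρ : G →* Module.End k V) (H : Subgroup G) [H.Normal] [H.FiniteIndex]
    (hH : ∀ x ∉ H, ∃ f ∈ waO ρ, (∀ h ∈ H, f h = 0) ∧ f x ≠ 0)
    (n : G) (hn : (minpoly k (ρ n)).Separable) : ∃ m, 0 < m ∧ ¬ p ∣ m ∧ n ^ m ∈ H := by
  have hfin : Nat.card (G ⧸ H) ≠ 0 := Nat.card_pos.ne'
  obtain ⟨a, m, hm, hN⟩ := Nat.exists_eq_pow_mul_and_not_dvd hfin p hp.out.ne_one
  have hm0 : 0 < m := Nat.pos_of_ne_zero fun h => hm (by simp [h])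
  refine ⟨m, hm0, hm, ?_⟩
  by_contra hnm
  obtain ⟨f, hf, hfH, hfn⟩ := hH _ hnm
  have h1 := wa_exp_mem ρ n hn f hf
  apply hfn
  have h2 : (fun e : Multiplicative ℕ => f (n ^ (m * e.toAdd))) ∈ waExp k := by
    generalize hg : (fun e : Multiplicative ℕ => f (n ^ e.toAdd)) = g at h1
    have h3 : (fun e : Multiplicative ℕ => f (n ^ (m * e.toAdd))) = fun e => g (e ^ m) := by
      rw [← hg]; funext e; simp
    rw [h3]
    clear hg h3
    induction h1 using Submodule.span_induction with
    | mem f hf =>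
      obtain ⟨χ, rfl⟩ := hf
      exact Submodule.subset_span ⟨χ ^ m, by funext e; simp⟩
    | zero => exact Submodule.zero_mem _
    | add a b _ _ ha hb => exact Submodule.add_mem _ ha hb
    | smul c a _ ha => exact Submodule.smul_mem _ c ha
  have h4 := wa_exp_zero p a _ h2 (by
    intro e
    apply hfH
    have h5 : m * (e ^ p ^ a).toAdd = (p ^ a * m) * e.toAdd := by
      simp; ring
    rw [h5, ← hN, pow_mul]
    apply H.pow_mem
    rw [← QuotientGroup.eq_one_iff, QuotientGroup.mk_pow]
    exact pow_card_eq_one')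
  have := congrFun h4 (Multiplicative.ofAdd 1)
  simpa using this

theorem wa_group (p : ℕ) [hp : Fact p.Prime] (H N : Subgroup G) [H.Normal] [H.FiniteIndex]
    [hNn : N.Normal]
    (hN : ∀ n ∈ N, ∃ m, 0 < m ∧ ¬ p ∣ m ∧ n ^ m ∈ H) :
    ∃ c : ℕ, ∀ (g : G) (i : ℕ), ∀ n ∈ N, ∃ m, 0 < m ∧ ¬ p ∣ m ∧ (g ^ (p ^ c * i) * n) ^ m ∈ H := by
  have hfin : Nat.card (G ⧸ H) ≠ 0 := Nat.card_pos.ne'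
  obtain ⟨a, m, hm, hcard⟩ := Nat.exists_eq_pow_mul_and_not_dvd hfin p hp.out.ne_one
  have hm0 : 0 < m := Nat.pos_of_ne_zero fun h => hm (by simp [h])
  let Nb : Subgroup (G ⧸ H) := N.map (QuotientGroup.mk' H)
  have hNb : ¬ p ∣ Nat.card Nb := by
    intro hdvd
    obtain ⟨x, hx⟩ := exists_prime_orderOf_dvd_card' p hdvd
    obtain ⟨n, hn, hnx⟩ := x.2
    obtain ⟨j, hj0, hj, hjH⟩ := hN n hn
    apply hj
    rw [← hx, orderOf_dvd_iff_pow_eq_one]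
    apply Subtype.ext
    rw [Subgroup.coe_pow, ← hnx, ← map_pow]
    exact (QuotientGroup.eq_one_iff _).2 hjH
  refine ⟨a, fun g i n hn => ⟨m * Nat.card Nb, Nat.mul_pos hm0 Nat.card_pos, ?_, ?_⟩⟩
  · intro h
    rcases (Nat.Prime.dvd_mul hp.out).1 h with h | h
    · exact hm h
    · exact hNb h
  · set x := g ^ (p ^ a * i) with hx
    have hxH : x ^ m ∈ H := by
      have : x ^ m = (g ^ (p ^ a * m)) ^ i := by
        rw [hx, ← pow_mul, ← pow_mul]; congr 1; ring
      rw [this, ← hcard]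
      apply H.pow_mem
      rw [← QuotientGroup.eq_one_iff, QuotientGroup.mk_pow]
      exact pow_card_eq_one'
    have h1 : (x ^ m)⁻¹ * (x * n) ^ m ∈ N := by
      rw [← QuotientGroup.eq_one_iff (N := N)]
      have : ((n : G) : G ⧸ N) = 1 := (QuotientGroup.eq_one_iff n).2 hn
      simp [this]
    have h2 : ((x * n) ^ m : G ⧸ H) ∈ Nb := by
      refine ⟨_, h1, ?_⟩
      have : ((x : G) : G ⧸ H) ^ m = 1 := by
        rw [← QuotientGroup.mk_pow]; exact (QuotientGroup.eq_one_iff _).2 hxH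
      simp [this]
    have h3 : (⟨_, h2⟩ : Nb) ^ Nat.card Nb = 1 := pow_card_eq_one'
    have h4 := congrArg Subtype.val h3
    rw [pow_mul, ← QuotientGroup.eq_one_iff]
    exact h4

end PartSixA
section PartSixB

theorem wa_top_of_dual {k E : Type*} [Field k] [AddCommGroup E] [Module k E] (S : Submodule k E)
    (h : ∀ Φ : Module.Dual k E, (∀ x ∈ S, Φ x = 0) → Φ = 0) : S = ⊤ := by
  by_contra hne
  obtain ⟨f, hf, hle⟩ := S.exists_le_ker_of_lt_top (lt_top_iff_ne_top.2 hne)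
  exact hf (h f fun x hx => hle hx)

theorem wa_tens_zero {k U W : Type*} [Field k] [AddCommGroup U] [Module k U]
    [FiniteDimensional k U] [AddCommGroup W] [Module k W] [FiniteDimensional k W]
    (Φ : Module.Dual k (Module.End k (U ⊗[k] W)))
    (h : ∀ (A : Module.End k U) (B : Module.End k W), Φ (TensorProduct.map A B) = 0) : Φ = 0 := by
  have h1 : Φ ∘ₗ (homTensorHomEquiv k U W U W).toLinearMap = 0 := by
    apply TensorProduct.ext'
    intro A B
    rw [LinearMap.comp_apply, LinearEquiv.coe_coe, homTensorHomEquiv_apply]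
    exact h A B
  ext X
  obtain ⟨y, rfl⟩ := (homTensorHomEquiv k U W U W).surjective X
  exact LinearMap.congr_fun h1 y

theorem wa_tens_left {k U W M : Type*} [Field k] [AddCommGroup U] [Module k U]
    [AddCommGroup W] [Module k W]
    (Φ : Module.Dual k (Module.End k (U ⊗[k] W))) (ρ : M → Module.End k U)
    (hspan : Submodule.span k (Set.range ρ) = ⊤) (u u' : Module.End k U) (huu : u * u' = 1)
    (B : Module.End k W)
    (h : ∀ n, Φ (TensorProduct.map (u * ρ n) B) = 0) (A : Module.End k U) :
    Φ (TensorProduct.map A B) = 0 := by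
  have h1 : ∀ A : Module.End k U, Φ (TensorProduct.map (u * A) B) = 0 := by
    intro A
    have hA : A ∈ Submodule.span k (Set.range ρ) := by rw [hspan]; trivial
    induction hA using Submodule.span_induction with
    | mem A hA => obtain ⟨n, rfl⟩ := hA; exact h n
    | zero => simp
    | add a b _ _ ha hb => rw [mul_add, TensorProduct.map_add_left, map_add, ha, hb, add_zero]
    | smul c a _ ha => rw [mul_smul_comm, TensorProduct.map_smul_left, map_smul, ha, smul_zero]
  have := h1 (u' * A)
  rwa [← mul_assoc, huu, one_mul] at this

theorem wa_tens_right {k U W : Type*} [Field k] [AddCommGroup U] [Module k U]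
    [AddCommGroup W] [Module k W]
    (Φ : Module.Dual k (Module.End k (U ⊗[k] W))) (S : Set (Module.End k W))
    (A : Module.End k U) (h : ∀ B ∈ S, Φ (TensorProduct.map A B) = 0)
    (B : Module.End k W) (hB : B ∈ Submodule.span k S) :
    Φ (TensorProduct.map A B) = 0 := by
  induction hB using Submodule.span_induction with
  | mem B hB => exact h B hB
  | zero => simp
  | add a b _ _ ha hb => rw [TensorProduct.map_add_right, map_add, ha, hb, add_zero]
  | smul c a _ ha => rw [TensorProduct.map_smul_right, map_smul, ha, smul_zero]

end PartSixB


/-- **Lemma.** Let `k` be algebraically closed of characteristic `p > 0`, `G` a group with a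
normal subgroup `N`, and `U`, `W` finite-dimensional irreducible `kG`-modules with `N`
irreducible on `U` and trivial on `W`; set `V = U ⊗ W`.  If every element of `N` acts
semisimply on `V` and `(G, W)` is weakly adequate, then `(G, V)` is weakly adequate. -/
theorem tprod_weaklyAdequate
    (p : ℕ) (hp : p ≠ 0) (k : Type*) [Field k] [IsAlgClosed k] [CharP k p]
    (G : Type*) [Group G] (N : Subgroup G) (hN : N.Normal)
    (U W : Type*) [AddCommGroup U] [Module k U] [FiniteDimensional k U]
    [AddCommGroup W] [Module k W] [FiniteDimensional k W]
    (ρU : Representation k G U) (ρW : Representation k G W)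
    (hU : IsIrreducibleRep ρU) (hW : IsIrreducibleRep ρW)
    (hNU : IsIrreducibleRep (ρU.comp N.subtype))
    (hNW : ∀ x : N, ρW (x : G) = 1)
    (hss : ∀ x : N, IsSemisimpleEnd ((ρU.tprod ρW) (x : G)))
    (hWad : WeaklyAdequate ρW) :
    WeaklyAdequate (ρU.tprod ρW) := by
  classical
  have hpp : p.Prime := (CharP.char_is_prime_or_zero k p).resolve_right hp
  have : Fact p.Prime := ⟨hpp⟩
  have := hN
  have := hU.1
  have := hW.1
  have : Nontrivial (U ⊗[k] W) := by
    apply Module.nontrivial_of_finrank_pos (R := k)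
    rw [Module.finrank_tensorProduct]
    exact Nat.mul_pos Module.finrank_pos Module.finrank_pos
  have hNspan : Submodule.span k (Set.range (ρU.comp N.subtype)) = ⊤ :=
    wa_burnside (ρU.comp N.subtype) hNU.2
  have hmap : ∀ g : G, ∀ n : N, (ρU.tprod ρW) (g * n) =
      TensorProduct.map (ρU g * (ρU.comp N.subtype) n) (ρW g) := by
    intro g n
    rw [Representation.tprod_apply, map_mul, map_mul, hNW n, mul_one]
    rfl
  have hinv : ∀ g : G, ρU g * ρU g⁻¹ = 1 := by
    intro g
    rw [← map_mul, mul_inv_cancel, map_one]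
  have hspan : Submodule.span k (Set.range (ρU.tprod ρW)) = ⊤ := by
    apply wa_top_of_dual
    intro Ψ hΨ
    apply wa_tens_zero
    intro A B
    refine wa_tens_right Ψ {f | ∃ g : G, IsSemisimpleEnd (ρW g) ∧ ρW g = f} A ?_ B (by
      have h := hWad
      unfold WeaklyAdequate at h
      rw [h]; trivial)
    rintro _ ⟨g, _, rfl⟩
    refine wa_tens_left Ψ _ hNspan (ρU g) (ρU g⁻¹) (hinv g) _ (fun n => ?_) A
    rw [← hmap]
    exact hΨ _ (Submodule.subset_span ⟨_, rfl⟩)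
  obtain ⟨H, hHn, hHf, hHsep, hA⟩ := wa_thmA p (ρU.tprod ρW) hspan
  obtain ⟨c, hc⟩ := wa_group p H N
    (fun n hn => wa_pprime p (ρU.tprod ρW) H hHsep n (hss ⟨n, hn⟩))
  apply wa_top_of_dual
  intro Φ hΦ
  have hΦ' : ∀ g, (minpoly k ((ρU.tprod ρW) g)).Separable → Φ ((ρU.tprod ρW) g) = 0 :=
    fun g hg => hΦ _ (Submodule.subset_span ⟨g, hg, rfl⟩)
  apply wa_tens_zero
  intro A B
  refine wa_tens_right Φ {f | ∃ g : G, IsSemisimpleEnd (ρW g) ∧ ρW g = f} A ?_ B (by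
    have h := hWad
    unfold WeaklyAdequate at h
    rw [h]; trivial)
  rintro _ ⟨g, hg, rfl⟩
  refine wa_tens_right Φ {x | ∃ i : ℕ, 0 < i ∧ x = (ρW g) ^ (p ^ c * i)} A ?_ _
    (wa_L2 p (ρW g) c _ hg (minpoly.aeval k _))
  rintro _ ⟨i, _, rfl⟩
  rw [← map_pow]
  refine wa_tens_left Φ _ hNspan (ρU (g ^ (p ^ c * i))) (ρU (g ^ (p ^ c * i))⁻¹)
    (hinv _) _ (fun n => ?_) A
  rw [← hmap]
  obtain ⟨m, hm0, hm, hmH⟩ := hc g i n n.2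
  exact hA Φ hΦ' _ m hm0 hm hmH
end

section
/- Let k be an algebraically closed field of characteristic 0, let V be a finite-dimensional k-vector space, and let Γ be a subgroup of GL(V) acting irreducibly on V. Then End_k(V) is spanned as a k-vector space by the set of semisimple (diagonalizable) elements of Γ. -/
open scoped TensorProduct

namespace WA
open Module Polynomial
attribute [local instance] LieRing.ofAssociativeRing

section
variable {k V : Type*} [Field k] [AddCommGroup V] [Module k V]

/-- irreducibility -/
def Irr (Γ : Subgroup (Module.End k V)ˣ) : Prop :=
  ∀ U : Submodule k V, (∀ g ∈ Γ, ∀ v ∈ U, (g : Module.End k V) v ∈ U) → U = ⊥ ∨ U = ⊤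

theorem span_eq_top [IsAlgClosed k] [FiniteDimensional k V] [Nontrivial V]
    (Γ : Subgroup (Module.End k V)ˣ) (h : Irr Γ) :
    Submodule.span k {f : Module.End k V | ∃ g ∈ Γ, (g : Module.End k V) = f} = ⊤ := by
  set S : Set (Module.End k V) := {f : Module.End k V | ∃ g ∈ Γ, (g : Module.End k V) = f} with hS
  have hcl : (Submonoid.closure S : Set _) = S := by
    have : Submonoid.closure S = Γ.toSubmonoid.map (Units.coeHom _) := by
      apply le_antisymm
      · rw [Submonoid.closure_le]
        rintro f ⟨g, hg, rfl⟩
        exact ⟨g, hg, rfl⟩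
      · rintro f ⟨g, hg, rfl⟩
        exact Submonoid.subset_closure ⟨g, hg, rfl⟩
    rw [this]; ext f; rfl
  let A := Algebra.adjoin k S
  have hA : Subalgebra.toSubmodule A = Submodule.span k S := by
    rw [Algebra.adjoin_eq_span, hcl]
  rw [← hA]
  have : IsSimpleModule A V := by
    rw [isSimpleModule_iff]
    refine { exists_pair_ne := ⟨⊥, ⊤, bot_ne_top⟩, eq_bot_or_eq_top := fun U => ?_ }
    rcases h (U.restrictScalars k) (fun g hg v hv => 
      U.smul_mem (⟨(g : Module.End k V), Algebra.subset_adjoin ⟨g, hg, rfl⟩⟩ : A) hv) with h1 | h1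
    · left; simpa using h1
    · right; simpa using h1
  have hsch := IsSimpleModule.algebraMap_end_bijective_of_isAlgClosed k (A := A) (V := V)
  rw [eq_top_iff]
  intro f _
  let F : Module.End (Module.End A V) V :=
    { toFun := f
      map_add' := map_add f
      map_smul' := by
        intro c x
        obtain ⟨r, rfl⟩ := hsch.2 c
        simp }
  obtain ⟨s, hs⟩ := Module.Finite.fg_top (R := k) (M := V)
  obtain ⟨r, hr⟩ := jacobson_density (R := A) (M := V) F s
  have : f = (r : Module.End k V) := by
    apply LinearMap.ext_on hs
    intro m hm
    exact hr m hm
  rw [this]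
  exact r.2

/-- A conj-stable bracket-closed space of nilpotents vanishes. -/
theorem nil_space_eq_bot [FiniteDimensional k V] [Nontrivial V]
    (Γ : Subgroup (Module.End k V)ˣ) (h : Irr Γ) (D : LieSubalgebra k (Module.End k V))
    (hD : ∀ g ∈ Γ, ∀ x ∈ D, (g : Module.End k V) * x * ((g⁻¹ : (Module.End k V)ˣ) : Module.End k V) ∈ D)
    (hn : ∀ x ∈ D, IsNilpotent x) : ∀ x ∈ D, x = 0 := by
  have : LieModule.IsNilpotent D V := by
    rw [LieModule.isNilpotent_iff_forall' (R := k)]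
    rintro ⟨x, hx⟩
    exact hn x hx
  have hnt := LieModule.nontrivial_max_triv_of_isNilpotent k D V
  let U : Submodule k V := (LieModule.maxTrivSubmodule k D V).toSubmodule
  have hU : ∀ v, v ∈ U ↔ ∀ x ∈ D, x v = 0 := by
    intro v
    change v ∈ LieModule.maxTrivSubmodule k D V ↔ _
    rw [LieModule.mem_maxTrivSubmodule]
    exact ⟨fun h x hx => h ⟨x, hx⟩, fun h x => h x.1 x.2⟩
  rcases h U (fun g hg v hv => by
    rw [hU] at hv ⊢
    intro x hx
    have := hv _ (hD g⁻¹ (Γ.inv_mem hg) x hx)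
    simp only [inv_inv, Module.End.mul_apply] at this
    have h2 := congrArg (g : Module.End k V) this
    rw [← Module.End.mul_apply, ← Units.val_mul] at h2
    simpa using h2) with h1 | h1
  · exfalso
    obtain ⟨⟨v, hv⟩, hv0⟩ := exists_ne (0 : LieModule.maxTrivSubmodule k D V)
    have : v ∈ U := hv
    rw [h1] at this
    apply hv0
    ext
    simpa using this
  · intro x hx
    ext v
    have : v ∈ U := by rw [h1]; trivial
    exact (hU v).1 this x hx

theorem cartan_step [CharZero k] [FiniteDimensional k V] [Nontrivial V]
    (Γ : Subgroup (Module.End k V)ˣ) (h : Irr Γ) (R : LieSubalgebra k (Module.End k V))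
    (hR : ∀ g ∈ Γ, ∀ x ∈ R, (g : Module.End k V) * x * ((g⁻¹ : (Module.End k V)ˣ) : Module.End k V) ∈ R)
    (htr : ∀ x ∈ R, ∀ y ∈ R, LinearMap.trace k V (x * y) = 0)
    (N : Module.End k V) (hN : N ∈ R) (hn : IsNilpotent N) : N = 0 := by
  have h1 : LieModule.IsNilpotent (LieAlgebra.derivedSeries k R 1) V := by
    apply LieModule.isNilpotent_derivedSeries_of_traceForm_eq_zero
    ext ⟨x, hx⟩ ⟨y, hy⟩
    exact htr x hx y hy
  have h2 : ∀ x ∈ R, ∀ y ∈ R, ⁅x, y⁆ = 0 := by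
    let D : LieSubalgebra k (Module.End k V) :=
      { Submodule.map (R.toSubmodule.subtype) (LieAlgebra.derivedSeries k R 1).toSubmodule with
        lie_mem' := by
          rintro _ _ ⟨x, hx, rfl⟩ ⟨y, hy, rfl⟩
          exact ⟨(⁅(show R from x), (show R from y)⁆ : R), LieSubmodule.lie_mem (x := (show R from x)) (LieAlgebra.derivedSeries k R 1) hy, rfl⟩ }
    have hD : ∀ x, x ∈ D ↔ ∃ y ∈ LieAlgebra.derivedSeries k R 1, (y : Module.End k V) = x :=
      fun x => Iff.rfl
    have key := nil_space_eq_bot Γ h D (by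
      intro g hg x hx
      rw [hD] at hx
      obtain ⟨y, hy, rfl⟩ := hx
      rw [LieAlgebra.derivedSeries_def, LieAlgebra.derivedSeriesOfIdeal_succ,
        LieAlgebra.derivedSeriesOfIdeal_zero, ← LieSubmodule.mem_toSubmodule,
        LieSubmodule.lieIdeal_oper_eq_linear_span'] at hy
      induction hy using Submodule.span_induction with
      | mem y hy =>
        obtain ⟨a, -, b, -, rfl⟩ := hy
        rw [hD]
        refine ⟨⁅(⟨_, hR g hg a.1 a.2⟩ : R), (⟨_, hR g hg b.1 b.2⟩ : R)⁆, ?_, ?_⟩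
        · rw [LieAlgebra.derivedSeries_def, LieAlgebra.derivedSeriesOfIdeal_succ,
            LieAlgebra.derivedSeriesOfIdeal_zero]
          exact LieSubmodule.lie_mem_lie trivial trivial
        · simp only [LieSubalgebra.coe_bracket, Ring.lie_def, mul_sub, sub_mul, mul_assoc]
          simp
      | zero => simp
      | add a b _ _ ha hb => 
        have := D.add_mem ha hb
        simpa [mul_add, add_mul] using this
      | smul c a _ ha =>
        have := D.smul_mem c ha
        simpa using this) (by
      intro x hx
      rw [hD] at hx
      obtain ⟨y, hy, rfl⟩ := hx
      rw [LieModule.isNilpotent_iff_forall' (R := k)] at h1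
      exact h1 ⟨y, hy⟩)
    intro x hx y hy
    apply key
    rw [hD]
    refine ⟨⁅(⟨x, hx⟩ : R), (⟨y, hy⟩ : R)⁆, ?_, rfl⟩
    rw [LieAlgebra.derivedSeries_def, LieAlgebra.derivedSeriesOfIdeal_succ,
            LieAlgebra.derivedSeriesOfIdeal_zero]
    exact LieSubmodule.lie_mem_lie trivial trivial
  have hcomm : ∀ x ∈ R, ∀ y ∈ R, Commute x y := by
    intro x hx y hy
    have := h2 x hx y hy
    rw [Ring.lie_def, sub_eq_zero] at this
    exact this
  let D : LieSubalgebra k (Module.End k V) :=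
    { carrier := {x | x ∈ R ∧ IsNilpotent x}
      add_mem' := fun {a b} ha hb => ⟨R.add_mem ha.1 hb.1, (hcomm a ha.1 b hb.1).isNilpotent_add ha.2 hb.2⟩
      zero_mem' := ⟨R.zero_mem, IsNilpotent.zero⟩
      smul_mem' := fun c x hx => ⟨R.smul_mem c hx.1, hx.2.smul c⟩
      lie_mem' := fun {x y} hx hy => by
        have := h2 x hx.1 y hy.1
        change ⁅x, y⁆ ∈ R ∧ IsNilpotent ⁅x, y⁆
        rw [this]
        exact ⟨R.zero_mem, IsNilpotent.zero⟩ }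
  refine nil_space_eq_bot Γ h D ?_ (fun x hx => hx.2) N ⟨hN, hn⟩
  rintro g hg x ⟨hx, n, hxn⟩
  refine ⟨hR g hg x hx, n, ?_⟩
  rw [Units.conj_pow, hxn]
  simp
end

section eig
variable {k V : Type*} [Field k] [AddCommGroup V] [Module k V]

/-- the set of eigenvalues -/
noncomputable def eig (h : Module.End k V) : Finset k :=
  letI := Classical.decEq k
  (minpoly k h).roots.toFinset

theorem nil_of_vanish [IsAlgClosed k] [FiniteDimensional k V] (h : Module.End k V) (p : k[X])
    (hp : ∀ a ∈ eig h, p.eval a = 0) : IsNilpotent (aeval h p) := by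
  classical
  have hi : IsIntegral k h := Algebra.IsIntegral.isIntegral h
  have h1 : ∀ s : Multiset k, (∀ a ∈ s, p.eval a = 0) →
      (s.map (fun a => X - C a)).prod ∣ p ^ (Multiset.card s) := by
    intro s
    induction s using Multiset.induction_on with
    | empty => simp
    | cons a s ih =>
      intro hs
      simp only [Multiset.map_cons, Multiset.prod_cons, Multiset.card_cons, pow_succ']
      apply mul_dvd_mul
      · exact dvd_iff_isRoot.2 (hs a (by simp))
      · exact ih (fun b hb => hs b (by simp [hb]))
  have h2 := h1 (minpoly k h).roots (fun a ha => hp a (by simpa [eig] using ha))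
  have h3 : (minpoly k h) = ((minpoly k h).roots.map (fun a => X - C a)).prod := 
    (IsAlgClosed.splits (minpoly k h)).eq_prod_roots_of_monic (minpoly.monic hi)
  rw [← h3] at h2
  refine ⟨Multiset.card (minpoly k h).roots, ?_⟩
  rw [← map_pow]
  exact (minpoly.dvd_iff).1 h2

theorem vanish_of_nil (h : Module.End k V) [FiniteDimensional k V] (p : k[X]) (hp : IsNilpotent (aeval h p)) :
    ∀ a ∈ eig h, p.eval a = 0 := by
  classical
  obtain ⟨n, hn⟩ := hp
  intro a ha
  rw [← map_pow, ← minpoly.dvd_iff] at hn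
  have hi : IsIntegral k h := Algebra.IsIntegral.isIntegral h
  have : (minpoly k h).IsRoot a := by
    have h0 := minpoly.ne_zero hi
    simpa [eig, h0] using ha
  have h2 := this.dvd hn
  simp only [IsRoot.def, eval_pow] at h2
  exact eq_zero_of_pow_eq_zero h2

theorem trace_nil [FiniteDimensional k V] (x : Module.End k V) (hx : IsNilpotent x) :
    LinearMap.trace k V x = 0 :=
  (LinearMap.isNilpotent_trace_of_isNilpotent hx).eq_zero

theorem card_eig_le [FiniteDimensional k V] (h : Module.End k V) :
    (eig h).card ≤ finrank k V := by
  classical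
  have hi : IsIntegral k h := Algebra.IsIntegral.isIntegral h
  calc (eig h).card ≤ Multiset.card (minpoly k h).roots := Multiset.toFinset_card_le _
    _ ≤ (minpoly k h).natDegree := card_roots' _
    _ ≤ h.charpoly.natDegree := natDegree_le_of_dvd (LinearMap.minpoly_dvd_charpoly h) h.charpoly_monic.ne_zero
    _ = finrank k V := LinearMap.charpoly_natDegree h

theorem gram_det_zero [IsAlgClosed k] [FiniteDimensional k V] (g : Module.End k V) (m : ℕ)
    (hm : (eig g).card ≤ m) (A B : Fin (m + 1) → k[X]) :
    (Matrix.of fun a b => LinearMap.trace k V (aeval g (A a * B b))).det = 0 := by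
  let T : (Fin (m + 1) → k) →ₗ[k] (eig g → k) :=
    Matrix.mulVecLin (Matrix.of fun (l : eig g) a => (A a).eval (l : k))
  have hT : LinearMap.ker T ≠ ⊥ := by
    apply LinearMap.ker_ne_bot_of_finrank_lt
    simp; omega
  obtain ⟨c, hc, hc0⟩ := Submodule.exists_mem_ne_zero_of_ne_bot hT
  rw [← Matrix.exists_vecMul_eq_zero_iff]
  refine ⟨c, hc0, ?_⟩
  ext b
  have h1 : IsNilpotent (aeval g ((∑ a, C (c a) * A a) * B b)) := by
    apply nil_of_vanish
    intro l hl
    have := congrFun (LinearMap.mem_ker.1 hc) ⟨l, hl⟩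
    simp only [T, Matrix.mulVecLin_apply, Matrix.mulVec, dotProduct, Matrix.of_apply, Pi.zero_apply] at this
    rw [eval_mul, eval_finsetSum]
    simp only [eval_mul, eval_C]
    rw [show ∑ x, c x * eval l (A x) = ∑ x, eval l (A x) * c x from 
      Finset.sum_congr rfl (fun _ _ => mul_comm _ _), this, zero_mul]
  have h2 := trace_nil _ h1
  rw [Finset.sum_mul, map_sum, map_sum] at h2
  simp only [Matrix.vecMul, dotProduct, Matrix.of_apply, Pi.zero_apply]
  rw [← h2]
  refine Finset.sum_congr rfl (fun a _ => ?_)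
  rw [mul_assoc, ← smul_eq_C_mul, map_smul, map_smul, smul_eq_mul]

theorem trace_ne_zero [IsAlgClosed k] [CharZero k] [FiniteDimensional k V] (x : Module.End k V)
    (hx : IsNilpotent (x * x - x)) (hn : ¬ IsNilpotent x) : LinearMap.trace k V x ≠ 0 := by
  intro h0
  obtain ⟨n, hnm, s, hsm, hnn, hss, rfl⟩ := Module.End.exists_isNilpotent_isSemisimple (K := k) (f := x)
  have hcx : Commute (n + s) s := (Algebra.commute_of_mem_adjoin_self hsm)
  have hc : Commute n s := by
    have := hcx.sub_left (Commute.refl s)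
    simpa using this
  have h1 : s * s - s = ((n + s) * (n + s) - (n + s)) + n * (1 - n - s - s) := by
    have := hc.eq
    simp only [mul_add, add_mul, mul_sub, mul_one, ← this]
    abel
  have hcn : Commute (n + s) n := (Commute.refl n).add_left hc.symm
  have h2 : IsNilpotent (s * s - s) := by
    rw [h1]
    apply Commute.isNilpotent_add
    · apply Commute.sub_left
      · apply Commute.mul_left <;> apply Commute.mul_right <;>
        first | exact hcn | (repeat' apply Commute.sub_right) <;> first | exact hcx | exact hcn | exact Commute.one_right _
      · apply Commute.mul_right
        · exact hcn
        · (repeat' apply Commute.sub_right) <;> first | exact hcx | exact hcn | exact Commute.one_right _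
    · exact hx
    · apply Commute.isNilpotent_mul_right _ hnn
      (repeat' apply Commute.sub_right) <;> first | exact hc | exact Commute.refl _ | exact Commute.one_right _
  have h3 : (s * s - s).IsSemisimple := by
    have := hss.aeval (X * X - X : k[X])
    simpa using this
  have h4 := Module.End.eq_zero_of_isNilpotent_isSemisimple h2 h3
  have h5 : IsIdempotentElem s := sub_eq_zero.1 h4
  have h6 : LinearMap.trace k V s = 0 := by
    rw [map_add, trace_nil n hnn, zero_add] at h0; exact h0
  have h7 := LinearMap.IsIdempotentElem.eq_zero_of_trace_eq_zero h5 h6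
  apply hn
  rw [h7, add_zero]
  exact hnn

theorem gram_poly (n : ℕ) (M : Matrix (Fin (n+1)) (Fin (n+1)) k[X]) (hM : M.det = 0)
    (hr : ∀ b, (M 0 b).coeff 0 = 0) (hcol : ∀ a, (M a 0).coeff 0 = 0)
    (hd : (Matrix.of fun a b : Fin n => (M a.succ b.succ).coeff 0).det ≠ 0) : (M 0 0).coeff 1 = 0 := by
  have hev : ∀ (N : Matrix (Fin n) (Fin n) k[X]), N.det.coeff 0 = (Matrix.of fun a b => (N a b).coeff 0).det := by
    intro N
    have := RingHom.map_det (constantCoeff (R := k)) N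
    exact this
  rw [Matrix.det_succ_row_zero, Fin.sum_univ_succ] at hM
  have h1 := congrArg (fun p => p.coeff 1) hM
  simp only [coeff_add, finsetSum_coeff, coeff_zero] at h1
  rw [Finset.sum_eq_zero] at h1
  · rw [add_zero] at h1
    simp only [Fin.val_zero, pow_zero, one_mul, mul_coeff_one, hr, zero_mul, zero_add, hev] at h1
    refine (mul_eq_zero.1 h1).resolve_right ?_
    simpa [Matrix.submatrix] using hd
  · intro j _
    have h2 : ((M.submatrix Fin.succ (Fin.succAbove j.succ)).det).coeff 0 = 0 := by
      rw [hev]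
      cases n with
      | zero => exact j.elim0
      | succ n =>
        apply Matrix.det_eq_zero_of_column_eq_zero 0
        intro i
        simp [hcol]
    have h3 : ((-1) ^ (j.succ : ℕ) * M 0 j.succ).coeff 0 = 0 := by
      rw [mul_coeff_zero, hr, mul_zero]
    rw [mul_coeff_one, h2, h3]
    simp

end eig

section curve
variable {k V : Type*} [Field k] [AddCommGroup V] [Module k V]

/-- evaluation of a polynomial curve at a scalar -/
noncomputable def ev (t : k) : (Module.End k V)[X] →+* Module.End k V :=
  eval₂RingHom' (RingHom.id _) (algebraMap k _ t) (fun a => (Algebra.commutes t a).symm)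

theorem ev_C (t : k) (x : Module.End k V) : ev t (C x) = x := by
  simp [ev, eval₂RingHom']

theorem ev_monomial (t : k) (n : ℕ) (x : Module.End k V) : ev t (monomial n x) = t ^ n • x := by
  change eval₂ _ _ _ = _
  rw [eval₂_monomial, ← map_pow, ← Algebra.commutes, ← Algebra.smul_def]
  rfl

theorem exists_poly (φ : Module.End k V →ₗ[k] k) (c : (Module.End k V)[X]) :
    ∃ q : k[X], (∀ i, q.coeff i = φ (c.coeff i)) ∧ ∀ t, q.eval t = φ (ev t c) := by
  induction c using Polynomial.induction_on' with
  | add p q hp hq =>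
    obtain ⟨a, ha, ha'⟩ := hp
    obtain ⟨b, hb, hb'⟩ := hq
    exact ⟨a + b, fun i => by simp [ha, hb], fun t => by simp [ha', hb']⟩
  | monomial n x =>
    refine ⟨monomial n (φ x), fun i => ?_, fun t => ?_⟩
    · simp only [coeff_monomial]
      split_ifs <;> simp
    · rw [ev_monomial]; simp [mul_comm]

theorem ev_aeval (t : k) (c : (Module.End k V)[X]) (p : k[X]) :
    ev t (aeval c p) = aeval (ev t c) p := by
  induction p using Polynomial.induction_on' with
  | add p q hp hq => simp [hp, hq]
  | monomial n a =>
    rw [aeval_monomial, aeval_monomial, map_mul, map_pow]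
    congr 1
    rw [Polynomial.algebraMap_apply, ev_C]

theorem coeff_zero_aeval (c : (Module.End k V)[X]) (p : k[X]) :
    (aeval c p).coeff 0 = aeval (c.coeff 0) p := by
  induction p using Polynomial.induction_on' with
  | add p q hp hq => simp [hp, hq]
  | monomial n a =>
    rw [aeval_monomial, aeval_monomial, mul_coeff_zero, Polynomial.algebraMap_apply, coeff_C_zero]
    congr 1
    exact map_pow (constantCoeff (R := Module.End k V)) c n

theorem trace_coeff_one_pow (c : (Module.End k V)[X]) (n j : ℕ) :
    LinearMap.trace k V ((c ^ (n + 1)).coeff 1 * c.coeff 0 ^ j) =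
      (n + 1) * LinearMap.trace k V (c.coeff 0 ^ (n + j) * c.coeff 1) := by
  have h0 : ∀ n, (c ^ n).coeff 0 = c.coeff 0 ^ n := fun n => map_pow (constantCoeff (R := Module.End k V)) c n
  induction n generalizing j with
  | zero =>
    simp only [zero_add, pow_one, Nat.cast_zero, one_mul]
    rw [LinearMap.trace_mul_comm]
  | succ n ih =>
    rw [pow_succ, mul_coeff_one, add_mul, map_add, mul_assoc _ (c.coeff 0), ← pow_succ', ih, h0]
    rw [mul_assoc, LinearMap.trace_mul_comm, mul_assoc, LinearMap.trace_mul_comm, ← pow_add,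
      show j + (n + 1) = n + (j + 1) by ring, show n + 1 + j = n + (j + 1) by ring]
    push_cast
    ring

theorem trace_coeff_one (c : (Module.End k V)[X]) (p : k[X]) :
    LinearMap.trace k V ((aeval c p).coeff 1) =
      LinearMap.trace k V (aeval (c.coeff 0) (derivative p) * c.coeff 1) := by
  induction p using Polynomial.induction_on' with
  | add p q hp hq => simp [hp, hq, add_mul]
  | monomial n a =>
    rw [aeval_monomial, Polynomial.algebraMap_apply, coeff_C_mul, derivative_monomial, aeval_monomial,
      ← Algebra.smul_def, ← Algebra.smul_def, map_smul, smul_mul_assoc, map_smul]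
    cases n with
    | zero => simp [coeff_one]
    | succ n =>
      have := trace_coeff_one_pow c n 0
      simp only [pow_zero, mul_one, add_zero] at this
      rw [this]
      simp
      ring

theorem first_order [IsAlgClosed k] [CharZero k] [FiniteDimensional k V]
    (f : Module.End k V →ₗ[k] k) (c : (Module.End k V)[X])
    (hf : f (c.coeff 0) ≠ 0)
    (hdet : ∀ A B : Fin ((eig (c.coeff 0)).card + 1) → k[X], ∀ t,
      f (ev t c) * (Matrix.of fun a b => LinearMap.trace k V (aeval (ev t c) (A a * B b))).det = 0)
    (p : k[X]) (hp : IsNilpotent (aeval (c.coeff 0) p)) :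
    LinearMap.trace k V (aeval (c.coeff 0) p * c.coeff 1) = 0 := by
  classical
  have : Infinite k := IsAlgClosed.instInfinite
  set h := c.coeff 0 with hh
  obtain ⟨qf, hqf, hqf'⟩ := exists_poly f c
  have hqf0 : qf ≠ 0 := by
    rintro rfl
    apply hf
    rw [hh, ← hqf 0]; simp
  choose τ hτ hτ' using fun c => exists_poly (LinearMap.trace k V) c
  have hdet' : ∀ A B : Fin ((eig h).card + 1) → k[X],
      (Matrix.of fun a b => τ (aeval c (A a * B b))).det = 0 := by
    intro A B
    have : qf * (Matrix.of fun a b => τ (aeval c (A a * B b))).det = 0 := by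
      apply Polynomial.funext
      intro t
      rw [eval_mul, hqf', eval_zero, ← hdet A B t]
      congr 1
      rw [← coe_evalRingHom, RingHom.map_det]
      congr 1
      ext a b
      simp [hτ', ev_aeval]
    exact (mul_eq_zero.1 this).resolve_left hqf0
  set Q : k[X] := ∏ a ∈ eig h, (X - C a) with hQ
  have hQsep : Q.Separable := by
    rw [hQ]
    exact separable_prod_X_sub_C_iff'.2 (fun x _ y _ hxy => hxy)
  have hQ0 : ∀ a ∈ eig h, Q.eval a = 0 := by
    intro a ha
    rw [hQ, eval_prod]
    exact Finset.prod_eq_zero ha (by simp)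
  have hQn : IsNilpotent (aeval h Q) := nil_of_vanish h Q hQ0
  have hQp : Q ∣ p := by
    apply Finset.prod_dvd_of_coprime
    · intro a _ b _ hab
      exact isCoprime_X_sub_C_of_isUnit_sub (sub_ne_zero.2 hab).isUnit
    · intro a ha
      exact dvd_iff_isRoot.2 (vanish_of_nil h p hp a ha)
  -- the key first-order vanishing
  have key : ∀ B : k[X], LinearMap.trace k V (aeval h (derivative (Q ^ 2 * B)) * c.coeff 1) = 0 := by
    intro B
    let e := (eig h).equivFin
    let L : Fin (eig h).card → k[X] := fun a => Lagrange.basis (eig h) id (e.symm a : k)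
    have hL : ∀ a (l : k) (hl : l ∈ eig h), (L a).eval l = if e ⟨l, hl⟩ = a then 1 else 0 := by
      intro a l hl
      split_ifs with h1
      · subst h1
        simp only [L, Equiv.symm_apply_apply]
        exact Lagrange.eval_basis_self (v := id) Function.injective_id.injOn hl
      · apply Lagrange.eval_basis_of_ne (v := id) _ hl
        intro h2
        apply h1
        rw [← e.apply_symm_apply a]
        congr 1
        exact Subtype.ext h2.symm
    let A' : Fin ((eig h).card + 1) → k[X] := Fin.cons Q L
    let B' : Fin ((eig h).card + 1) → k[X] := Fin.cons (Q * B) L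
    have h1 := gram_poly _ _ (hdet' A' B') (by
      intro b
      simp only [Matrix.of_apply, hτ, coeff_zero_aeval]
      apply trace_nil
      apply nil_of_vanish
      intro a ha
      rw [eval_mul]
      simp only [A', Fin.cons_zero]
      rw [hQ0 a ha, zero_mul]) (by
      intro b
      simp only [Matrix.of_apply, hτ, coeff_zero_aeval]
      apply trace_nil
      apply nil_of_vanish
      intro a ha
      rw [eval_mul]
      simp only [B', Fin.cons_zero]
      rw [eval_mul, hQ0 a ha, zero_mul, mul_zero]) (by
      have : (Matrix.of fun a b => ((Matrix.of fun a b => τ ((aeval c) (A' a * B' b))) (Fin.succ a) (Fin.succ b)).coeff 0)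
        = Matrix.diagonal (fun a => LinearMap.trace k V (aeval h (L a * L a))) := by
        ext a b
        simp only [Matrix.of_apply, hτ, coeff_zero_aeval, A', B', Fin.cons_succ]
        by_cases hab : a = b
        · subst hab
          rw [Matrix.diagonal_apply_eq]
        · rw [Matrix.diagonal_apply_ne _ hab]
          apply trace_nil
          apply nil_of_vanish
          intro l hl
          rw [eval_mul, hL a l hl, hL b l hl]
          split_ifs with h1 h2
          · exact absurd (h1.symm.trans h2) hab
          all_goals simp
      rw [this, Matrix.det_diagonal, Finset.prod_ne_zero_iff]
      intro a _
      apply trace_ne_zero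
      · rw [← map_mul, ← map_sub]
        apply nil_of_vanish
        intro l hl
        rw [eval_sub, eval_mul, eval_mul, hL a l hl]
        split_ifs <;> simp
      · intro hn
        have := vanish_of_nil h _ hn (e.symm a) (e.symm a).2
        rw [eval_mul, hL a _ (e.symm a).2] at this
        simp at this)
    simp only [Matrix.of_apply, hτ, A', B', Fin.cons_zero] at h1
    rw [trace_coeff_one] at h1
    rw [show Q ^ 2 * B = Q * (Q * B) by ring]
    exact h1
  obtain ⟨n, hn⟩ := hQn
  obtain ⟨a, b, hab⟩ := hQsep
  have main : ∀ d j : ℕ, n ≤ j + d → ∀ D : k[X],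
      LinearMap.trace k V (aeval h (Q ^ (j + 1) * D) * c.coeff 1) = 0 := by
    intro d
    induction d with
    | zero =>
      intro j hj D
      have hz : aeval h (Q ^ (j + 1) * D) = 0 := by
        rw [map_mul, map_pow, pow_eq_zero_of_le (by omega : n ≤ j + 1) hn, zero_mul]
      rw [hz]
      simp
    | succ d ih =>
      intro j hj D
      have hj2 : ((j + 2 : ℕ) : k) ≠ 0 := by exact_mod_cast (by omega : j + 2 ≠ 0)
      let B := C ((j + 2 : ℕ) : k)⁻¹ * (b * D)
      have e1 : Q ^ (j + 1) * D = derivative (Q ^ 2 * (Q ^ j * B)) +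
          Q ^ (j + 1 + 1) * (a * D - derivative B) := by
        have e2 : C ((j + 2 : ℕ) : k) * B = b * D := by
          simp only [B]
          rw [← mul_assoc, ← C_mul, mul_inv_cancel₀ hj2]; simp
        rw [show Q ^ 2 * (Q ^ j * B) = Q ^ (j + 2) * B by ring, derivative_mul, derivative_pow]
        have e3 : D = a * Q * D + b * derivative Q * D := by rw [← add_mul, hab, one_mul]
        have e4 : j + 2 - 1 = j + 1 := by omega
        rw [e4]
        calc Q ^ (j + 1) * D = Q ^ (j + 1) * (a * Q * D) + Q ^ (j + 1) * derivative Q * (b * D) := by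
              conv_lhs => rw [e3]
              ring
          _ = _ := by
              rw [← e2]; ring
      rw [e1, map_add, add_mul, map_add, key, ih (j + 1) (by omega), add_zero]
  obtain ⟨D, rfl⟩ := hQp
  have := main n 0 (by omega) D
  simpa using this

end curve

section closure
variable {k V : Type*} [Field k] [AddCommGroup V] [Module k V]

/-- polynomial functions on the endomorphism algebra -/
def PolyF (k V : Type*) [Field k] [AddCommGroup V] [Module k V] :
    Subalgebra k (Module.End k V → k) :=
  Algebra.adjoin k {F | ∃ φ : Module.End k V →ₗ[k] k, F = φ}

theorem lin_mem (φ : Module.End k V →ₗ[k] k) : (φ : Module.End k V → k) ∈ PolyF k V :=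
  Algebra.subset_adjoin ⟨φ, rfl⟩

theorem comp_lin_mem (L : Module.End k V →ₗ[k] Module.End k V) {F : Module.End k V → k}
    (hF : F ∈ PolyF k V) : (fun x => F (L x)) ∈ PolyF k V := by
  induction hF using Algebra.adjoin_induction with
  | mem F h =>
    obtain ⟨φ, rfl⟩ := h
    exact lin_mem (φ.comp L)
  | algebraMap r => exact (PolyF k V).algebraMap_mem r
  | add F G _ _ hF hG => exact (PolyF k V).add_mem hF hG
  | mul F G _ _ hF hG => exact (PolyF k V).mul_mem hF hG

theorem pow_mem [FiniteDimensional k V] (n : ℕ) (φ : Module.End k V →ₗ[k] k) :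
    (fun x => φ (x ^ n)) ∈ PolyF k V := by
  induction n generalizing φ with
  | zero =>
    simp only [pow_zero]
    exact (PolyF k V).algebraMap_mem (φ 1)
  | succ n ih =>
    let b := Module.finBasis k (Module.End k V)
    have : (fun x : Module.End k V => φ (x ^ (n + 1))) =
        ∑ i, (fun x => (φ.comp (LinearMap.mulRight k (b i))) (x ^ n)) * (b.coord i : Module.End k V → k) := by
      funext x
      simp only [Finset.sum_apply, Pi.mul_apply, LinearMap.comp_apply, LinearMap.mulRight_apply]
      have hx : φ (x ^ (n + 1)) = φ (x ^ n * ∑ i, b.repr x i • b i) := by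
        rw [b.sum_repr x, pow_succ]
      rw [hx, Finset.mul_sum, map_sum]
      refine Finset.sum_congr rfl fun i _ => ?_
      rw [mul_smul_comm, map_smul, smul_eq_mul, mul_comm]
      rfl
    rw [this]
    exact (PolyF k V).sum_mem fun i _ => (PolyF k V).mul_mem (ih _) (lin_mem _)

theorem aeval_mem [FiniteDimensional k V] (p : k[X]) (φ : Module.End k V →ₗ[k] k) :
    (fun x => φ (aeval x p)) ∈ PolyF k V := by
  induction p using Polynomial.induction_on' with
  | add p q hp hq =>
    simp only [map_add]
    exact (PolyF k V).add_mem hp hq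
  | monomial n a =>
    simp only [aeval_monomial, ← Algebra.smul_def, map_smul]
    exact (PolyF k V).smul_mem (pow_mem n φ) a

theorem det_mem {n : ℕ} (M : Fin n → Fin n → Module.End k V → k)
    (hM : ∀ a b, M a b ∈ PolyF k V) :
    (fun x => (Matrix.of fun a b => M a b x).det) ∈ PolyF k V := by
  have : (fun x => (Matrix.of fun a b => M a b x).det) = (Matrix.of M).det := by
    funext x
    have h1 := RingHom.map_det (Pi.evalRingHom (fun _ : Module.End k V => k) x) (Matrix.of M)
    exact h1.symm
  rw [this, Matrix.det_apply]
  refine (PolyF k V).sum_mem fun σ _ => ?_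
  rw [Units.smul_def]
  exact (PolyF k V).zsmul_mem ((PolyF k V).prod_mem fun i _ => hM _ _) _

/-- Zariski closure -/
def Cl (Γ : Subgroup (Module.End k V)ˣ) : Set (Module.End k V) :=
  {x | ∀ F ∈ PolyF k V, (∀ g ∈ Γ, F (g : Module.End k V) = 0) → F x = 0}

theorem subset_Cl (Γ : Subgroup (Module.End k V)ˣ) (g : (Module.End k V)ˣ) (hg : g ∈ Γ) :
    (g : Module.End k V) ∈ Cl Γ := fun _ _ h => h g hg

theorem mul_mem_Cl (Γ : Subgroup (Module.End k V)ˣ) {x y : Module.End k V} (hx : x ∈ Cl Γ)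
    (hy : y ∈ Cl Γ) : x * y ∈ Cl Γ := by
  intro F hF h0
  refine hx (fun z => F (z * y)) (comp_lin_mem (LinearMap.mulRight k y) hF) ?_
  intro g hg
  refine hy (fun z => F (g * z)) (comp_lin_mem (LinearMap.mulLeft k (g : Module.End k V)) hF) ?_
  intro g' hg'
  exact h0 (g * g') (Γ.mul_mem hg hg')

end closure

section indep
variable {k : Type*} [Field k]

/-- shift operator -/
def shift (k : Type*) [Field k] : Module.End k (ℕ → k) where
  toFun a := fun n => a (n + 1)
  map_add' _ _ := rfl
  map_smul' _ _ := rfl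

theorem shift_pow (l : k) (f : k → k) (m : ℕ) :
    ((shift k - algebraMap k _ l) ^ m) (fun n : ℕ => l ^ n * f n) =
      fun n : ℕ => l ^ (n + m) * ((fwdDiff 1)^[m] f) n := by
  induction m with
  | zero => simp
  | succ m ih =>
    rw [pow_succ', Module.End.mul_apply, ih]
    funext n
    rw [Function.iterate_succ_apply']
    simp only [LinearMap.sub_apply, Pi.sub_apply, Module.algebraMap_end_apply, Pi.smul_apply,
      smul_eq_mul, fwdDiff, shift, LinearMap.coe_mk, AddHom.coe_mk]
    push_cast
    ring

theorem expo_indep [CharZero k] (P : k →₀ k[X]) (h0 : P 0 = 0)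
    (h : ∀ n : ℕ, (P.sum fun l p => l ^ n * p.eval (n : k)) = 0) : P = 0 := by
  have hind := (iSupIndep_iff_finsetSum_eq_zero_imp_eq_zero _).1
    (Module.End.independent_maxGenEigenspace (shift k))
  have key := hind P.support (fun l => fun n : ℕ => l ^ n * (P l).eval (n : k)) (by
    intro l _
    rw [Module.End.mem_maxGenEigenspace]
    refine ⟨(P l).natDegree + 1, ?_⟩
    rw [show l • (1 : Module.End k (ℕ → k)) = algebraMap k _ l from (Algebra.algebraMap_eq_smul_one l).symm,
      shift_pow l (fun x => (P l).eval x), Polynomial.fwdDiff_iter_degree_add_one_eq_zero]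
    funext n
    simp) (by
    funext n
    rw [Finset.sum_apply]
    exact h n)
  ext1 l
  by_cases hl : l ∈ P.support
  · have hl0 : l ≠ 0 := by
      rintro rfl
      exact (Finsupp.mem_support_iff.1 hl) h0
    have h1 := key l hl
    have : ∀ n : ℕ, (P l).eval (n : k) = 0 := fun n => by
      have := congrFun h1 n
      simpa [hl0] using this
    refine Polynomial.eq_zero_of_infinite_isRoot _ ?_
    refine Set.Infinite.mono ?_ (Set.infinite_range_of_injective (Nat.cast_injective (R := k)))
    rintro _ ⟨n, rfl⟩
    exact this n
  · simpa using hl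

/-- exponential monomials -/
def expoMonoid (k : Type*) [Field k] : Submonoid (ℕ × k → k) where
  carrier := {f | ∃ l : k, l ≠ 0 ∧ ∃ j : ℕ, f = fun p => l ^ p.1 * p.2 ^ j}
  one_mem' := ⟨1, one_ne_zero, 0, by funext p; simp⟩
  mul_mem' := by
    rintro _ _ ⟨l, hl, j, rfl⟩ ⟨l', hl', j', rfl⟩
    refine ⟨l * l', mul_ne_zero hl hl', j + j', ?_⟩
    funext p
    simp only [Pi.mul_apply]
    ring

theorem expo_form (G : ℕ × k → k) (hG : G ∈ Algebra.adjoin k (expoMonoid k : Set (ℕ × k → k))) :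
    ∃ P : k →₀ k[X], P 0 = 0 ∧ ∀ n t, G (n, t) = P.sum fun l p => l ^ n * p.eval t := by
  classical
  have hG' : G ∈ Submodule.span k (expoMonoid k : Set (ℕ × k → k)) := by
    have := Algebra.adjoin_eq_span k (expoMonoid k : Set (ℕ × k → k))
    rw [Submonoid.closure_eq] at this
    rw [← this]
    exact hG
  clear hG
  induction hG' using Submodule.span_induction with
  | mem f hf =>
    obtain ⟨l, hl, j, rfl⟩ := hf
    refine ⟨Finsupp.single l (X ^ j), by simp [hl], fun n t => ?_⟩
    rw [Finsupp.sum_single_index] <;> simp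
  | zero => exact ⟨0, by simp, by simp⟩
  | add f g _ _ hf hg =>
    obtain ⟨P, hP, hP'⟩ := hf
    obtain ⟨Q, hQ, hQ'⟩ := hg
    refine ⟨P + Q, by simp [hP, hQ], fun n t => ?_⟩
    rw [Finsupp.sum_add_index', Pi.add_apply, hP', hQ']
    · simp
    · intros
      simp [mul_add]
  | smul a f _ hf =>
    obtain ⟨P, hP, hP'⟩ := hf
    refine ⟨(C a : k[X]) • P, by simp [hP], fun n t => ?_⟩
    rw [Finsupp.sum_smul_index', Pi.smul_apply, hP', Finsupp.smul_sum]
    · refine Finsupp.sum_congr fun l _ => ?_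
      simp
      ring
    · simp

theorem expo_vanish [CharZero k] (G : ℕ × k → k)
    (hG : G ∈ Algebra.adjoin k (expoMonoid k : Set (ℕ × k → k)))
    (h : ∀ n : ℕ, G (n, (n : k)) = 0) (t : k) : G (0, t) = 0 := by
  obtain ⟨P, h0, hP⟩ := expo_form G hG
  have : P = 0 := expo_indep P h0 fun n => by rw [← hP, h]
  rw [hP, this]
  simp

end indep

section unip
variable {k V : Type*} [Field k] [AddCommGroup V] [Module k V]

theorem ev_zero (c : (Module.End k V)[X]) : ev 0 c = c.coeff 0 := by
  induction c using Polynomial.induction_on' with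
  | add p q hp hq => simp [hp, hq]
  | monomial n x =>
    rw [ev_monomial, coeff_monomial]
    split_ifs with h
    · simp [h]
    · simp [h]

theorem ev_map (t : k) (p : k[X]) : ev t (p.map (algebraMap k (Module.End k V))) = algebraMap k _ (p.eval t) := by
  induction p using Polynomial.induction_on' with
  | add p q hp hq => simp [hp, hq]
  | monomial n x =>
    rw [map_monomial, ev_monomial, eval_monomial, Algebra.smul_def, ← map_mul, mul_comm]

theorem coeff_mem_of_ev [CharZero k] (W : Submodule k (Module.End k V)) (c : (Module.End k V)[X])
    (h : ∀ n : ℕ, ev (n : k) c ∈ W) (i : ℕ) : c.coeff i ∈ W := by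
  by_contra hc
  obtain ⟨φ, h1, h2⟩ := Submodule.exists_le_ker_of_notMem hc
  obtain ⟨q, hq, hq'⟩ := exists_poly φ c
  have : q = 0 := by
    refine Polynomial.eq_zero_of_infinite_isRoot _ ?_
    refine Set.Infinite.mono ?_ (Set.infinite_range_of_injective (Nat.cast_injective (R := k)))
    rintro _ ⟨n, rfl⟩
    change q.eval _ = 0
    rw [hq']
    exact h2 (h n)
  apply h1
  rw [← hq, this, coeff_zero]

/-- binomial polynomial -/
noncomputable def binP (k : Type*) [Field k] (i : ℕ) : k[X] :=
  C ((i.factorial : k)⁻¹) * descPochhammer k i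

theorem binP_eval [CharZero k] (i n : ℕ) : (binP k i).eval (n : k) = (n.choose i : k) := by
  rw [binP, eval_mul, eval_C, descPochhammer_eval_eq_descFactorial, Nat.descFactorial_eq_factorial_mul_choose]
  push_cast
  rw [inv_mul_cancel_left₀]
  exact_mod_cast i.factorial_ne_zero

/-- the curve of powers -/
noncomputable def curve (ν : Module.End k V) (m : ℕ) : (Module.End k V)[X] :=
  ∑ i ∈ Finset.range m, (binP k i).map (algebraMap k (Module.End k V)) * C (ν ^ i)

theorem ev_curve (ν : Module.End k V) (m : ℕ) (t : k) :
    ev t (curve ν m) = ∑ i ∈ Finset.range m, (binP k i).eval t • ν ^ i := by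
  rw [curve, map_sum]
  refine Finset.sum_congr rfl fun i _ => ?_
  rw [map_mul, ev_map, ev_C, Algebra.smul_def]

theorem coeff_curve (ν : Module.End k V) (m j : ℕ) :
    (curve ν m).coeff j = ∑ i ∈ Finset.range m, (binP k i).coeff j • ν ^ i := by
  rw [curve, finsetSum_coeff]
  refine Finset.sum_congr rfl fun i _ => ?_
  rw [coeff_mul_C, coeff_map, Algebra.smul_def]

theorem ev_curve_nat [CharZero k] (ν : Module.End k V) (m : ℕ) (hm : ν ^ m = 0) (n : ℕ) :
    ev (n : k) (curve ν m) = (1 + ν) ^ n := by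
  rw [ev_curve, add_comm, (Commute.one_right ν).add_pow]
  simp only [one_pow, mul_one, binP_eval]
  have h1 : ∑ i ∈ Finset.range m, (n.choose i : k) • ν ^ i =
      ∑ i ∈ Finset.range (m + n + 1), (n.choose i : k) • ν ^ i := by
    refine Finset.sum_subset (fun i => by simp; omega) fun i _ hi => ?_
    rw [pow_eq_zero_of_le (by simpa using hi) hm, smul_zero]
  have h2 : ∑ i ∈ Finset.range (n + 1), ν ^ i * (n.choose i : Module.End k V) =
      ∑ i ∈ Finset.range (m + n + 1), (n.choose i : k) • ν ^ i := by
    rw [Finset.sum_subset (s₂ := Finset.range (m + n + 1)) (fun i => by simp; omega)]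
    · refine Finset.sum_congr rfl fun i _ => ?_
      rw [← Nat.cast_comm, ← nsmul_eq_mul, Nat.cast_smul_eq_nsmul]
    · intro i _ hi
      rw [Nat.choose_eq_zero_of_lt (by simpa using hi)]
      simp
  rw [h1, h2]

theorem curve_coeff_zero [CharZero k] (ν : Module.End k V) (m : ℕ) (hm : ν ^ m = 0) :
    (curve ν m).coeff 0 = 1 := by
  rw [← ev_zero, ← Nat.cast_zero, ev_curve_nat ν m hm, pow_zero]

theorem curve_coeff_one (ν : Module.End k V) (m : ℕ) :
    ∃ r ∈ Algebra.adjoin k {ν}, (curve ν (m + 2)).coeff 1 = ν * (1 + ν * r) := by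
  refine ⟨∑ i ∈ Finset.range m, (binP k (i + 2)).coeff 1 • ν ^ i, ?_, ?_⟩
  · refine Subalgebra.sum_mem _ fun i _ => Subalgebra.smul_mem _ (Subalgebra.pow_mem _ (Algebra.self_mem_adjoin_singleton k ν) _) _
  · rw [coeff_curve, Finset.sum_range_succ', Finset.sum_range_succ']
    have h0 : (binP k 0).coeff 1 = 0 := by simp [binP, coeff_one]
    have h1 : (binP k 1).coeff 1 = 1 := by simp [binP]
    simp only [zero_add, h0, h1, zero_smul, one_smul, pow_one, add_zero, mul_add, mul_one,
      Finset.mul_sum]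
    rw [add_comm]
    congr 1
    refine Finset.sum_congr rfl fun i _ => ?_
    rw [mul_smul_comm, mul_smul_comm, pow_succ', pow_succ']

theorem unip_tangent (ν N r : Module.End k V) (hν : IsNilpotent ν) (hr : r ∈ Algebra.adjoin k {ν})
    (hN : N = ν * (1 + ν * r)) : IsNilpotent N ∧ (N = 0 → ν = 0) ∧ N ∈ Algebra.adjoin k {ν} := by
  have hc : Commute ν r := Algebra.commute_of_mem_adjoin_self hr
  have hn : IsNilpotent (ν * r) := hc.isNilpotent_mul_right hν
  have hu : IsUnit (1 + ν * r) := hn.isUnit_one_add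
  refine ⟨?_, ?_, ?_⟩
  · rw [hN]
    exact ((Commute.one_right ν).add_right ((Commute.refl ν).mul_right hc)).isNilpotent_mul_right hν
  · intro h
    rw [hN] at h
    exact (hu.mul_left_eq_zero).1 h
  · rw [hN]
    have := Algebra.self_mem_adjoin_singleton k ν
    exact mul_mem this (add_mem (one_mem _) (mul_mem this hr))

theorem inv_mem_adjoin [FiniteDimensional k V] (x : (Module.End k V)ˣ) (S : Subalgebra k (Module.End k V))
    (hx : (x : Module.End k V) ∈ S) : ((x⁻¹ : (Module.End k V)ˣ) : Module.End k V) ∈ S := by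
  let X : S := ⟨x, hx⟩
  have hinj : Function.Injective (LinearMap.mulLeft k X) := by
    intro a b hab
    have : (x : Module.End k V) * a = x * b := congrArg Subtype.val hab
    exact Subtype.ext (x.mul_right_inj.1 this)
  have : FiniteDimensional k S := FiniteDimensional.finiteDimensional_submodule S.toSubmodule
  obtain ⟨y, hy⟩ := (LinearMap.injective_iff_surjective.1 hinj) 1
  have hy' : (x : Module.End k V) * y = 1 := congrArg Subtype.val hy
  rw [Units.inv_eq_of_mul_eq_one_right hy']
  exact y.2

theorem jordan [IsAlgClosed k] [CharZero k] [FiniteDimensional k V] (g : (Module.End k V)ˣ) :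
    ∃ s u : (Module.End k V)ˣ, g = s * u ∧ Commute s u ∧ (s : Module.End k V).IsSemisimple ∧
      ((s⁻¹ : (Module.End k V)ˣ) : Module.End k V).IsSemisimple ∧
      IsNilpotent ((u : Module.End k V) - 1) ∧
      IsNilpotent (((u⁻¹ : (Module.End k V)ˣ) : Module.End k V) - 1) ∧
      (u : Module.End k V) - 1 ∈ Algebra.adjoin k {(g : Module.End k V)} := by
  obtain ⟨n, hn, s, hs, hnn, hss, hg⟩ := (g : Module.End k V).exists_isNilpotent_isSemisimple
  have hns : Commute n s :=
    Algebra.commute_of_mem_adjoin_singleton_of_commute hs (Algebra.commute_of_mem_adjoin_self hn).symm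
  have hgn : Commute (g : Module.End k V) n := Algebra.commute_of_mem_adjoin_self hn
  have hsu : IsUnit s := by
    have h1 : s = -n + g := by rw [hg]; abel
    rw [h1]
    exact hnn.neg.isUnit_add_right_of_commute g.isUnit hgn.symm.neg_left
  obtain ⟨σ, rfl⟩ := hsu
  have hσi : ((σ⁻¹ : (Module.End k V)ˣ) : Module.End k V) ∈ Algebra.adjoin k {(g : Module.End k V)} :=
    inv_mem_adjoin σ _ hs
  have hgσ : Commute g σ := Units.ext (Algebra.commute_of_mem_adjoin_self hs).eq
  have hu1 : ((σ⁻¹ * g : (Module.End k V)ˣ) : Module.End k V) - 1 = ((σ⁻¹ : (Module.End k V)ˣ) : Module.End k V) * n := by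
    rw [Units.val_mul, hg, mul_add]
    simp
  have hnil : IsNilpotent (((σ⁻¹ * g : (Module.End k V)ˣ) : Module.End k V) - 1) := by
    rw [hu1]
    exact (hns.symm.units_inv_left).isNilpotent_mul_left hnn
  refine ⟨σ, σ⁻¹ * g, by simp, ?_, hss, ?_, hnil, ?_, ?_⟩
  · exact ((Commute.refl σ).inv_right).mul_right hgσ.symm
  · have := inv_mem_adjoin σ _ (Algebra.self_mem_adjoin_singleton k (σ : Module.End k V))
    obtain ⟨p, hp⟩ := Algebra.adjoin_singleton_eq_range_aeval k (σ : Module.End k V) ▸ this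
    rw [← hp]
    exact hss.aeval p
  · set u := σ⁻¹ * g
    have : ((u⁻¹ : (Module.End k V)ˣ) : Module.End k V) - 1 = -((u⁻¹ : (Module.End k V)ˣ) : Module.End k V) * (u - 1) := by
      rw [mul_sub]; simp; abel
    rw [this]
    refine Commute.isNilpotent_mul_left ?_ hnil
    refine Commute.neg_left (Commute.units_inv_left ?_)
    exact (Commute.refl _).sub_right (Commute.one_right _)
  · rw [hu1]
    exact mul_mem hσi hn

theorem eig_ne_zero [FiniteDimensional k V] (s : (Module.End k V)ˣ) (a : k)
    (ha : a ∈ eig (s : Module.End k V)) : a ≠ 0 := by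
  classical
  rintro rfl
  have h1 : (minpoly k (s : Module.End k V)).IsRoot 0 := by
    rw [eig, Multiset.mem_toFinset] at ha
    exact isRoot_of_mem_roots ha
  obtain ⟨v, hv⟩ := (Module.End.hasEigenvalue_of_isRoot h1).exists_hasEigenvector
  apply hv.2
  have h2 : (s : Module.End k V) v = 0 := by simpa using hv.apply_eq_smul
  have h3 : ((s⁻¹ * s : (Module.End k V)ˣ) : Module.End k V) v = 0 := by
    rw [Units.val_mul, Module.End.mul_apply, h2, map_zero]
  simpa using h3

theorem pow_semisimple [IsAlgClosed k] [FiniteDimensional k V] (s : Module.End k V)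
    (hs : s.IsSemisimple) : ∃ P : k → Module.End k V, ∀ n : ℕ, s ^ n = ∑ a ∈ eig s, a ^ n • P a := by
  classical
  refine ⟨fun a => aeval s (Lagrange.basis (eig s) id a), fun n => ?_⟩
  let p : k[X] := X ^ n - Lagrange.interpolate (eig s) id (fun a => a ^ n)
  have h1 : IsNilpotent (aeval s p) := nil_of_vanish s p fun a ha => by
    simp only [p, eval_sub]
    have := Lagrange.eval_interpolate_at_node (s := eig s) (v := id) (fun a => a ^ n)
      Function.injective_id.injOn ha
    rw [id] at this
    rw [this]
    simp
  have h2 := Module.End.eq_zero_of_isNilpotent_isSemisimple h1 (hs.aeval p)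
  simp only [p, map_sub, map_pow, aeval_X, sub_eq_zero] at h2
  rw [h2, Lagrange.interpolate_apply, map_sum]
  refine Finset.sum_congr rfl fun a _ => ?_
  rw [map_mul, aeval_C, Algebra.smul_def]

theorem closure_curve [IsAlgClosed k] [CharZero k] [FiniteDimensional k V]
    (Γ : Subgroup (Module.End k V)ˣ) (g s u : (Module.End k V)ˣ) (hg : g ∈ Γ) (hgs : g = s * u)
    (hsu : Commute s u) (hs : (s : Module.End k V).IsSemisimple) (m : ℕ)
    (hm : ((u : Module.End k V) - 1) ^ m = 0) (t : k) :
    ev t (curve ((u : Module.End k V) - 1) m) ∈ Cl Γ := by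
  intro F hF h0
  set c := curve ((u : Module.End k V) - 1) m with hc
  let G : ℕ × k → k := fun p => F ((s : Module.End k V) ^ p.1 * ev p.2 c)
  have hG : G ∈ Algebra.adjoin k (expoMonoid k : Set (ℕ × k → k)) := by
    clear h0
    simp only [G]
    induction hF using Algebra.adjoin_induction with
    | mem F h =>
      obtain ⟨φ, rfl⟩ := h
      obtain ⟨P, hP⟩ := pow_semisimple (s : Module.End k V) hs
      choose q _ hq using fun a => exists_poly φ (C (P a) * c)
      have : (fun p : ℕ × k => φ ((s : Module.End k V) ^ p.1 * ev p.2 c)) =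
          ∑ a ∈ eig (s : Module.End k V), ∑ j ∈ Finset.range ((q a).natDegree + 1),
            (q a).coeff j • (fun p : ℕ × k => a ^ p.1 * p.2 ^ j) := by
        funext p
        rw [hP, Finset.sum_mul, map_sum, Finset.sum_apply]
        refine Finset.sum_congr rfl fun a _ => ?_
        have h1 := hq a p.2
        rw [map_mul, ev_C] at h1
        rw [smul_mul_assoc, map_smul, ← h1, eval_eq_sum_range, Finset.sum_apply, Finset.smul_sum]
        refine Finset.sum_congr rfl fun j _ => ?_
        simp only [smul_eq_mul, Pi.smul_apply]
        ring
      rw [this]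
      refine Subalgebra.sum_mem _ fun a ha => Subalgebra.sum_mem _ fun j _ => Subalgebra.smul_mem _ ?_ _
      exact Algebra.subset_adjoin ⟨a, eig_ne_zero s a ha, j, rfl⟩
    | algebraMap r => exact Subalgebra.algebraMap_mem _ r
    | add F G _ _ hF hG => exact Subalgebra.add_mem _ hF hG
    | mul F G _ _ hF hG => exact Subalgebra.mul_mem _ hF hG
  have := expo_vanish G hG (fun n => by
    simp only [G]
    rw [hc, ev_curve_nat _ m hm]
    have := h0 (g ^ n) (Γ.pow_mem hg n)
    rw [hgs, hsu.mul_pow] at this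
    simpa using this) t
  simpa [G] using this

end unip

section final
variable {k V : Type*} [Field k] [AddCommGroup V] [Module k V]

/-- tangent vectors to polynomial curves in the closure -/
def Gen (Γ : Subgroup (Module.End k V)ˣ) : Set (Module.End k V) :=
  {M | ∃ c d : (Module.End k V)[X], c * d = 1 ∧ d * c = 1 ∧ c.coeff 0 = 1 ∧ c.coeff 1 = M ∧
    (∀ t, ev t c ∈ Cl Γ) ∧ ∀ t, ev t d ∈ Cl Γ}

theorem conj_Gen (Γ : Subgroup (Module.End k V)ˣ) (g h : Module.End k V) (hg : g ∈ Cl Γ)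
    (hh : h ∈ Cl Γ) (hgh : g * h = 1) (hhg : h * g = 1) (M : Module.End k V) (hM : M ∈ Gen Γ) :
    g * M * h ∈ Gen Γ := by
  obtain ⟨c, d, hcd, hdc, h0, h1, hc, hd⟩ := hM
  have hC : (C h * C g : (Module.End k V)[X]) = 1 := by rw [← C_mul, hhg, C_1]
  have hC' : (C g * C h : (Module.End k V)[X]) = 1 := by rw [← C_mul, hgh, C_1]
  refine ⟨C g * c * C h, C g * d * C h, ?_, ?_, ?_, ?_, ?_, ?_⟩
  · calc C g * c * C h * (C g * d * C h) = C g * c * (C h * C g) * d * C h := by noncomm_ring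
      _ = C g * (c * d) * C h := by rw [hC]; noncomm_ring
      _ = 1 := by rw [hcd, mul_one, hC']
  · calc C g * d * C h * (C g * c * C h) = C g * d * (C h * C g) * c * C h := by noncomm_ring
      _ = C g * (d * c) * C h := by rw [hC]; noncomm_ring
      _ = 1 := by rw [hdc, mul_one, hC']
  · rw [coeff_mul_C, coeff_C_mul, h0, mul_one, hgh]
  · rw [coeff_mul_C, coeff_C_mul, h1]
  · intro t
    rw [map_mul, map_mul, ev_C, ev_C]
    exact mul_mem_Cl Γ (mul_mem_Cl Γ hg (hc t)) hh
  · intro t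
    rw [map_mul, map_mul, ev_C, ev_C]
    exact mul_mem_Cl Γ (mul_mem_Cl Γ hg (hd t)) hh

/-- the span of the tangent vectors -/
def L0 (Γ : Subgroup (Module.End k V)ˣ) : Submodule k (Module.End k V) := Submodule.span k (Gen Γ)

theorem conj_L0 (Γ : Subgroup (Module.End k V)ˣ) (g h : Module.End k V) (hg : g ∈ Cl Γ)
    (hh : h ∈ Cl Γ) (hgh : g * h = 1) (hhg : h * g = 1) (M : Module.End k V) (hM : M ∈ L0 Γ) :
    g * M * h ∈ L0 Γ := by
  induction hM using Submodule.span_induction with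
  | mem M hM => exact Submodule.subset_span (conj_Gen Γ g h hg hh hgh hhg M hM)
  | zero => simp
  | add x y _ _ hx hy =>
    rw [mul_add, add_mul]
    exact add_mem hx hy
  | smul a x _ hx =>
    rw [mul_smul_comm, smul_mul_assoc]
    exact Submodule.smul_mem _ _ hx

theorem bracket_L0 [CharZero k] (Γ : Subgroup (Module.End k V)ˣ) (M Y : Module.End k V)
    (hM : M ∈ L0 Γ) (hY : Y ∈ L0 Γ) : M * Y - Y * M ∈ L0 Γ := by
  induction hM using Submodule.span_induction with
  | mem M hM =>
    obtain ⟨c, d, hcd, hdc, h0, h1, hc, hd⟩ := hM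
    have hd0 : d.coeff 0 = 1 := by
      have := congrArg (fun p => coeff p 0) hcd
      simpa [mul_coeff_zero, h0] using this
    have hd1 : d.coeff 1 = -M := by
      have := congrArg (fun p => coeff p 1) hcd
      simp only [mul_coeff_one, h0, h1, hd0, one_mul, mul_one, coeff_one] at this
      simpa using eq_neg_of_add_eq_zero_left this
    have h2 := coeff_mem_of_ev (L0 Γ) (c * C Y * d) (fun n => by
      rw [map_mul, map_mul, ev_C]
      refine conj_L0 Γ _ _ (hc _) (hd _) ?_ ?_ Y hY
      · rw [← map_mul, hcd, map_one]
      · rw [← map_mul, hdc, map_one]) 1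
    rw [mul_coeff_one, coeff_mul_C, coeff_mul_C, h0, h1, hd0, hd1] at h2
    convert h2 using 1
    noncomm_ring
  | zero => simp
  | add x y _ _ hx hy =>
    have : (x + y) * Y - Y * (x + y) = (x * Y - Y * x) + (y * Y - Y * y) := by noncomm_ring
    rw [this]
    exact add_mem hx hy
  | smul a x _ hx =>
    rw [mul_smul_comm, smul_mul_assoc, ← smul_sub]
    exact Submodule.smul_mem _ _ hx

attribute [local instance] LieRing.ofAssociativeRing

/-- radical of the trace form -/
def Rad [CharZero k] (Γ : Subgroup (Module.End k V)ˣ) : LieSubalgebra k (Module.End k V) where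
  carrier := {x | x ∈ L0 Γ ∧ ∀ y ∈ L0 Γ, LinearMap.trace k V (x * y) = 0}
  add_mem' := by
    rintro a b ⟨ha, ha'⟩ ⟨hb, hb'⟩
    refine ⟨add_mem ha hb, fun y hy => ?_⟩
    rw [add_mul, map_add, ha' y hy, hb' y hy, add_zero]
  zero_mem' := ⟨zero_mem _, fun y _ => by simp⟩
  smul_mem' := by
    rintro a x ⟨hx, hx'⟩
    refine ⟨Submodule.smul_mem _ _ hx, fun y hy => ?_⟩
    rw [smul_mul_assoc, map_smul, hx' y hy, smul_zero]
  lie_mem' := by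
    rintro a b ⟨ha, ha'⟩ ⟨hb, hb'⟩
    refine ⟨bracket_L0 Γ a b ha hb, fun y hy => ?_⟩
    have h1 := ha' _ (bracket_L0 Γ b y hb hy)
    rw [← h1, Ring.lie_def, sub_mul, mul_sub, map_sub, map_sub, mul_assoc a b y]
    congr 1
    rw [← mul_assoc, LinearMap.trace_mul_comm k (a * y) b, mul_assoc]

theorem inverse_curve [CharZero k] (u : (Module.End k V)ˣ) (m m' : ℕ)
    (hm : ((u : Module.End k V) - 1) ^ m = 0)
    (hm' : (((u⁻¹ : (Module.End k V)ˣ) : Module.End k V) - 1) ^ m' = 0) :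
    curve ((u : Module.End k V) - 1) m *
      curve (((u⁻¹ : (Module.End k V)ˣ) : Module.End k V) - 1) m' = 1 := by
  rw [← sub_eq_zero]
  ext1 i
  have := coeff_mem_of_ev (⊥ : Submodule k (Module.End k V))
    (curve ((u : Module.End k V) - 1) m *
      curve (((u⁻¹ : (Module.End k V)ˣ) : Module.End k V) - 1) m' - 1) (fun n => by
    rw [map_sub, map_mul, ev_curve_nat _ _ hm, ev_curve_nat _ _ hm', map_one]
    rw [Submodule.mem_bot, add_sub_cancel, add_sub_cancel, ← Units.val_pow_eq_pow_val,
      ← Units.val_pow_eq_pow_val, ← Units.val_mul]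
    simp) i
  simpa using this

theorem main [IsAlgClosed k] [CharZero k] [FiniteDimensional k V] [Nontrivial V]
    (Γ : Subgroup (Module.End k V)ˣ) (hirr : Irr Γ) (f : Module.End k V →ₗ[k] k)
    (hf : ∀ g ∈ Γ, (g : Module.End k V).IsSemisimple → f g = 0) :
    ∀ g ∈ Γ, f g = 0 := by
  classical
  by_contra! hcon
  -- choose an element with the maximal number of eigenvalues
  have hex : ∃ h ∈ Γ, f (h : Module.End k V) ≠ 0 ∧ ∀ g ∈ Γ, f (g : Module.End k V) ≠ 0 →
      (eig (g : Module.End k V)).card ≤ (eig (h : Module.End k V)).card := by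
    let S : Set ℕ := {n | ∃ g ∈ Γ, f (g : Module.End k V) ≠ 0 ∧ (eig (g : Module.End k V)).card = n}
    have hne : S.Nonempty := by
      obtain ⟨g, hg, hg'⟩ := hcon
      exact ⟨_, g, hg, hg', rfl⟩
    have hbd : BddAbove S := by
      refine ⟨finrank k V, ?_⟩
      rintro _ ⟨g, _, _, rfl⟩
      exact card_eig_le _
    obtain ⟨h, hh, hfh, hc⟩ := Nat.sSup_mem hne hbd
    refine ⟨h, hh, hfh, fun g hg hfg => ?_⟩
    rw [hc]
    exact le_csSup hbd ⟨g, hg, hfg, rfl⟩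
  obtain ⟨h, hh, hfh, hmax⟩ := hex
  obtain ⟨s, u, hsu, hcomm, hs, hs', hu, hu', hadj⟩ := jordan h
  obtain ⟨m, hm⟩ := hu
  obtain ⟨m', hm'⟩ := hu'
  replace hm := pow_eq_zero_of_le (show m ≤ m + 2 by omega) hm
  set c := curve ((u : Module.End k V) - 1) (m + 2) with hc
  set d := curve (((u⁻¹ : (Module.End k V)ˣ) : Module.End k V) - 1) m' with hd
  obtain ⟨r, hr, hN⟩ := curve_coeff_one ((u : Module.End k V) - 1) m
  rw [← hc] at hN
  obtain ⟨hNn, hN0, hNadj⟩ := unip_tangent _ _ r ⟨_, hm⟩ hr hN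
  have hNG : c.coeff 1 ∈ Gen Γ := by
    refine ⟨c, d, inverse_curve u _ _ hm hm', ?_, curve_coeff_zero _ _ hm, rfl, ?_, ?_⟩
    · have := inverse_curve u⁻¹ m' (m + 2) hm' (by rwa [inv_inv])
      rwa [inv_inv] at this
    · exact closure_curve Γ h s u hh hsu hcomm hs _ hm
    · refine closure_curve Γ h⁻¹ s⁻¹ u⁻¹ (Γ.inv_mem hh) ?_ hcomm.inv_inv hs' _ hm'
      rw [hsu, hcomm.eq, mul_inv_rev]
  have hgram : ∀ x ∈ Cl Γ, ∀ A B : Fin ((eig (h : Module.End k V)).card + 1) → k[X],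
      f x * (Matrix.of fun a b => LinearMap.trace k V (aeval x (A a * B b))).det = 0 := by
    intro x hx A B
    refine hx (fun x => f x * (Matrix.of fun a b => LinearMap.trace k V (aeval x (A a * B b))).det) ?_ ?_
    · refine (PolyF k V).mul_mem (lin_mem f) (det_mem
        (fun a b x => LinearMap.trace k V (aeval x (A a * B b))) fun a b => aeval_mem _ _)
    · intro g hg
      by_cases hfg : f (g : Module.End k V) = 0
      · simp [hfg]
      · simp only [gram_det_zero (g : Module.End k V) _ (hmax g hg hfg) A B, mul_zero]
  have hNh : c.coeff 1 * ((h⁻¹ : (Module.End k V)ˣ) : Module.End k V) ∈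
      Algebra.adjoin k {(h : Module.End k V)} := by
    refine mul_mem ?_ (inv_mem_adjoin h _ (Algebra.self_mem_adjoin_singleton k _))
    exact Algebra.adjoin_le (Set.singleton_subset_iff.2 hadj) hNadj
  have hNh0 : c.coeff 1 ∈ Algebra.adjoin k {(h : Module.End k V)} :=
    Algebra.adjoin_le (Set.singleton_subset_iff.2 hadj) hNadj
  have hNhc : Commute (h : Module.End k V) (c.coeff 1) := Algebra.commute_of_mem_adjoin_self hNh0
  obtain ⟨p, hp⟩ : ∃ p : k[X], aeval (h : Module.End k V) p =
      c.coeff 1 * ((h⁻¹ : (Module.End k V)ˣ) : Module.End k V) := by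
    rw [Algebra.adjoin_singleton_eq_range_aeval] at hNh
    exact hNh
  have htrG : ∀ M ∈ Gen Γ, LinearMap.trace k V (c.coeff 1 * M) = 0 := by
    rintro M ⟨c', d', hcd', hdc', h0', h1', hc', hd'⟩
    have e0 : (C (h : Module.End k V) * c').coeff 0 = h := by rw [coeff_C_mul, h0', mul_one]
    have e1 : (C (h : Module.End k V) * c').coeff 1 = h * M := by rw [coeff_C_mul, h1']
    have := first_order f (C (h : Module.End k V) * c') (by rwa [e0]) (by
      rw [e0]
      intro A B t
      refine hgram _ ?_ A B
      rw [map_mul, ev_C]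
      exact mul_mem_Cl Γ (subset_Cl Γ h hh) (hc' t)) p (by
      rw [e0, hp]
      exact hNhc.symm.units_inv_right.isNilpotent_mul_right hNn)
    rw [e0, e1, hp, mul_assoc, Units.inv_mul_cancel_left] at this
    exact this
  have htr : ∀ M ∈ L0 Γ, LinearMap.trace k V (c.coeff 1 * M) = 0 := by
    intro M hM
    induction hM using Submodule.span_induction with
    | mem M hM => exact htrG M hM
    | zero => simp
    | add x y _ _ hx hy => rw [mul_add, map_add, hx, hy, add_zero]
    | smul a x _ hx => rw [mul_smul_comm, map_smul, hx, smul_zero]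
  have hzero := cartan_step Γ hirr (Rad Γ) (by
    rintro g hg x ⟨hx, hx'⟩
    have hg1 := subset_Cl Γ g hg
    have hg2 := subset_Cl Γ g⁻¹ (Γ.inv_mem hg)
    refine ⟨conj_L0 Γ _ _ hg1 hg2 (by simp) (by simp) x hx, fun y hy => ?_⟩
    have := hx' _ (conj_L0 Γ _ _ hg2 hg1 (by simp) (by simp) y hy)
    rw [← this, mul_assoc, mul_assoc, LinearMap.trace_mul_comm]
    simp only [mul_assoc]) (fun x hx y hy => hx.2 y hy.1) (c.coeff 1)
    ⟨Submodule.subset_span hNG, htr⟩ hNn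
  have hu1 : u = 1 := Units.ext (sub_eq_zero.1 (hN0 hzero))
  apply hfh
  refine hf h hh ?_
  rw [hsu, hu1, mul_one]
  exact hs

end final

end WA

/-- **Corollary.** Let `k` be algebraically closed of characteristic `0`, `V` a
finite-dimensional `k`-vector space and `Γ ≤ GL(V)` an irreducible subgroup.  Then
`End_k(V)` is spanned by the semisimple (diagonalizable) elements of `Γ`. -/
theorem weaklyAdequate_char_zero
    (k : Type*) [Field k] [IsAlgClosed k] [CharZero k]
    (V : Type*) [AddCommGroup V] [Module k V] [FiniteDimensional k V]
    (Γ : Subgroup (Module.End k V)ˣ)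
    (hirr : IsIrreducibleRep ((Units.coeHom (Module.End k V)).comp Γ.subtype)) :
    WeaklyAdequate ((Units.coeHom (Module.End k V)).comp Γ.subtype) := by
  obtain ⟨hnt, hU⟩ := hirr
  have hI : WA.Irr Γ := fun U hU' => hU U fun g v hv => hU' g g.2 v hv
  by_contra hne
  obtain ⟨x, hx⟩ : ∃ x, x ∉ Submodule.span k {f : Module.End k V | ∃ g : Γ,
      IsSemisimpleEnd (((Units.coeHom (Module.End k V)).comp Γ.subtype) g) ∧
        ((Units.coeHom (Module.End k V)).comp Γ.subtype) g = f} := by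
    by_contra! hall
    exact hne (Submodule.eq_top_iff'.2 hall)
  obtain ⟨f, hf1, hf2⟩ := Submodule.exists_le_ker_of_notMem hx
  have h1 := WA.main Γ hI f (fun g hg hs => hf2 (Submodule.subset_span ⟨⟨g, hg⟩,
    PerfectField.separable_iff_squarefree.2 hs.minpoly_squarefree, rfl⟩))
  have h2 : (⊤ : Submodule k (Module.End k V)) ≤ LinearMap.ker f := by
    rw [← WA.span_eq_top Γ hI, Submodule.span_le]
    rintro _ ⟨g, hg, rfl⟩
    exact h1 g hg
  exact hf1 (h2 (Submodule.mem_top : x ∈ ⊤))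
end

section
/- Let k be a field of characteristic p > 0, let G be a finite group with a subgroup K, let W be a nonzero finite-dimensional kK-module, and let V = Ind_K^G(W) be the induced kG-module, with representation ρ: G → GL(V). Assume ρ is faithful. If some left coset gK of K in G contains no p'-elements (elements of order prime to p), then (G,V) is not weakly adequate; that is, the operators ρ(x), for x ∈ G with ρ(x) semisimple, do not span End_k(V). -/
open scoped TensorProduct Pointwise

/-- The induced module `Ind_K^G W = kG ⊗_{kK} W`, realized concretely as the space of
functions `f : G → W` satisfying `f (g * x) = ρW x⁻¹ (f g)` for all `x ∈ K` (for a subgroup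
`K` of finite index, in particular for finite `G`, this realizes `kG ⊗_{kK} W`). -/
def inducedSubmodule {k G W : Type*} [Field k] [Group G] [AddCommGroup W] [Module k W]
    (K : Subgroup G) (ρW : Representation k K W) : Submodule k (G → W) where
  carrier := {f | ∀ (g : G) (x : K), f (g * x) = ρW x⁻¹ (f g)}
  add_mem' := by
    intro a b ha hb g x
    simp [ha g x, hb g x]
  zero_mem' := by intro g x; simp
  smul_mem' := by
    intro c a ha g x
    simp [ha g x]

/-- The representation of `G` on the induced module `Ind_K^G W`, given by left translation:
`(g • f) h = f (g⁻¹ * h)`. -/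
def inducedRep {k G W : Type*} [Field k] [Group G] [AddCommGroup W] [Module k W]
    (K : Subgroup G) (ρW : Representation k K W) :
    Representation k G ↥(inducedSubmodule K ρW) where
  toFun g := (LinearMap.funLeft k W (fun h => g⁻¹ * h)).restrict (fun f hf => by
    intro h x
    simpa [mul_assoc] using hf (g⁻¹ * h) x)
  map_one' := by
    ext f
    simp [LinearMap.restrict_apply, LinearMap.funLeft]
  map_mul' g₁ g₂ := by
    ext f
    simp [LinearMap.restrict_apply, LinearMap.funLeft, mul_assoc]

open Polynomial in
/-- If `ρ x` is semisimple and `ρ` is faithful, then `x` is a `p'`-element. -/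
theorem coprime_of_isSemisimpleEnd {k G V : Type*} [Field k] [Group G] [Finite G]
    [AddCommGroup V] [Module k V] (p : ℕ) (hp : p.Prime) [CharP k p]
    (ρ : Representation k G V) (hρ : Function.Injective ρ) (x : G)
    (hx : IsSemisimpleEnd (ρ x)) : Nat.Coprime (orderOf x) p := by
  have : Fact p.Prime := ⟨hp⟩
  have hn : orderOf x ≠ 0 := (orderOf_pos x).ne'
  obtain ⟨a, m, hm, hnm⟩ := Nat.exists_eq_pow_mul_and_not_dvd hn p hp.ne_one
  have h1 : minpoly k (ρ x) ∣ (X ^ m - 1 : k[X]) ^ (p ^ a) := by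
    rw [sub_pow_char_pow, one_pow, ← pow_mul, mul_comm m, ← hnm]
    apply minpoly.dvd
    rw [map_sub, map_pow, aeval_X, map_one, ← map_pow, pow_orderOf_eq_one, map_one, sub_self]
  have h2 : minpoly k (ρ x) ∣ (X ^ m - 1 : k[X]) :=
    hx.squarefree.isRadical _ _ h1
  have h3 : ρ (x ^ m) = ρ 1 := by
    obtain ⟨q, hq⟩ := h2
    have := congrArg (aeval (ρ x)) hq
    rw [map_mul, minpoly.aeval, zero_mul] at this
    simpa [sub_eq_zero] using this
  have h4 : orderOf x ∣ m := orderOf_dvd_of_pow_eq_one (hρ h3)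
  exact (hp.coprime_iff_not_dvd.2 fun h => hm (h.trans h4)).symm

/-- **Lemma.** Let `k` be a field of characteristic `p > 0`, `G` a finite group with a
subgroup `K`, `W` a nonzero finite-dimensional `kK`-module, and `V = Ind_K^G W` the induced
`kG`-module, assumed faithful.  If some left coset `gK` contains no `p'`-elements, then
`(G, V)` is not weakly adequate. -/
theorem inducedRep_not_weaklyAdequate
    (p : ℕ) (hp : p.Prime) (k : Type*) [Field k] [CharP k p]
    (G : Type*) [Group G] [Finite G] (K : Subgroup G)
    (W : Type*) [AddCommGroup W] [Module k W] [FiniteDimensional k W] [Nontrivial W]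
    (ρW : Representation k K W)
    (hfaith : Function.Injective (inducedRep K ρW))
    (g : G) (hg : ∀ x ∈ g • (K : Set G), ¬ Nat.Coprime (orderOf x) p) :
    ¬ WeaklyAdequate (inducedRep K ρW) := by
  classical
  intro hw
  obtain ⟨w, hw0⟩ := exists_ne (0 : W)
  -- the function supported on `K` with value `w` at `1`
  let f₀ : G → W := fun h => if hh : h ∈ K then ρW (⟨h, hh⟩ : K)⁻¹ w else 0
  have hf₀ : f₀ ∈ inducedSubmodule K ρW := by
    intro h x
    by_cases hh : h ∈ K
    · have hx : h * (x : G) ∈ K := K.mul_mem hh x.2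
      have e : (⟨h * (x : G), hx⟩ : K) = ⟨h, hh⟩ * x := rfl
      simp only [f₀, dif_pos hh, dif_pos hx]
      rw [e, mul_inv_rev, map_mul]
      rfl
    · have hx : h * (x : G) ∉ K := fun h' => hh ((K.mul_mem_cancel_right x.2).1 h')
      simp only [f₀, dif_neg hh, dif_neg hx, map_zero]
  let F : inducedSubmodule K ρW := ⟨f₀, hf₀⟩
  -- evaluation of `T F` at `g`
  let φ : Module.End k (inducedSubmodule K ρW) →ₗ[k] W :=
    (LinearMap.proj g ∘ₗ (inducedSubmodule K ρW).subtype) ∘ₗ LinearMap.applyₗ F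
  have hφ : ∀ x : G, φ (inducedRep K ρW x) = f₀ (x⁻¹ * g) := fun x => rfl
  have hle : Submodule.span k {f : Module.End k (inducedSubmodule K ρW) |
      ∃ g : G, IsSemisimpleEnd (inducedRep K ρW g) ∧ inducedRep K ρW g = f} ≤
      LinearMap.ker φ := by
    rw [Submodule.span_le]
    rintro _ ⟨x, hx, rfl⟩
    have hc := coprime_of_isSemisimpleEnd p hp _ hfaith x hx
    have hn : x⁻¹ * g ∉ K := by
      intro h
      refine hg x ?_ hc
      refine ⟨g⁻¹ * x, ?_, by simp⟩
      simpa using K.inv_mem h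
    change φ _ = 0
    rw [hφ]
    exact dif_neg hn
  have hmem : inducedRep K ρW g ∈ LinearMap.ker φ := by
    apply hle
    rw [show Submodule.span k _ = ⊤ from hw]
    trivial
  have h0 : f₀ (g⁻¹ * g) = 0 := (hφ g).symm.trans hmem
  rw [inv_mul_cancel] at h0
  apply hw0
  simp only [f₀, dif_pos K.one_mem] at h0
  have e : (⟨1, K.one_mem⟩ : K) = 1 := rfl
  simpa [e] using h0
end
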